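/- arXiv:1612.08100 — 2 statements merged into one kernel-verified Lean document; each statement's English description precedes it below -/
import Mathlib

section
/- There exists a universal constant c₃ > 0 such that if, for each N, U_N is an N × N random unitary matrix distributed according to Haar measure on U(N) (all defined on a common probability space), then with probability 1, d_K(μ_N, ν) ≤ c₃ · log(N)/N for all sufficiently large N. -/
open MeasureTheory Real Filter

noncomputable section

/-- The Borel σ-algebra on the unitary group `U(N)`. -/
instance (N : ℕ) : MeasurableSpace (Matrix.unitaryGroup (Fin N) ℂ) := borel _

instance (N : ℕ) : BorelSpace (Matrix.unitaryGroup (Fin N) ℂ) := ⟨rfl⟩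

/-- The eigenvalue angles (in `[0, 2π)`, with multiplicity) of a unitary matrix `U`:
the arguments of the roots of the characteristic polynomial, shifted to lie in `[0, 2π)`. -/
def eigenAngles (N : ℕ) (U : Matrix.unitaryGroup (Fin N) ℂ) : Multiset ℝ :=
  ((U : Matrix (Fin N) (Fin N) ℂ).charpoly.roots).map
    (fun z => if 0 ≤ Complex.arg z then Complex.arg z else Complex.arg z + 2 * π)

open Classical in
/-- `𝒩_A`: the number of eigenvalue angles of `U` lying in the set `A`. -/
def countAngles (N : ℕ) (U : Matrix.unitaryGroup (Fin N) ℂ) (A : Set ℝ) : ℕ :=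
  Multiset.card ((eigenAngles N U).filter (· ∈ A))

/-- `𝒩_θ`: the number of eigenvalue angles of `U` in `[0, θ]`. -/
def countFun (N : ℕ) (U : Matrix.unitaryGroup (Fin N) ℂ) (θ : ℝ) : ℕ :=
  countAngles N U (Set.Icc 0 θ)

/-- The Kolmogorov distance between the empirical spectral measure of `U` and the
uniform measure on the circle: `sup_{0 ≤ θ < 2π} |𝒩_θ/N - θ/(2π)|`. -/
def dK (N : ℕ) (U : Matrix.unitaryGroup (Fin N) ℂ) : ℝ :=
  ⨆ θ : Set.Ico (0:ℝ) (2 * π), |(countFun N U θ : ℝ) / N - (θ : ℝ) / (2 * π)|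

/-- `max_{1 ≤ k ≤ N} |𝒩_{2πk/N} - k|`. -/
def maxDev (N : ℕ) (U : Matrix.unitaryGroup (Fin N) ℂ) : ℝ :=
  ⨆ k : (Finset.Icc 1 N : Finset ℕ), |(countFun N U (2 * π * (k : ℕ) / N) : ℝ) - ((k : ℕ) : ℝ)|

end

/-- Sum of the principal arguments of `1 - z`. -/
noncomputable def argSum (m : Multiset ℂ) : ℝ := (m.map fun z => Complex.arg (1 - z)).sum

/-- Imaginary part of `log det (1 - A)`, summed over the eigenvalues. -/
noncomputable def Lf {ι : Type*} [Fintype ι] [DecidableEq ι] (A : Matrix ι ι ℂ) : ℝ :=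
  argSum A.charpoly.roots

lemma lift_const (f : ℝ → ℝ) (hf : ContinuousOn f (Set.Icc 0 1))
    (h1 : ∀ x ∈ Set.Icc (0:ℝ) 1, Complex.exp (f x * Complex.I) = 1) (h0 : f 0 = 0) : f 1 = 0 := by
  have key : ∀ g : ℝ → ℝ, ContinuousOn g (Set.Icc 0 1) →
      (∀ x ∈ Set.Icc (0:ℝ) 1, Complex.exp (g x * Complex.I) = 1) → g 0 = 0 → g 1 ≤ 0 := by
    intro g hg h1 h0
    by_contra hpos
    push Not at hpos
    obtain ⟨n, hn⟩ := Complex.exp_eq_one_iff.1 (h1 1 (by simp))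
    have hn' : g 1 = n * (2 * π) := by
      have : (g 1 : ℂ) * Complex.I = ((n * (2 * π) : ℝ) : ℂ) * Complex.I := by
        rw [hn]; push_cast; ring
      exact_mod_cast mul_right_cancel₀ Complex.I_ne_zero this
    have hn1 : (1:ℝ) ≤ n := by
      have : (0:ℝ) < n := by
        by_contra h
        push Not at h
        nlinarith [Real.pi_pos]
      have : (0:ℤ) < n := by exact_mod_cast this
      exact_mod_cast this
    have hmem : π ∈ Set.Icc (g 0) (g 1) := by
      rw [h0]
      refine ⟨Real.pi_pos.le, ?_⟩
      nlinarith [Real.pi_pos]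
    obtain ⟨x, hx, hxe⟩ := intermediate_value_Icc (zero_le_one' ℝ) hg hmem
    have := h1 x hx
    rw [hxe, Complex.exp_pi_mul_I] at this
    norm_num at this
  refine le_antisymm (key f hf h1 h0) ?_
  have := key (fun x => - f x) hf.neg (by
    intro x hx
    have := h1 x hx
    push_cast
    rw [neg_mul, Complex.exp_neg, this, inv_one]) (by simp [h0])
  simpa using this

lemma prod_eq_norm_mul_exp (m : Multiset ℂ) :
    (m.map fun z => 1 - z).prod =
      (‖(m.map fun z => 1 - z).prod‖ : ℂ) * Complex.exp (argSum m * Complex.I) := by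
  induction m using Multiset.induction with
  | empty => simp [argSum]
  | cons a s ih =>
    simp only [argSum, Multiset.map_cons, Multiset.prod_cons, Multiset.sum_cons] at ih ⊢
    rw [norm_mul]
    push_cast
    rw [add_mul, Complex.exp_add]
    conv_lhs => rw [ih, ← Complex.norm_mul_exp_arg_mul_I (1 - a)]
    ring

lemma argSum_continuousOn (m : Multiset ℂ) (hm : ∀ z ∈ m, ‖z‖ ≤ 1 ∧ z ≠ 1) :
    ContinuousOn (fun t : ℝ => argSum (m.map fun z => (t : ℂ) * z)) (Set.Icc 0 1) := by
  induction m using Multiset.induction with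
  | empty => simp [argSum, continuousOn_const]
  | cons a s ih =>
    simp only [argSum, Multiset.map_cons, Multiset.sum_cons] at ih ⊢
    refine ContinuousOn.add ?_ (ih fun z hz => hm z (Multiset.mem_cons_of_mem hz))
    intro t ht
    apply ContinuousAt.continuousWithinAt
    obtain ⟨ha, ha1⟩ := hm a (Multiset.mem_cons_self a s)
    refine ContinuousAt.comp (f := fun t : ℝ => 1 - (t:ℂ) * a) (g := Complex.arg)
      (Complex.continuousAt_arg ?_) (by fun_prop)
    rw [Complex.mem_slitPlane_iff]
    by_contra hcon
    push Not at hcon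
    obtain ⟨h1, h2⟩ := hcon
    have hre := Complex.abs_re_le_norm a
    have hre' : a.re ≤ 1 := (le_abs_self _).trans (hre.trans ha)
    simp at h1 h2
    have ht1 : t = 1 := by
      apply le_antisymm ht.2
      by_contra hh
      push Not at hh
      nlinarith [ht.1]
    subst ht1
    simp at h2
    apply ha1
    apply Complex.ext <;> simp
    · linarith
    · exact h2

section
variable {ι : Type*} [Fintype ι] [DecidableEq ι]

lemma det_smul_sub (A : Matrix ι ι ℂ) (x z : ℂ) :
    (Matrix.scalar ι x - z • A).det = (A.charpoly.roots.map fun l => x - z * l).prod := by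
  have hcard : Multiset.card A.charpoly.roots = Fintype.card ι := by
    rw [← (IsAlgClosed.splits A.charpoly).natDegree_eq_card_roots, Matrix.charpoly_natDegree_eq_dim]
  by_cases hz : z = 0
  · subst hz
    simp [hcard]
  · have h1 : Matrix.scalar ι x - z • A = z • (Matrix.scalar ι (x / z) - A) := by
      rw [smul_sub]
      congr 1
      ext i j
      by_cases hij : i = j
      · subst hij; simp; field_simp
      · simp [hij]
    rw [h1, Matrix.det_smul, ← Matrix.eval_charpoly]
    have h2 := (IsAlgClosed.splits A.charpoly).eq_prod_roots_of_monic (Matrix.charpoly_monic A)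
    conv_lhs => rw [h2]
    rw [Polynomial.eval_multiset_prod, Multiset.map_map, ← hcard]
    have : ∀ m : Multiset ℂ, z ^ (Multiset.card m) * (m.map (Polynomial.eval (x/z) ∘ fun a => Polynomial.X - Polynomial.C a)).prod
        = (m.map fun l => x - z * l).prod := by
      intro m
      induction m using Multiset.induction with
      | empty => simp
      | cons a s ih =>
        simp only [Multiset.map_cons, Multiset.prod_cons, Multiset.card_cons]
        rw [← ih]
        simp
        field_simp
        ring
    exact this _

lemma det_one_sub_smul (A : Matrix ι ι ℂ) (z : ℂ) :
    (1 - z • A).det = (A.charpoly.roots.map fun l => 1 - z * l).prod := by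
  rw [← det_smul_sub, map_one]

lemma det_one_sub (A : Matrix ι ι ℂ)  :
    (1 - A).det = (A.charpoly.roots.map fun l => 1 - l).prod := by
  simpa using det_one_sub_smul A 1

lemma roots_smul (A : Matrix ι ι ℂ) (z : ℂ) :
    (z • A).charpoly.roots = A.charpoly.roots.map fun l => z * l := by
  have : (z • A).charpoly = ((A.charpoly.roots.map fun l => z * l).map fun a => Polynomial.X - Polynomial.C a).prod := by
    apply Polynomial.funext
    intro x
    rw [Matrix.eval_charpoly, det_smul_sub, Polynomial.eval_multiset_prod, Multiset.map_map, Multiset.map_map]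
    simp [Function.comp_def]
  rw [this, Polynomial.roots_multiset_prod_X_sub_C]

/-- Good matrices: spectral radius at most one and one is not an eigenvalue. -/
def GoodSet (ι : Type*) [Fintype ι] [DecidableEq ι] : Set (Matrix ι ι ℂ) :=
  {A | (∀ l ∈ A.charpoly.roots, ‖l‖ ≤ 1) ∧ (1 - A).det ≠ 0}

lemma good_roots {A : Matrix ι ι ℂ} (hA : A ∈ GoodSet ι) : ∀ l ∈ A.charpoly.roots, ‖l‖ ≤ 1 ∧ l ≠ 1 := by
  intro l hl
  refine ⟨hA.1 l hl, ?_⟩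
  rintro rfl
  apply hA.2
  rw [det_one_sub]
  apply Multiset.prod_eq_zero
  rw [Multiset.mem_map]
  exact ⟨1, hl, by simp⟩

lemma good_det_ne {A : Matrix ι ι ℂ} (hA : A ∈ GoodSet ι) {t : ℝ} (ht : t ∈ Set.Icc (0:ℝ) 1) :
    (1 - (t:ℂ) • A).det ≠ 0 := by
  rw [det_one_sub_smul]
  apply Multiset.prod_ne_zero
  rw [Multiset.mem_map]
  rintro ⟨l, hl, h⟩
  obtain ⟨h1, h2⟩ := good_roots hA l hl
  have h3 : (t:ℂ) * l = 1 := by linear_combination -h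
  have h4 : t * ‖l‖ = 1 := by
    have := congrArg norm h3
    simpa [abs_of_nonneg ht.1] using this
  have h5 : t = 1 := by
    apply le_antisymm ht.2
    nlinarith [ht.1, ht.2]
  subst h5
  simp at h3
  exact h2 h3

lemma det_phase (A : Matrix ι ι ℂ) : (1 - A).det = (‖(1 - A).det‖ : ℂ) * Complex.exp (Lf A * Complex.I) := by
  rw [det_one_sub]
  exact prod_eq_norm_mul_exp _

lemma phase_eq {A : Matrix ι ι ℂ} (h : (1 - A).det ≠ 0) :
    Complex.exp (Lf A * Complex.I) = (1 - A).det / (‖(1 - A).det‖ : ℂ) := by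
  have h2 : (‖(1 - A).det‖ : ℂ) ≠ 0 := by exact_mod_cast norm_ne_zero_iff.2 h
  rw [eq_div_iff h2, mul_comm, ← det_phase]

lemma exp_arg_eq {z : ℂ} (h : z ≠ 0) : Complex.exp (Complex.arg z * Complex.I) = z / (‖z‖ : ℂ) := by
  have h2 : (‖z‖ : ℂ) ≠ 0 := by exact_mod_cast norm_ne_zero_iff.2 h
  rw [eq_div_iff h2, mul_comm, Complex.norm_mul_exp_arg_mul_I]

lemma Lf_smul (A : Matrix ι ι ℂ) (z : ℂ) : Lf (z • A) = argSum (A.charpoly.roots.map fun l => z * l) := by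
  rw [Lf, roots_smul]

lemma Lf_path_cont {A : Matrix ι ι ℂ} (hA : A ∈ GoodSet ι) :
    ContinuousOn (fun t : ℝ => Lf ((t : ℂ) • A)) (Set.Icc 0 1) := by
  simp_rw [Lf_smul]
  exact argSum_continuousOn _ (good_roots hA)

lemma Lf_zero : Lf (0 : Matrix ι ι ℂ) = 0 := by
  have := Lf_smul (0 : Matrix ι ι ℂ) 0
  rw [smul_zero] at this
  rw [this, argSum, Multiset.map_map]
  simp

lemma Lf_continuousOn : ContinuousOn (Lf : Matrix ι ι ℂ → ℝ) (GoodSet ι) := by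
  intro A₀ hA₀
  have hQc : ∀ t ∈ Set.Icc (0:ℝ) 1, ContinuousAt (fun p : Matrix ι ι ℂ × ℝ =>
      (1 - (p.2:ℂ) • p.1).det / (1 - (p.2:ℂ) • A₀).det) (A₀, t) := by
    intro t ht
    refine ContinuousAt.div ?_ ?_ (good_det_ne hA₀ ht)
    · apply Continuous.continuousAt
      apply Continuous.matrix_det
      fun_prop
    · apply Continuous.continuousAt
      apply Continuous.matrix_det
      fun_prop
  have hev : ∀ᶠ A in nhds A₀, ∀ t ∈ Set.Icc (0:ℝ) 1,
      (1 - (t:ℂ) • A).det / (1 - (t:ℂ) • A₀).det ∈ Complex.slitPlane := by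
    refine isCompact_Icc.eventually_forall_of_forall_eventually
      (P := fun (A : Matrix ι ι ℂ) (t:ℝ) => (1 - (t:ℂ) • A).det / (1 - (t:ℂ) • A₀).det ∈ Complex.slitPlane) ?_
    intro t ht
    refine (hQc t ht).eventually_mem (Complex.isOpen_slitPlane.mem_nhds ?_)
    simp only
    rw [div_self (good_det_ne hA₀ ht)]
    simp
  have hev2 : ∀ᶠ A in nhdsWithin A₀ (GoodSet ι),
      Lf A₀ + Complex.arg ((1 - A).det / (1 - A₀).det) = Lf A := by
    filter_upwards [nhdsWithin_le_nhds hev, self_mem_nhdsWithin] with A hA hAG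
    have := lift_const (fun t => Lf ((t:ℂ) • A) - Lf ((t:ℂ) • A₀) -
      Complex.arg ((1 - (t:ℂ) • A).det / (1 - (t:ℂ) • A₀).det)) ?_ ?_ ?_
    · simp at this
      linarith
    · refine ((Lf_path_cont hAG).sub (Lf_path_cont hA₀)).sub ?_
      intro t ht
      apply ContinuousAt.continuousWithinAt
      refine ContinuousAt.comp (f := fun t : ℝ => (1 - (t:ℂ) • A).det / (1 - (t:ℂ) • A₀).det) (g := Complex.arg)
        (Complex.continuousAt_arg (hA t ht)) ?_
      refine ContinuousAt.div ?_ ?_ (good_det_ne hA₀ ht)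
      · apply Continuous.continuousAt
        apply Continuous.matrix_det
        fun_prop
      · apply Continuous.continuousAt
        apply Continuous.matrix_det
        fun_prop
    · intro t ht
      have e1 := good_det_ne hAG ht
      have e2 := good_det_ne hA₀ ht
      have n1 : (‖(1 - (t:ℂ) • A).det‖ : ℂ) ≠ 0 := by exact_mod_cast norm_ne_zero_iff.2 e1
      have n2 : (‖(1 - (t:ℂ) • A₀).det‖ : ℂ) ≠ 0 := by exact_mod_cast norm_ne_zero_iff.2 e2
      push_cast
      rw [sub_mul, sub_mul, Complex.exp_sub, Complex.exp_sub, phase_eq e1, phase_eq e2,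
        exp_arg_eq (div_ne_zero e1 e2), norm_div]
      push_cast
      field_simp
    · simp [Lf_zero]
  refine ContinuousWithinAt.congr_of_eventuallyEq (f := fun A => Lf A₀ + Complex.arg ((1 - A).det / (1 - A₀).det)) ?_
    (hev2.mono fun A h => h.symm) ?_
  · apply ContinuousAt.continuousWithinAt
    refine ContinuousAt.add continuousAt_const ?_
    refine ContinuousAt.comp (f := fun A : Matrix ι ι ℂ => (1 - A).det / (1 - A₀).det) (g := Complex.arg)
        (Complex.continuousAt_arg ?_) ?_
    · rw [div_self hA₀.2]; simp
    · refine ContinuousAt.div_const ?_ _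
      apply Continuous.continuousAt
      apply Continuous.matrix_det
      fun_prop
  · rw [div_self hA₀.2]; simp
end

section
open Matrix
variable {κ : Type*} [Fintype κ] [DecidableEq κ]

/-- Sum of squared absolute values. -/
noncomputable def qn {ι : Type*} [Fintype ι] (v : ι → ℂ) : ℝ := ∑ i, ‖v i‖ ^ 2

lemma qn_eq {ι : Type*} [Fintype ι] (v : ι → ℂ) : (qn v : ℂ) = star v ⬝ᵥ v := by
  simp only [qn, dotProduct, Pi.star_apply]
  push_cast
  refine Finset.sum_congr rfl fun i _ => ?_
  rw [← Complex.conj_mul']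
  rfl

lemma qn_nonneg {ι : Type*} [Fintype ι] (v : ι → ℂ) : 0 ≤ qn v := by
  unfold qn; positivity

lemma qn_smul {ι : Type*} [Fintype ι] (z : ℂ) (v : ι → ℂ) : qn (z • v) = ‖z‖ ^ 2 * qn v := by
  simp [qn, Finset.mul_sum, mul_pow]

lemma qn_pos {ι : Type*} [Fintype ι] {v : ι → ℂ} (hv : v ≠ 0) : 0 < qn v := by
  obtain ⟨i, hi⟩ := Function.ne_iff.1 hv
  unfold qn
  refine Finset.sum_pos' (fun i _ => by positivity) ⟨i, Finset.mem_univ _, ?_⟩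
  have : 0 < ‖v i‖ := norm_pos_iff.2 hi
  positivity

lemma qn_unitary {ι : Type*} [Fintype ι] [DecidableEq ι] {U : Matrix ι ι ℂ} (hU : Uᴴ * U = 1) (v : ι → ℂ) :
    qn (U *ᵥ v) = qn v := by
  have : (qn (U *ᵥ v) : ℂ) = qn v := by
    rw [qn_eq, qn_eq, star_mulVec, ← dotProduct_mulVec, mulVec_mulVec, hU, one_mulVec]
  exact_mod_cast this

lemma charpoly_root_exists {ι : Type*} [Fintype ι] [DecidableEq ι] {A : Matrix ι ι ℂ} {l : ℂ}
    (hl : l ∈ A.charpoly.roots) : ∃ x : ι → ℂ, x ≠ 0 ∧ A *ᵥ x = l • x := by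
  have h := (Polynomial.mem_roots'.1 hl).2
  rw [Polynomial.IsRoot, eval_charpoly, ← exists_mulVec_eq_zero_iff] at h
  obtain ⟨x, hx, h⟩ := h
  refine ⟨x, hx, ?_⟩
  rw [sub_mulVec, sub_eq_zero] at h
  rw [← h]
  ext i
  simp [Matrix.scalar_apply, mulVec_diagonal]

lemma unitary_root_norm {ι : Type*} [Fintype ι] [DecidableEq ι] {U : Matrix ι ι ℂ} (hU : Uᴴ * U = 1) {l : ℂ}
    (hl : l ∈ U.charpoly.roots) : ‖l‖ = 1 := by
  obtain ⟨x, hx, h⟩ := charpoly_root_exists hl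
  have h1 := qn_unitary hU x
  rw [h, qn_smul] at h1
  have h2 := qn_pos hx
  have h3 : ‖l‖ ^ 2 = 1 := by
    have : (‖l‖ ^ 2 - 1) * qn x = 0 := by linarith
    rcases mul_eq_zero.1 this with h | h <;> linarith
  nlinarith [norm_nonneg l]

/-- The feedback (Schur complement) matrix. -/
noncomputable def Ws (U : Matrix (Unit ⊕ κ) (Unit ⊕ κ) ℂ) (s : ℝ) : Matrix κ κ ℂ :=
  (s : ℂ) • U.toBlocks₂₂ +
    ((s : ℂ) * ((s : ℂ) / (1 - s * U (Sum.inl ()) (Sum.inl ())))) • (U.toBlocks₂₁ * U.toBlocks₁₂)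

lemma unit_mul (a : Matrix Unit Unit ℂ) (b : Matrix Unit κ ℂ) : a * b = (a () ()) • b := by
  ext i j; simp [Matrix.mul_apply]

lemma mul_fromRows_blocks (U : Matrix (Unit ⊕ κ) (Unit ⊕ κ) ℂ) (s : ℝ)
    (h : 1 - (s:ℂ) * U (Sum.inl ()) (Sum.inl ()) ≠ 0) :
    ((s:ℂ) • U) * (fromRows (((s : ℂ) / (1 - s * U (Sum.inl ()) (Sum.inl ()))) • U.toBlocks₁₂) 1 : Matrix (Unit ⊕ κ) κ ℂ) =
      fromRows (((s : ℂ) / (1 - s * U (Sum.inl ()) (Sum.inl ()))) • U.toBlocks₁₂) (Ws U s) := by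
  have h11 : U.toBlocks₁₁ () () = U (Sum.inl ()) (Sum.inl ()) := rfl
  conv_lhs => enter [1]; rw [← fromBlocks_toBlocks U]
  rw [fromBlocks_smul, fromBlocks_mul_fromRows]
  congr 1
  · rw [smul_mul, unit_mul, h11, smul_smul, smul_smul, Matrix.mul_one, ← add_smul]
    congr 1
    field_simp
    ring
  · rw [Ws, Matrix.mul_one, Matrix.mul_smul, smul_mul, smul_smul, add_comm]
    congr 2
    ring

lemma Ws_norm (U : Matrix (Unit ⊕ κ) (Unit ⊕ κ) ℂ) (hU : Uᴴ * U = 1) (s : ℝ) (hs : s ∈ Set.Icc (0:ℝ) 1)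
    (h : 1 - (s:ℂ) * U (Sum.inl ()) (Sum.inl ()) ≠ 0) :
    ∀ l ∈ (Ws U s).charpoly.roots, ‖l‖ ≤ 1 := by
  intro l hl
  obtain ⟨x, hx, hxl⟩ := charpoly_root_exists hl
  have h1 := congrArg (fun M => M *ᵥ x) (mul_fromRows_blocks U s h)
  simp only [← mulVec_mulVec, fromRows_mulVec, hxl, one_mulVec] at h1
  set y := (((s : ℂ) / (1 - s * U (Sum.inl ()) (Sum.inl ()))) • U.toBlocks₁₂) *ᵥ x
  have h2 := congrArg qn h1
  rw [smul_mulVec, qn_smul, qn_unitary hU] at h2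
  have e : ∀ (a : Unit → ℂ) (b : κ → ℂ), qn (Sum.elim a b) = qn a + qn b := by
    intro a b; simp [qn]
  rw [e, e, qn_smul] at h2
  have p1 := qn_pos hx
  have p2 := qn_nonneg y
  have hs' : ‖(s:ℂ)‖ ^ 2 ≤ 1 := by
    rw [Complex.norm_real, Real.norm_eq_abs, sq_abs]; nlinarith [hs.1, hs.2]
  have h3 : ‖l‖ ^ 2 * qn x ≤ 1 * qn x := by nlinarith
  have h4 := le_of_mul_le_mul_right h3 p1
  nlinarith [norm_nonneg l]

lemma Ws_unitary (U : Matrix (Unit ⊕ κ) (Unit ⊕ κ) ℂ) (hU : Uᴴ * U = 1)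
    (h : U (Sum.inl ()) (Sum.inl ()) ≠ 1) : (Ws U 1)ᴴ * Ws U 1 = 1 := by
  have h0 : 1 - ((1:ℝ):ℂ) * U (Sum.inl ()) (Sum.inl ()) ≠ 0 := by
    rw [Complex.ofReal_one, one_mul]; exact sub_ne_zero.2 h.symm
  have h1 := mul_fromRows_blocks U 1 h0
  set y := ((((1:ℝ) : ℂ) / (1 - ((1:ℝ):ℂ) * U (Sum.inl ()) (Sum.inl ()))) • U.toBlocks₁₂)
  have h2 := congrArg (fun M => Mᴴ * M) h1
  simp only [Complex.ofReal_one, one_smul, conjTranspose_mul] at h2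
  rw [Matrix.mul_assoc, ← Matrix.mul_assoc Uᴴ, hU, Matrix.one_mul] at h2
  rw [conjTranspose_fromRows_eq_fromCols_conjTranspose, conjTranspose_fromRows_eq_fromCols_conjTranspose,
    fromCols_mul_fromRows, fromCols_mul_fromRows] at h2
  have h3 := add_left_cancel h2
  rw [← h3]
  simp

lemma Ws_det (U : Matrix (Unit ⊕ κ) (Unit ⊕ κ) ℂ) (s : ℝ)
    (h : 1 - (s:ℂ) * U (Sum.inl ()) (Sum.inl ()) ≠ 0) :
    (1 - (s:ℂ) • U).det = (1 - (s:ℂ) * U (Sum.inl ()) (Sum.inl ())) * (1 - Ws U s).det := by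
  set α := U (Sum.inl ()) (Sum.inl ()) with hα
  have e : (1 - (s:ℂ) • U) = fromBlocks ((1 - (s:ℂ) * α) • 1) (-(s:ℂ) • U.toBlocks₁₂)
      (-(s:ℂ) • U.toBlocks₂₁) (1 - (s:ℂ) • U.toBlocks₂₂) := by
    ext i j
    rcases i with i | i <;> rcases j with j | j <;>
      simp [toBlocks₁₂, toBlocks₂₁, toBlocks₂₂, hα, Matrix.one_apply]
  let _ : Invertible ((1 - (s:ℂ) * α) • (1 : Matrix Unit Unit ℂ)) :=
    ⟨(1 - (s:ℂ) * α)⁻¹ • 1, by simp [smul_smul, h], by simp [smul_smul, h]⟩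
  rw [e, det_fromBlocks₁₁]
  congr 1
  · simp
  · congr 1
    have : ⅟ ((1 - (s:ℂ) * α) • (1 : Matrix Unit Unit ℂ)) = (1 - (s:ℂ) * α)⁻¹ • 1 := rfl
    rw [this, Ws, ← hα]
    simp only [Matrix.smul_mul, Matrix.mul_smul, Matrix.mul_one, smul_smul]
    rw [sub_sub]
    congr 3
    field_simp

lemma corner_le (U : Matrix (Unit ⊕ κ) (Unit ⊕ κ) ℂ) (hU : Uᴴ * U = 1) (i j) : ‖U i j‖ ≤ 1 :=
  entry_norm_bound_of_unitary (by rw [mem_unitaryGroup_iff']; exact hU) i j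

lemma corner_ne (U : Matrix (Unit ⊕ κ) (Unit ⊕ κ) ℂ) (hU : Uᴴ * U = 1) (hd : (1 - U).det ≠ 0) :
    U (Sum.inl ()) (Sum.inl ()) ≠ 1 := by
  intro h
  apply hd
  have h1 := congrFun (congrFun hU (Sum.inl ())) (Sum.inl ())
  rw [Matrix.mul_apply] at h1
  simp only [conjTranspose_apply, Fintype.sum_sum_type, Finset.univ_unique, Finset.sum_singleton, one_apply_eq] at h1
  have h2 : (∑ i, ‖U (Sum.inr i) (Sum.inl ())‖ ^ 2 : ℝ) = 0 := by
    have hh : ((∑ i, ‖U (Sum.inr i) (Sum.inl ())‖ ^ 2 : ℝ) : ℂ) = 0 := by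
      push_cast
      simp only [h, PUnit.default_eq_unit] at h1
      simp only [star_one, mul_one] at h1
      have h3 : ∑ x, star (U (Sum.inr x) (Sum.inl PUnit.unit)) * U (Sum.inr x) (Sum.inl PUnit.unit) = 0 := by
        linear_combination h1
      rw [← h3]
      refine Finset.sum_congr rfl fun i _ => ?_
      rw [← Complex.conj_mul']
      rfl
    exact_mod_cast hh
  rw [Finset.sum_eq_zero_iff_of_nonneg (fun i _ => by positivity)] at h2
  apply det_eq_zero_of_column_eq_zero (Sum.inl ())
  rintro (i | i)
  · simp [h]
  · have := h2 i (Finset.mem_univ _)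
    simp at this
    simp [this]

lemma good_of_unitary {ι : Type*} [Fintype ι] [DecidableEq ι] {U : Matrix ι ι ℂ} (hU : Uᴴ * U = 1)
    (hd : (1 - U).det ≠ 0) : U ∈ GoodSet ι :=
  ⟨fun _ hl => (unitary_root_norm hU hl).le, hd⟩

lemma schur_main (U : Matrix (Unit ⊕ κ) (Unit ⊕ κ) ℂ) (hU : Uᴴ * U = 1) (hd : (1 - U).det ≠ 0) :
    (1 - Ws U 1).det ≠ 0 ∧
    Lf U = Complex.arg (1 - U (Sum.inl ()) (Sum.inl ())) + Lf (Ws U 1) := by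
  have hne := corner_ne U hU hd
  have hle := corner_le U hU (Sum.inl ()) (Sum.inl ())
  set α := U (Sum.inl ()) (Sum.inl ()) with hα
  have hre : ∀ s ∈ Set.Icc (0:ℝ) 1, 1 - (s:ℂ) * α ∈ Complex.slitPlane := by
    intro t ht
    rw [Complex.mem_slitPlane_iff]
    by_contra hcon
    push Not at hcon
    obtain ⟨h1, h2⟩ := hcon
    have hre := Complex.abs_re_le_norm α
    have hre' : α.re ≤ 1 := (le_abs_self _).trans (hre.trans hle)
    simp at h1 h2
    have ht1 : t = 1 := by
      apply le_antisymm ht.2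
      by_contra hh
      push Not at hh
      nlinarith [ht.1]
    subst ht1
    simp at h2
    apply hne
    apply Complex.ext <;> simp
    · linarith
    · exact h2
  have hnz : ∀ s ∈ Set.Icc (0:ℝ) 1, 1 - (s:ℂ) * α ≠ 0 := fun s hs => Complex.slitPlane_ne_zero (hre s hs)
  have hUg := good_of_unitary hU hd
  have hWd : ∀ s ∈ Set.Icc (0:ℝ) 1, (1 - Ws U s).det ≠ 0 := by
    intro s hs h0
    apply good_det_ne hUg hs
    rw [Ws_det U s (hnz s hs), h0, mul_zero]
  have hWg : ∀ s ∈ Set.Icc (0:ℝ) 1, Ws U s ∈ GoodSet κ := fun s hs =>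
    ⟨Ws_norm U hU s hs (hnz s hs), hWd s hs⟩
  refine ⟨hWd 1 (by simp), ?_⟩
  have := lift_const (fun s => Lf ((s:ℂ) • U) - Complex.arg (1 - (s:ℂ) * α) - Lf (Ws U s)) ?_ ?_ ?_
  · simp at this
    linarith
  · refine ((Lf_path_cont hUg).sub ?_).sub ?_
    · intro t ht
      apply ContinuousAt.continuousWithinAt
      exact ContinuousAt.comp (f := fun t : ℝ => 1 - (t:ℂ) * α) (g := Complex.arg)
        (Complex.continuousAt_arg (hre t ht)) (by fun_prop)
    · refine (Lf_continuousOn (ι := κ)).comp (f := fun s : ℝ => Ws U s) ?_ hWg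
      have hc : ContinuousOn (fun s : ℝ => (s:ℂ) * ((s:ℂ) / (1 - (s:ℂ) * α))) (Set.Icc 0 1) := by
        refine ContinuousOn.mul (Continuous.continuousOn (by fun_prop)) ?_
        exact ContinuousOn.div (Continuous.continuousOn (by fun_prop)) (Continuous.continuousOn (by fun_prop)) hnz
      have hc1 : Continuous (fun s : ℝ => (s:ℂ) • U.toBlocks₂₂) := by fun_prop
      exact ContinuousOn.add hc1.continuousOn (hc.smul continuousOn_const)
  · intro s hs
    have e1 := good_det_ne hUg hs
    have e2 := hnz s hs
    have e3 := hWd s hs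
    have n2 : (‖1 - (s:ℂ) * α‖ : ℂ) ≠ 0 := by exact_mod_cast norm_ne_zero_iff.2 e2
    have n3 : (‖(1 - Ws U s).det‖ : ℂ) ≠ 0 := by exact_mod_cast norm_ne_zero_iff.2 e3
    push_cast
    rw [sub_mul, sub_mul, Complex.exp_sub, Complex.exp_sub, phase_eq e1, phase_eq e3,
      exp_arg_eq e2, Ws_det U s e2, norm_mul, ← hα]
    push_cast
    field_simp
  · simp [Ws, Lf_zero]

lemma blocks_mul_corner (U : Matrix (Unit ⊕ κ) (Unit ⊕ κ) ℂ) (h : Matrix κ κ ℂ) :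
    ((fromBlocks 1 0 0 h : Matrix (Unit ⊕ κ) (Unit ⊕ κ) ℂ) * U) (Sum.inl ()) (Sum.inl ()) = U (Sum.inl ()) (Sum.inl ()) := by
  rw [← fromBlocks_toBlocks U, fromBlocks_multiply]
  simp

lemma Ws_equivariant (U : Matrix (Unit ⊕ κ) (Unit ⊕ κ) ℂ) (h : Matrix κ κ ℂ) :
    Ws ((fromBlocks 1 0 0 h : Matrix (Unit ⊕ κ) (Unit ⊕ κ) ℂ) * U) 1 = h * Ws U 1 := by
  rw [Ws, blocks_mul_corner, Ws]
  have : ((fromBlocks 1 0 0 h : Matrix (Unit ⊕ κ) (Unit ⊕ κ) ℂ) * U) = fromBlocks U.toBlocks₁₁ U.toBlocks₁₂ (h * U.toBlocks₂₁) (h * U.toBlocks₂₂) := by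
    conv_lhs => rw [← fromBlocks_toBlocks U]
    rw [fromBlocks_multiply]
    simp
  rw [this]
  simp [Matrix.mul_add, Matrix.mul_assoc]
end

section
open Matrix

instance ugSecondCountable (N : ℕ) : SecondCountableTopology (Matrix.unitaryGroup (Fin N) ℂ) := by
  have : SecondCountableTopology (Matrix (Fin N) (Fin N) ℂ) :=
    inferInstanceAs (SecondCountableTopology (Fin N → Fin N → ℂ))
  exact TopologicalSpace.Subtype.secondCountableTopology _

lemma ug_star_mul {N : ℕ} (U : Matrix.unitaryGroup (Fin N) ℂ) : (U.1)ᴴ * U.1 = 1 := by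
  have := Matrix.mem_unitaryGroup_iff'.1 U.2
  exact this

open Classical in
/-- Exponential weight, zero when one is an eigenvalue. -/
noncomputable def Fw (t : ℝ) (n : ℕ) (U : Matrix.unitaryGroup (Fin n) ℂ) : ENNReal :=
  if (1 - U.1).det = 0 then 0 else ENNReal.ofReal (Real.exp (t * Lf U.1))

lemma det_cont (n : ℕ) : Continuous fun U : Matrix.unitaryGroup (Fin n) ℂ => (1 - U.1).det := by
  apply Continuous.matrix_det
  fun_prop

lemma detset_closed (n : ℕ) : IsClosed {U : Matrix.unitaryGroup (Fin n) ℂ | (1 - U.1).det = 0} :=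
  isClosed_eq (det_cont n) continuous_const

lemma Fw_measurable (t : ℝ) (n : ℕ) : Measurable (Fw t n) := by
  classical
  have h : Fw t n = Set.piecewise {U : Matrix.unitaryGroup (Fin n) ℂ | (1 - U.1).det = 0} (fun _ => 0)
      (fun U => ENNReal.ofReal (Real.exp (t * Lf U.1))) := by
    ext U
    by_cases hU : (1 - U.1).det = 0
    · simp [Fw, Set.piecewise, hU]
    · simp [Fw, Set.piecewise, hU]
  rw [h]
  refine ContinuousOn.measurable_piecewise continuousOn_const ?_ (detset_closed n).measurableSet
  have h1 : ContinuousOn (fun U : Matrix.unitaryGroup (Fin n) ℂ => Lf U.1)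
      {U : Matrix.unitaryGroup (Fin n) ℂ | (1 - U.1).det = 0}ᶜ :=
    (Lf_continuousOn (ι := Fin n)).comp (f := fun U : Matrix.unitaryGroup (Fin n) ℂ => U.1)
      continuous_subtype_val.continuousOn (fun U hU => good_of_unitary (ug_star_mul U) hU)
  refine ENNReal.continuous_ofReal.comp_continuousOn ?_
  exact Real.continuous_exp.comp_continuousOn (continuousOn_const.mul h1)

/-- Splitting off one index. -/
noncomputable def eqv (n : ℕ) : Unit ⊕ Fin n ≃ Fin (n + 1) :=
  Fintype.equivOfCardEq (by simp [add_comm])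

/-- Index of the corner. -/
noncomputable def cnr (n : ℕ) : Fin (n + 1) := eqv n (Sum.inl ())

/-- The embedding of `U(n)` in `U(n+1)`. -/
noncomputable def emb (n : ℕ) (h : Matrix.unitaryGroup (Fin n) ℂ) : Matrix.unitaryGroup (Fin (n + 1)) ℂ :=
  ⟨(fromBlocks 1 0 0 h.1 : Matrix (Unit ⊕ Fin n) (Unit ⊕ Fin n) ℂ).submatrix (eqv n).symm (eqv n).symm, by
    rw [Matrix.mem_unitaryGroup_iff', star_eq_conjTranspose, conjTranspose_submatrix, submatrix_mul_equiv,
      fromBlocks_conjTranspose, fromBlocks_multiply]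
    simp [ug_star_mul]⟩

lemma emb_continuous (n : ℕ) : Continuous (emb n) := by
  refine Continuous.subtype_mk ?_ _
  refine Continuous.matrix_submatrix ?_ _ _
  exact Continuous.matrix_fromBlocks continuous_const continuous_const continuous_const continuous_subtype_val

lemma Lf_submatrix {ι κ : Type*} [Fintype ι] [DecidableEq ι] [Fintype κ] [DecidableEq κ] (A : Matrix ι ι ℂ) (e : κ ≃ ι) :
    Lf (A.submatrix e e) = Lf A := by
  have := Matrix.charpoly_reindex e.symm A
  rw [Matrix.reindex_apply] at this
  rw [Lf, Lf, ← this]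
  rfl

lemma det_submatrix' {ι κ : Type*} [Fintype ι] [DecidableEq ι] [Fintype κ] [DecidableEq κ] (A : Matrix ι ι ℂ) (e : κ ≃ ι) :
    (1 - A.submatrix e e).det = (1 - A).det := by
  rw [← Matrix.det_submatrix_equiv_self e (1 - A), submatrix_sub]
  simp

lemma unitary_submatrix {ι κ : Type*} [Fintype ι] [DecidableEq ι] [Fintype κ] [DecidableEq κ] (A : Matrix ι ι ℂ) (e : κ ≃ ι)
    (hA : Aᴴ * A = 1) : (A.submatrix e e)ᴴ * A.submatrix e e = 1 := by
  rw [conjTranspose_submatrix, submatrix_mul_equiv, hA]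
  simp

lemma Fw_recursion (t : ℝ) (n : ℕ) (U : Matrix.unitaryGroup (Fin (n + 1)) ℂ) :
    ∃ W : Matrix.unitaryGroup (Fin n) ℂ, ∀ h : Matrix.unitaryGroup (Fin n) ℂ,
      Fw t (n + 1) (emb n h * U) ≤
        ENNReal.ofReal (Real.exp (t * Complex.arg (1 - U.1 (cnr n) (cnr n)))) * Fw t n (W * h) := by
  set M : Matrix (Unit ⊕ Fin n) (Unit ⊕ Fin n) ℂ := U.1.submatrix (eqv n) (eqv n) with hM
  have hMu : Mᴴ * M = 1 := unitary_submatrix _ _ (ug_star_mul U)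
  have hcor : M (Sum.inl ()) (Sum.inl ()) = U.1 (cnr n) (cnr n) := rfl
  have hmul : ∀ h : Matrix.unitaryGroup (Fin n) ℂ, (emb n h * U).1.submatrix (eqv n) (eqv n) =
      (fromBlocks 1 0 0 h.1 : Matrix (Unit ⊕ Fin n) (Unit ⊕ Fin n) ℂ) * M := by
    intro h
    have : (emb n h * U).1 = (emb n h).1 * U.1 := rfl
    rw [this, ← Matrix.submatrix_mul_equiv _ _ _ (eqv n), hM]
    congr 1
    simp [emb]
  have hunit : ∀ h : Matrix.unitaryGroup (Fin n) ℂ,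
      ((fromBlocks 1 0 0 h.1 : Matrix (Unit ⊕ Fin n) (Unit ⊕ Fin n) ℂ) * M)ᴴ *
      ((fromBlocks 1 0 0 h.1 : Matrix (Unit ⊕ Fin n) (Unit ⊕ Fin n) ℂ) * M) = 1 := by
    intro h
    rw [← hmul]
    exact unitary_submatrix _ _ (ug_star_mul _)
  by_cases hα : U.1 (cnr n) (cnr n) = 1
  · refine ⟨1, fun h => ?_⟩
    have : (1 - (emb n h * U).1).det = 0 := by
      by_contra hd
      rw [← det_submatrix' _ (eqv n), hmul] at hd
      apply corner_ne _ (hunit h) hd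
      rw [blocks_mul_corner, hcor, hα]
    rw [Fw, if_pos this]; exact zero_le
  · have hWu := Ws_unitary M hMu (by rw [hcor]; exact hα)
    refine ⟨⟨Ws M 1, by rw [mem_unitaryGroup_iff']; exact hWu⟩, fun h => ?_⟩
    by_cases hd : (1 - (emb n h * U).1).det = 0
    · rw [Fw, if_pos hd]; exact zero_le
    · have hd' := hd
      rw [← det_submatrix' _ (eqv n), hmul] at hd'
      obtain ⟨h1, h2⟩ := schur_main _ (hunit h) hd'
      rw [Ws_equivariant] at h1 h2
      rw [blocks_mul_corner, hcor, ← hmul, Lf_submatrix] at h2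
      have h3 : Lf (h.1 * Ws M 1) = Lf (Ws M 1 * h.1) := by
        rw [Lf, Lf, charpoly_mul_comm]
      have h4 : (1 - Ws M 1 * h.1).det ≠ 0 := by
        rw [det_one_sub, charpoly_mul_comm, ← det_one_sub]
        exact h1
      unfold Fw
      rw [if_neg hd, if_neg (by exact h4), ← ENNReal.ofReal_mul (by positivity), ← Real.exp_add, h2, h3, mul_add]
      exact le_rfl

lemma entry_cont {N : ℕ} (i j : Fin N) : Continuous fun U : Matrix.unitaryGroup (Fin N) ℂ => U.1 i j := 
  continuous_subtype_val.matrix_elem i j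

lemma Fw_step (t : ℝ) (n : ℕ) (μ : Measure (Matrix.unitaryGroup (Fin (n + 1)) ℂ)) [IsProbabilityMeasure μ]
    [μ.IsMulLeftInvariant] (μ' : Measure (Matrix.unitaryGroup (Fin n) ℂ)) [IsProbabilityMeasure μ']
    [μ'.IsMulLeftInvariant] :
    ∫⁻ U, Fw t (n + 1) U ∂μ ≤
      (∫⁻ U, ENNReal.ofReal (Real.exp (t * Complex.arg (1 - U.1 (cnr n) (cnr n)))) ∂μ) * ∫⁻ h, Fw t n h ∂μ' := by
  calc ∫⁻ U, Fw t (n + 1) U ∂μ = ∫⁻ h, ∫⁻ U, Fw t (n + 1) (emb n h * U) ∂μ ∂μ' := by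
        simp_rw [lintegral_mul_left_eq_self]
        simp
    _ = ∫⁻ U, ∫⁻ h, Fw t (n + 1) (emb n h * U) ∂μ' ∂μ := by
        refine lintegral_lintegral_swap ?_
        refine Measurable.aemeasurable ?_
        refine (Fw_measurable t (n + 1)).comp ?_
        exact ((emb_continuous n).measurable.comp measurable_fst).mul measurable_snd
    _ ≤ ∫⁻ U, ENNReal.ofReal (Real.exp (t * Complex.arg (1 - U.1 (cnr n) (cnr n)))) * ∫⁻ h, Fw t n h ∂μ' ∂μ := by
        refine lintegral_mono fun U => ?_
        obtain ⟨W, hW⟩ := Fw_recursion t n U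
        calc ∫⁻ h, Fw t (n + 1) (emb n h * U) ∂μ' ≤ ∫⁻ h, ENNReal.ofReal (Real.exp (t * Complex.arg (1 - U.1 (cnr n) (cnr n)))) * Fw t n (W * h) ∂μ' :=
              lintegral_mono hW
          _ = _ := by
            rw [lintegral_const_mul' _ _ ENNReal.ofReal_ne_top, lintegral_mul_left_eq_self]
    _ = _ := by
        rw [lintegral_mul_const]
        have : Measurable fun U : Matrix.unitaryGroup (Fin (n + 1)) ℂ => U.1 (cnr n) (cnr n) :=
          (entry_cont _ _).measurable
        exact (((Complex.measurable_arg.comp (this.const_sub 1)).const_mul t).exp).ennreal_ofReal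

lemma abs_arg_one_sub_le {a : ℂ} (ha : ‖a‖ ≤ 1) : |Complex.arg (1 - a)| ≤ π / 2 := by
  rw [Complex.abs_arg_le_pi_div_two_iff]
  have := Complex.abs_re_le_norm a
  have := le_abs_self a.re
  simp; linarith

lemma arg_bound {a : ℂ} (ha : ‖a‖ ≤ 1) : |Complex.arg (1 - a) + a.im| ≤ 11 * ‖a‖ ^ 2 := by
  by_cases h : ‖a‖ ≤ 1 / 2
  · have h1 := Complex.norm_log_one_add_sub_self_le (z := -a) (by rw [norm_neg]; linarith)
    rw [norm_neg] at h1
    have h2 := Complex.abs_im_le_norm (Complex.log (1 + -a) - -a)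
    rw [Complex.sub_im, Complex.log_im, Complex.neg_im, sub_neg_eq_add, ← sub_eq_add_neg] at h2
    refine h2.trans (h1.trans ?_)
    have h3 : (1 - ‖a‖)⁻¹ ≤ 2 := by
      rw [inv_le_comm₀ (by linarith) (by norm_num)]; linarith
    have : ‖a‖ ^ 2 * (1 - ‖a‖)⁻¹ ≤ ‖a‖ ^ 2 * 2 := by gcongr
    nlinarith [sq_nonneg ‖a‖]
  · push Not at h
    have h1 := abs_arg_one_sub_le ha
    have h2 := (Complex.abs_im_le_norm a).trans ha
    have h3 := abs_add_le (Complex.arg (1 - a)) a.im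
    have := Real.pi_lt_d2
    nlinarith

lemma exp_bound {a : ℂ} (ha : ‖a‖ ≤ 1) {t : ℝ} (ht : |t| ≤ 1 / 2) :
    Real.exp (t * Complex.arg (1 - a)) ≤ 1 - t * a.im + 50 * ‖a‖ ^ 2 := by
  have h1 := abs_arg_one_sub_le ha
  have h2 := arg_bound ha
  set y := Complex.arg (1 - a)
  have h3 : |t * y| ≤ 1 := by
    rw [abs_mul]
    have := Real.pi_lt_d2
    nlinarith [abs_nonneg t, abs_nonneg y]
  have h4 := (abs_le.1 (Real.abs_exp_sub_one_sub_id_le h3)).2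
  have h5 : |t * (y + a.im)| ≤ 11/2 * ‖a‖ ^ 2 := by
    rw [abs_mul]
    nlinarith [abs_nonneg t, abs_nonneg (y + a.im), sq_nonneg ‖a‖]
  have h6 : |y| ≤ 12 * ‖a‖ := by
    have e : y = (y + a.im) + (- a.im) := by ring
    rw [e]
    refine (abs_add_le _ _).trans ?_
    rw [abs_neg]
    have := Complex.abs_im_le_norm a
    nlinarith [norm_nonneg a]
  have h7 : (t * y) ^ 2 ≤ 36 * ‖a‖ ^ 2 := by
    rw [← sq_abs (t*y), abs_mul]
    have h8 : |t| * |y| ≤ 6 * ‖a‖ := by nlinarith [abs_nonneg t, abs_nonneg y, norm_nonneg a]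
    have h9 : 0 ≤ |t| * |y| := by positivity
    nlinarith
  have h8 := (abs_le.1 h5).2
  nlinarith [sq_nonneg ‖a‖]

/-- Permutation matrices. -/
def permU {N : ℕ} (σ : Equiv.Perm (Fin N)) : Matrix.unitaryGroup (Fin N) ℂ :=
  ⟨(1 : Matrix (Fin N) (Fin N) ℂ).submatrix σ id, by
    rw [Matrix.mem_unitaryGroup_iff', star_eq_conjTranspose, conjTranspose_submatrix]
    rw [Matrix.submatrix_mul_equiv _ _ id σ id]
    simp⟩

lemma permU_mul {N : ℕ} (σ : Equiv.Perm (Fin N)) (U : Matrix.unitaryGroup (Fin N) ℂ) (i j : Fin N) :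
    (permU σ * U).1 i j = U.1 (σ i) j := by
  have : (permU σ * U).1 = (permU σ).1 * U.1 := rfl
  rw [this]
  simp [permU, Matrix.mul_apply, Matrix.one_apply]

lemma entry_le {N : ℕ} (U : Matrix.unitaryGroup (Fin N) ℂ) (i j : Fin N) : ‖U.1 i j‖ ≤ 1 :=
  entry_norm_bound_of_unitary U.2 i j

lemma entry_sq (N : ℕ) (μ : Measure (Matrix.unitaryGroup (Fin N) ℂ)) [IsProbabilityMeasure μ]
    [μ.IsMulLeftInvariant] (i : Fin N) : ∫ U, ‖U.1 i i‖ ^ 2 ∂μ = 1 / N := by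
  have h1 : ∀ k : Fin N, ∫ U, ‖U.1 k i‖ ^ 2 ∂μ = ∫ U, ‖U.1 i i‖ ^ 2 ∂μ := by
    intro k
    rw [← integral_mul_left_eq_self (fun U : Matrix.unitaryGroup (Fin N) ℂ => ‖U.1 i i‖ ^ 2) (permU (Equiv.swap i k))]
    simp_rw [permU_mul]
    simp
  have hinteg : ∀ k : Fin N, Integrable (fun U : Matrix.unitaryGroup (Fin N) ℂ => ‖U.1 k i‖ ^ 2) μ := by
    intro k
    refine Integrable.of_bound (C := 1) ((entry_cont k i).norm.pow 2).aestronglyMeasurable ?_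
    refine Filter.Eventually.of_forall fun U => ?_
    have := entry_le U k i
    rw [Real.norm_eq_abs, abs_of_nonneg (by positivity)]
    nlinarith [norm_nonneg (U.1 k i)]
  have h2 : ∑ k : Fin N, ∫ U, ‖U.1 k i‖ ^ 2 ∂μ = 1 := by
    rw [← integral_finsetSum _ (fun k _ => hinteg k)]
    have : ∀ U : Matrix.unitaryGroup (Fin N) ℂ, ∑ k, ‖U.1 k i‖ ^ 2 = 1 := by
      intro U
      have h := congrFun (congrFun (ug_star_mul U) i) i
      rw [Matrix.mul_apply, one_apply_eq] at h
      have h' : ((∑ k, ‖U.1 k i‖ ^ 2 : ℝ) : ℂ) = 1 := by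
        rw [← h]
        push_cast
        refine Finset.sum_congr rfl fun k _ => ?_
        rw [← Complex.conj_mul']
        rfl
      exact_mod_cast h'
    simp_rw [this]
    simp
  simp_rw [h1] at h2
  rw [Finset.sum_const, Finset.card_univ, Fintype.card_fin, nsmul_eq_mul] at h2
  exact eq_one_div_of_mul_eq_one_right h2

lemma entry_im (N : ℕ) (μ : Measure (Matrix.unitaryGroup (Fin N) ℂ)) 
    [μ.IsMulLeftInvariant] (i : Fin N) : ∫ U, (U.1 i i).im ∂μ = 0 := by
  have h := integral_mul_left_eq_self (μ := μ) (fun U : Matrix.unitaryGroup (Fin N) ℂ => (U.1 i i).im) (-1)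
  have : ∀ U : Matrix.unitaryGroup (Fin N) ℂ, ((-1 * U).1 i i).im = - (U.1 i i).im := by
    intro U
    have : (-1 * U).1 = - U.1 := by
      rw [neg_one_mul]; rfl
    rw [this]; simp
  simp_rw [this] at h
  rw [integral_neg] at h
  linarith

lemma factor_bound (t : ℝ) (ht : |t| ≤ 1 / 2) (n : ℕ) (μ : Measure (Matrix.unitaryGroup (Fin (n + 1)) ℂ)) [IsProbabilityMeasure μ]
    [μ.IsMulLeftInvariant] :
    ∫⁻ U, ENNReal.ofReal (Real.exp (t * Complex.arg (1 - U.1 (cnr n) (cnr n)))) ∂μ ≤ ENNReal.ofReal (Real.exp (50 / (n + 1))) := by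
  set i := cnr n
  have hm := (entry_cont i i).measurable
  have hi1 : Integrable (fun U : Matrix.unitaryGroup (Fin (n + 1)) ℂ => (U.1 i i).im) μ := by
    refine Integrable.of_bound (C := 1) (Complex.continuous_im.comp (entry_cont i i)).aestronglyMeasurable ?_
    refine Filter.Eventually.of_forall fun U => ?_
    exact (Complex.abs_im_le_norm _).trans (entry_le U i i)
  have hi2 : Integrable (fun U : Matrix.unitaryGroup (Fin (n + 1)) ℂ => ‖U.1 i i‖ ^ 2) μ := by
    refine Integrable.of_bound (C := 1) ((entry_cont i i).norm.pow 2).aestronglyMeasurable ?_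
    refine Filter.Eventually.of_forall fun U => ?_
    have := entry_le U i i
    rw [Real.norm_eq_abs, abs_of_nonneg (by positivity)]
    nlinarith [norm_nonneg (U.1 i i)]
  have hi3 : Integrable (fun U : Matrix.unitaryGroup (Fin (n + 1)) ℂ => 1 - t * (U.1 i i).im + 50 * ‖U.1 i i‖ ^ 2) μ :=
    ((integrable_const 1).sub (hi1.const_mul t)).add (hi2.const_mul 50)
  calc _ ≤ ∫⁻ U : Matrix.unitaryGroup (Fin (n + 1)) ℂ, ENNReal.ofReal (1 - t * (U.1 i i).im + 50 * ‖U.1 i i‖ ^ 2) ∂μ := by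
        refine lintegral_mono fun U => ENNReal.ofReal_le_ofReal (exp_bound (entry_le U i i) ht)
    _ = ENNReal.ofReal (∫ U : Matrix.unitaryGroup (Fin (n + 1)) ℂ, (1 - t * (U.1 i i).im + 50 * ‖U.1 i i‖ ^ 2) ∂μ) := by
        rw [ofReal_integral_eq_lintegral_ofReal hi3]
        refine Filter.Eventually.of_forall fun U => ?_
        exact (Real.exp_pos _).le.trans (exp_bound (entry_le U i i) ht)
    _ ≤ _ := by
        apply ENNReal.ofReal_le_ofReal
        rw [integral_add (f := fun U : Matrix.unitaryGroup (Fin (n + 1)) ℂ => 1 - t * (U.1 i i).im) ((integrable_const 1).sub (hi1.const_mul t)) (hi2.const_mul 50),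
          integral_sub (integrable_const 1) (hi1.const_mul t), integral_const_mul, integral_const_mul,
          entry_im, entry_sq]
        have := Real.add_one_le_exp (50 / ((n:ℝ) + 1))
        simp
        have e : (50:ℝ) * ((n:ℝ)+1)⁻¹ = 50 / (n+1) := by ring
        linarith

lemma Fw_bound (t : ℝ) (ht : |t| ≤ 1 / 2) (μ : (n : ℕ) → Measure (Matrix.unitaryGroup (Fin n) ℂ))
    [∀ n, IsProbabilityMeasure (μ n)] [∀ n, (μ n).IsMulLeftInvariant] (n : ℕ) :
    ∫⁻ U, Fw t n U ∂(μ n) ≤ ENNReal.ofReal (Real.exp (50 * (harmonic n : ℝ))) := by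
  induction n with
  | zero =>
    have : ∀ U, Fw t 0 U = 1 := by
      intro U
      have h : (U.1 : Matrix (Fin 0) (Fin 0) ℂ) = 0 := Subsingleton.elim _ _
      simp [Fw, h, Lf_zero]
    simp [this]
  | succ n ih =>
    refine (Fw_step t n (μ (n + 1)) (μ n)).trans ?_
    refine (mul_le_mul' (factor_bound t ht n _) ih).trans ?_
    rw [← ENNReal.ofReal_mul (by positivity), ← Real.exp_add, harmonic_succ]
    apply ENNReal.ofReal_le_ofReal
    apply Real.exp_le_exp.2
    push_cast
    apply le_of_eq
    ring
end

section
open Matrix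

/-- Rotation by the angle `-θ`. -/
noncomputable def rot (N : ℕ) (θ : ℝ) : Matrix.unitaryGroup (Fin N) ℂ :=
  ⟨Complex.exp (-θ * Complex.I) • (1 : Matrix (Fin N) (Fin N) ℂ), by
    rw [Matrix.mem_unitaryGroup_iff', star_eq_conjTranspose, conjTranspose_smul, conjTranspose_one,
      Matrix.smul_mul, Matrix.one_mul, smul_smul]
    have : star (Complex.exp (-θ * Complex.I)) * Complex.exp (-θ * Complex.I) = 1 := by
      have h : star (Complex.exp (-θ * Complex.I)) = Complex.exp (θ * Complex.I) := by
        rw [Complex.star_def, ← Complex.exp_conj]; simp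
      rw [h, ← Complex.exp_add]; simp
    rw [this, one_smul]⟩

lemma rot_mul (N : ℕ) (θ : ℝ) (U : Matrix.unitaryGroup (Fin N) ℂ) :
    (rot N θ * U).1 = Complex.exp (-θ * Complex.I) • U.1 := by
  have : (rot N θ * U).1 = (rot N θ).1 * U.1 := rfl
  rw [this, rot, Matrix.smul_mul, Matrix.one_mul]

lemma null_det (N : ℕ) (μ : Measure (Matrix.unitaryGroup (Fin N) ℂ)) [IsProbabilityMeasure μ]
    [μ.IsMulLeftInvariant] : μ {U | (1 - U.1).det = 0} = 0 := by
  set S : Set (ℝ × Matrix.unitaryGroup (Fin N) ℂ) :=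
    {p | (1 - Complex.exp (-p.1 * Complex.I) • p.2.1).det = 0} with hS
  have hSm : MeasurableSet S := by
    have : IsClosed S := by
      refine isClosed_eq ?_ continuous_const
      apply Continuous.matrix_det
      fun_prop
    exact this.measurableSet
  have h1 := Measure.prod_apply (μ := volume.restrict (Set.Ioc (-π) π)) (ν := μ) hSm
  have h2 := Measure.prod_apply_symm (μ := volume.restrict (Set.Ioc (-π) π)) (ν := μ) hSm
  have e1 : ∀ θ : ℝ, μ (Prod.mk θ ⁻¹' S) = μ {U | (1 - U.1).det = 0} := by
    intro θ
    rw [← measure_preimage_mul μ (rot N θ) {U | (1 - U.1).det = 0}]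
    congr 1
    ext U
    simp only [hS, Set.mem_preimage, Set.mem_setOf_eq, rot_mul]
  have e2 : ∀ U : Matrix.unitaryGroup (Fin N) ℂ,
      (volume.restrict (Set.Ioc (-π) π)) ((fun θ => (θ, U)) ⁻¹' S) = 0 := by
    intro U
    rw [Measure.restrict_apply (measurable_prodMk_right hSm)]
    refine Set.Finite.measure_zero (Set.Finite.subset
      ((U.1.charpoly.roots.toFinset.finite_toSet).image Complex.arg) ?_) _
    rintro θ ⟨hθ, hθ2⟩
    simp only [hS, Set.mem_preimage, Set.mem_setOf_eq] at hθ
    rw [det_one_sub_smul, Multiset.prod_eq_zero_iff, Multiset.mem_map] at hθ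
    obtain ⟨l, hl, h⟩ := hθ
    refine ⟨l, by simpa using hl, ?_⟩
    have hl2 : l = Complex.exp (θ * Complex.I) := by
      have : Complex.exp (θ * Complex.I) * Complex.exp (-θ * Complex.I) = 1 := by
        rw [← Complex.exp_add]; simp
      linear_combination (-Complex.exp (θ * Complex.I)) * h - l * this
    rw [hl2, Complex.arg_exp_mul_I, toIocMod_eq_self]
    exact ⟨hθ2.1, by linarith [hθ2.2]⟩
  simp_rw [e1] at h1
  simp_rw [e2] at h2
  rw [h2] at h1
  simp at h1
  rcases h1 with h | h
  · exact h
  · exfalso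
    have := Real.pi_pos
    linarith

/-- Bad event for one angle. -/
def badSet (N : ℕ) : Set (Matrix.unitaryGroup (Fin N) ℂ) :=
  {U | (1 - U.1).det = 0} ∪ {U | ENNReal.ofReal (Real.exp (53 * Real.log N)) ≤ Fw (1/2) N U} ∪
    {U | ENNReal.ofReal (Real.exp (53 * Real.log N)) ≤ Fw (-1/2) N U}

lemma badSet_measurable (N : ℕ) : MeasurableSet (badSet N) :=
  (((detset_closed N).measurableSet.union (measurableSet_le measurable_const (Fw_measurable _ N))).union
    (measurableSet_le measurable_const (Fw_measurable _ N)))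

lemma badSet_bound (μ : (n : ℕ) → Measure (Matrix.unitaryGroup (Fin n) ℂ))
    [∀ n, IsProbabilityMeasure (μ n)] [∀ n, (μ n).IsMulLeftInvariant] (N : ℕ) (hN : 1 ≤ N) :
    μ N (badSet N) ≤ ENNReal.ofReal (2 * Real.exp 50 / N ^ 3) := by
  have hN' : (0:ℝ) < N := by exact_mod_cast hN
  have key : ∀ t : ℝ, |t| ≤ 1/2 → μ N {U | ENNReal.ofReal (Real.exp (53 * Real.log N)) ≤ Fw t N U}
      ≤ ENNReal.ofReal (Real.exp 50 / N ^ 3) := by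
    intro t ht
    have h1 := (mul_meas_ge_le_lintegral (μ := μ N) (Fw_measurable t N)
      (ENNReal.ofReal (Real.exp (53 * Real.log N)))).trans (Fw_bound t ht μ N)
    have h2 : ENNReal.ofReal (Real.exp (50 * (harmonic N : ℝ))) ≤
        ENNReal.ofReal (Real.exp (53 * Real.log N)) * ENNReal.ofReal (Real.exp 50 / N ^ 3) := by
      rw [← ENNReal.ofReal_mul (by positivity)]
      apply ENNReal.ofReal_le_ofReal
      have e : Real.exp 50 / (N:ℝ) ^ 3 = Real.exp (50 - 3 * Real.log N) := by
        rw [Real.exp_sub]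
        congr 1
        have : (3:ℝ) * Real.log N = Real.log ((N:ℝ) ^ 3) := by rw [Real.log_pow]; norm_num
        rw [this, Real.exp_log (by positivity)]
      rw [e, ← Real.exp_add]
      apply Real.exp_le_exp.2
      have := harmonic_le_one_add_log N
      linarith
    have h3 := h1.trans h2
    rwa [ENNReal.mul_le_mul_iff_right] at h3
    · simp [Real.exp_pos]
    · exact ENNReal.ofReal_ne_top
  unfold badSet
  refine (measure_union_le _ _).trans ?_
  refine (add_le_add (measure_union_le _ _) le_rfl).trans ?_
  rw [null_det, zero_add]
  refine (add_le_add (key (1/2) (by norm_num [abs_of_pos])) (key (-1/2) (by rw [abs_le]; norm_num))).trans ?_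
  rw [← ENNReal.ofReal_add (by positivity) (by positivity)]
  apply ENNReal.ofReal_le_ofReal
  apply le_of_eq
  ring

/-- Bad event for all grid angles. -/
def badAll (N : ℕ) : Set (Matrix.unitaryGroup (Fin N) ℂ) :=
  ⋃ k ∈ Finset.range N, (fun U => rot N (2 * π * k / N) * U) ⁻¹' badSet N

lemma badAll_measurable (N : ℕ) : MeasurableSet (badAll N) := by
  refine Finset.measurableSet_biUnion _ fun k _ => ?_
  exact (measurable_const_mul _) (badSet_measurable N)

lemma badAll_bound (μ : (n : ℕ) → Measure (Matrix.unitaryGroup (Fin n) ℂ))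
    [∀ n, IsProbabilityMeasure (μ n)] [∀ n, (μ n).IsMulLeftInvariant] (N : ℕ) :
    μ N (badAll N) ≤ ENNReal.ofReal (2 * Real.exp 50 * (1 / (N:ℝ) ^ 2)) := by
  rcases Nat.eq_zero_or_pos N with rfl | hN
  · simp [badAll]
  · have hN' : (0:ℝ) < N := by exact_mod_cast hN
    refine (measure_biUnion_finset_le _ _).trans ?_
    simp_rw [measure_preimage_mul]
    rw [Finset.sum_const, Finset.card_range, nsmul_eq_mul]
    refine (mul_le_mul_right (badSet_bound μ N hN) _).trans ?_
    rw [← ENNReal.ofReal_natCast, ← ENNReal.ofReal_mul (by positivity)]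
    apply ENNReal.ofReal_le_ofReal
    apply le_of_eq
    field_simp

lemma arg_one_sub_exp {ψ : ℝ} (h0 : 0 < ψ) (h1 : ψ < 2 * π) :
    Complex.arg (1 - Complex.exp (ψ * Complex.I)) = (ψ - π) / 2 := by
  have hs : 0 < 2 * Real.sin (ψ / 2) := by
    have := Real.sin_pos_of_pos_of_lt_pi (x := ψ / 2) (by linarith) (by linarith)
    linarith
  have e : 1 - Complex.exp (ψ * Complex.I) = ((2 * Real.sin (ψ / 2) : ℝ) : ℂ) *
      (Complex.cos (((ψ - π) / 2 : ℝ) : ℂ) + Complex.sin (((ψ - π) / 2 : ℝ) : ℂ) * Complex.I) := by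
    have e1 : (ψ - π) / 2 = ψ / 2 - π / 2 := by ring
    have e2 : Real.cos ψ = 1 - 2 * Real.sin (ψ/2) ^ 2 := by
      have := Real.cos_two_mul' (ψ / 2)
      have h3 := Real.sin_sq_add_cos_sq (ψ / 2)
      rw [show 2 * (ψ / 2) = ψ by ring] at this
      linarith
    have e3 : Real.sin ψ = 2 * Real.sin (ψ/2) * Real.cos (ψ/2) := by
      have := Real.sin_two_mul (ψ / 2)
      rwa [show 2 * (ψ / 2) = ψ by ring] at this
    rw [Complex.exp_mul_I, ← Complex.ofReal_cos, ← Complex.ofReal_sin, ← Complex.ofReal_cos, ← Complex.ofReal_sin,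
      e1, Real.cos_sub_pi_div_two, Real.sin_sub_pi_div_two, e2, e3]
    push_cast
    ring
  rw [e, Complex.arg_mul_cos_add_sin_mul_I hs]
  constructor <;> linarith [Real.pi_pos]

/-- Angle in `[0, 2π)`. -/
noncomputable def ang (z : ℂ) : ℝ := if 0 ≤ Complex.arg z then Complex.arg z else Complex.arg z + 2 * π

lemma ang_mem (z : ℂ) : 0 ≤ ang z ∧ ang z < 2 * π := by
  have h1 := Complex.neg_pi_lt_arg z
  have h2 := Complex.arg_le_pi z
  have := Real.pi_pos
  unfold ang
  split_ifs with h
  · exact ⟨h, by linarith⟩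
  · push Not at h
    exact ⟨by linarith, by linarith⟩

lemma ang_exp {z : ℂ} (hz : ‖z‖ = 1) : Complex.exp (ang z * Complex.I) = z := by
  have h := Complex.norm_mul_exp_arg_mul_I z
  rw [hz, Complex.ofReal_one, one_mul] at h
  unfold ang
  split_ifs with h0
  · exact h
  · push_cast
    rw [add_mul, Complex.exp_add, h, Complex.exp_two_pi_mul_I, mul_one]

open Classical in
lemma arg_diff {l : ℂ} (hl : ‖l‖ = 1) {θ : ℝ} (h0 : 0 ≤ θ) (h1 : θ < 2 * π) (hl1 : l ≠ 1)
    (hl2 : Complex.exp (-θ * Complex.I) * l ≠ 1) :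
    Complex.arg (1 - Complex.exp (-θ * Complex.I) * l) - Complex.arg (1 - l) =
      - θ / 2 + π * (if ang l ∈ Set.Icc 0 θ then 1 else 0) := by
  obtain ⟨a0, a1⟩ := ang_mem l
  have he := ang_exp hl
  set φ := ang l
  have hφ0 : 0 < φ := by
    refine lt_of_le_of_ne a0 fun h => hl1 ?_
    rw [← he, ← h]; simp
  have e1 : Complex.arg (1 - l) = (φ - π) / 2 := by rw [← he]; exact arg_one_sub_exp hφ0 a1
  have e2 : Complex.exp (-θ * Complex.I) * l = Complex.exp ((φ - θ : ℝ) * Complex.I) := by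
    rw [← he, ← Complex.exp_add]; congr 1; push_cast; ring
  have hne : φ ≠ θ := by
    intro h
    apply hl2
    rw [e2, h]; simp
  by_cases h : φ ≤ θ
  · have hlt : φ < θ := lt_of_le_of_ne h hne
    rw [if_pos ⟨a0, h⟩, e1]
    have e3 : Complex.exp (-θ * Complex.I) * l = Complex.exp ((φ - θ + 2 * π : ℝ) * Complex.I) := by
      rw [e2]; push_cast
      rw [add_mul, Complex.exp_add, Complex.exp_two_pi_mul_I, mul_one]
    rw [e3, arg_one_sub_exp (by linarith) (by linarith)]
    ring
  · push Not at h
    rw [if_neg (fun hh => absurd hh.2 (not_le.2 h)), e1, e2, arg_one_sub_exp (by linarith) (by linarith)]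
    ring

open Classical in
lemma argSum_diff (m : Multiset ℂ) {θ : ℝ} (h0 : 0 ≤ θ) (h1 : θ < 2 * π)
    (hm : ∀ l ∈ m, ‖l‖ = 1 ∧ l ≠ 1 ∧ Complex.exp (-θ * Complex.I) * l ≠ 1) :
    argSum (m.map fun l => Complex.exp (-θ * Complex.I) * l) - argSum m =
      - θ / 2 * Multiset.card m + π * (Multiset.card ((m.map ang).filter (· ∈ Set.Icc 0 θ)) : ℝ) := by
  induction m using Multiset.induction with
  | empty => simp [argSum]
  | cons a s ih =>
    have ih' := ih fun l hl => hm l (Multiset.mem_cons_of_mem hl)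
    obtain ⟨b1, b2, b3⟩ := hm a (Multiset.mem_cons_self a s)
    have hd := arg_diff b1 h0 h1 b2 b3
    simp only [argSum, Multiset.map_cons, Multiset.sum_cons, Multiset.card_cons, Multiset.filter_cons, Multiset.card_add] at ih' ⊢
    split_ifs at hd ⊢ with hc
    · simp only [Multiset.card_singleton]
      push_cast
      linarith
    · simp only [Multiset.card_zero]
      push_cast
      linarith

lemma countFun_eq (N : ℕ) (U : Matrix.unitaryGroup (Fin N) ℂ) (θ : ℝ) :
    countFun N U θ = Multiset.card ((U.1.charpoly.roots.map ang).filter (· ∈ Set.Icc 0 θ)) := by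
  unfold countFun countAngles eigenAngles
  congr!

lemma count_eq (N : ℕ) (U : Matrix.unitaryGroup (Fin N) ℂ) {θ : ℝ} (h0 : 0 ≤ θ) (h1 : θ < 2 * π)
    (hd : (1 - U.1).det ≠ 0) (hd2 : (1 - (rot N θ * U).1).det ≠ 0) :
    Lf (rot N θ * U).1 - Lf U.1 = - θ / 2 * N + π * (countFun N U θ : ℝ) := by
  have hcard : Multiset.card U.1.charpoly.roots = N := by
    rw [← (IsAlgClosed.splits U.1.charpoly).natDegree_eq_card_roots, Matrix.charpoly_natDegree_eq_dim]
    simp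
  have h := argSum_diff U.1.charpoly.roots h0 h1 ?_
  · rw [rot_mul, Lf_smul, Lf, h, hcard, countFun_eq]
  · intro l hl
    refine ⟨unitary_root_norm (ug_star_mul U) hl, (good_roots (good_of_unitary (ug_star_mul U) hd) l hl).2, ?_⟩
    refine (good_roots (good_of_unitary (ug_star_mul (rot N θ * U)) hd2) _ ?_).2
    rw [rot_mul, roots_smul]
    exact Multiset.mem_map_of_mem _ hl

lemma countFun_mono (N : ℕ) (U : Matrix.unitaryGroup (Fin N) ℂ) {a b : ℝ} (h : a ≤ b) :
    countFun N U a ≤ countFun N U b := by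
  rw [countFun_eq, countFun_eq]
  apply Multiset.card_le_card
  apply Multiset.monotone_filter_right
  intro x hx
  exact ⟨hx.1, hx.2.trans h⟩

lemma countFun_le (N : ℕ) (U : Matrix.unitaryGroup (Fin N) ℂ) (a : ℝ) :
    countFun N U a ≤ N := by
  have hcard : Multiset.card U.1.charpoly.roots = N := by
    rw [← (IsAlgClosed.splits U.1.charpoly).natDegree_eq_card_roots, Matrix.charpoly_natDegree_eq_dim]
    simp
  rw [countFun_eq]
  refine (Multiset.card_le_card (Multiset.filter_le _ _)).trans ?_
  rw [Multiset.card_map, hcard]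

lemma not_bad {N : ℕ} {U : Matrix.unitaryGroup (Fin N) ℂ} (h : U ∉ badSet N) :
    (1 - U.1).det ≠ 0 ∧ |Lf U.1| ≤ 106 * Real.log N := by
  simp only [badSet, Set.mem_union, Set.mem_setOf_eq, not_or, not_le] at h
  obtain ⟨⟨h1, h2⟩, h3⟩ := h
  refine ⟨h1, ?_⟩
  rw [Fw, if_neg h1, ENNReal.ofReal_lt_ofReal_iff (Real.exp_pos _), Real.exp_lt_exp] at h2 h3
  rw [abs_le]
  constructor <;> linarith

lemma dK_bound (N : ℕ) (hN : 3 ≤ N) (U : Matrix.unitaryGroup (Fin N) ℂ) (h : U ∉ badAll N) :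
    dK N U ≤ 213 * Real.log N / N := by
  have hN' : (0:ℝ) < N := by exact_mod_cast (by omega : 0 < N)
  have hpi := Real.pi_pos
  have hpi3 := Real.pi_gt_three
  have hlog : 1 ≤ Real.log N := by
    rw [Real.le_log_iff_exp_le hN']
    have : (3:ℝ) ≤ N := by exact_mod_cast hN
    linarith [Real.exp_one_lt_d9]
  simp only [badAll, Set.mem_iUnion, Set.mem_preimage, not_exists, Finset.mem_range] at h
  have hrot0 : rot N (2 * π * (0:ℕ) / N) * U = U := by
    apply Subtype.ext
    rw [rot_mul]; simp
  have hU0 := h 0 (by omega)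
  rw [hrot0] at hU0
  obtain ⟨d0, l0⟩ := not_bad hU0
  have grid : ∀ k : ℕ, k < N → |(countFun N U (2 * π * k / N) : ℝ) - k| ≤ 212 * Real.log N := by
    intro k hk
    obtain ⟨d1, l1⟩ := not_bad (h k hk)
    have hk' : (k:ℝ) < N := by exact_mod_cast hk
    have hc := count_eq N U (θ := 2 * π * k / N) (by positivity)
      (by rw [div_lt_iff₀ hN']; nlinarith) d0 d1
    have e : - (2 * π * k / N) / 2 * N = - (π * k) := by field_simp
    rw [e] at hc
    have hc' : (countFun N U (2 * π * k / N) : ℝ) - k = (Lf (rot N (2 * π * k / N) * U).1 - Lf U.1) / π := by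
      rw [hc]; field_simp; ring
    rw [hc', abs_div, abs_of_pos hpi, div_le_iff₀ hpi]
    have := abs_sub (Lf (rot N (2 * π * k / N) * U).1) (Lf U.1)
    nlinarith
  have : Nonempty (Set.Ico (0:ℝ) (2 * π)) := ⟨⟨0, by simp [hpi]⟩⟩
  unfold dK
  refine ciSup_le ?_
  rintro ⟨θ, hθ0, hθ1⟩
  simp only
  set x : ℝ := N * θ / (2 * π) with hx
  have hx0 : 0 ≤ x := by positivity
  have hxN : x < N := by
    rw [hx, div_lt_iff₀ (by positivity)]
    nlinarith
  have hθx : θ = 2 * π * x / N := by rw [hx]; field_simp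
  set k := ⌊x⌋₊ with hk
  have hk1 : (k:ℝ) ≤ x := Nat.floor_le hx0
  have hk2 : x < k + 1 := Nat.lt_floor_add_one x
  have hkN : k < N := by
    have : (k:ℝ) < N := by linarith
    exact_mod_cast this
  have lower : x - 1 - 212 * Real.log N ≤ countFun N U θ := by
    have h1 := (abs_le.1 (grid k hkN)).1
    have h2 : (countFun N U (2 * π * k / N) : ℝ) ≤ countFun N U θ := by
      exact_mod_cast countFun_mono N U (by rw [hθx]; gcongr)
    linarith
  have upper : (countFun N U θ : ℝ) ≤ x + 1 + 212 * Real.log N := by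
    by_cases hkk : k + 1 < N
    · have h1 := (abs_le.1 (grid (k + 1) hkk)).2
      have h2 : (countFun N U θ : ℝ) ≤ countFun N U (2 * π * (k + 1 : ℕ) / N) := by
        refine Nat.cast_le.2 (countFun_mono N U ?_)
        rw [hθx]; push_cast; gcongr
      push_cast at h1 h2
      linarith
    · have h1 : (countFun N U θ : ℝ) ≤ N := by exact_mod_cast countFun_le N U θ
      have h2 : (N:ℝ) ≤ k + 1 := by exact_mod_cast (by omega : N ≤ k + 1)
      linarith
  have e : (countFun N U θ : ℝ) / N - θ / (2 * π) = (countFun N U θ - x) / N := by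
    rw [hx]; field_simp
  rw [e, abs_div, abs_of_pos hN']
  apply div_le_div_of_nonneg_right _ hN'.le
  rw [abs_le]
  constructor <;> linarith
end

/-- There is a universal constant `c₃ > 0` such that if, for each `N`, `U N` is a Haar-distributed
random `N × N` unitary matrix (all on a common probability space), then almost surely
`d_K(μ_N, ν) ≤ c₃ log N / N` for all sufficiently large `N`. -/
theorem almost_sure_kolmogorov_upper_bound :
    ∃ c₃ : ℝ, 0 < c₃ ∧
      ∀ (Ω : Type) [MeasureSpace Ω],
        IsProbabilityMeasure (volume : Measure Ω) →
        ∀ U : (N : ℕ) → Ω → Matrix.unitaryGroup (Fin N) ℂ,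
          (∀ N, Measurable (U N)) →
          (∀ N, IsProbabilityMeasure (Measure.map (U N) volume) ∧
            (Measure.map (U N) volume).IsHaarMeasure) →
          ∀ᵐ ω, ∀ᶠ N : ℕ in atTop, dK N (U N ω) ≤ c₃ * Real.log N / N := by
  refine ⟨213, by norm_num, ?_⟩
  intro Ω _ hΩ U hUm hU
  have inst1 : ∀ N, IsProbabilityMeasure (Measure.map (U N) volume) := fun N => (hU N).1
  have inst2 : ∀ N, (Measure.map (U N) volume).IsMulLeftInvariant := fun N => (hU N).2.toIsMulLeftInvariant
  have hsum : ∑' N, (volume : Measure Ω) (U N ⁻¹' badAll N) ≠ ⊤ := by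
    have hle : ∑' N, (volume : Measure Ω) (U N ⁻¹' badAll N) ≤
        ∑' N : ℕ, ENNReal.ofReal (2 * Real.exp 50 * (1 / (N:ℝ) ^ 2)) := by
      refine ENNReal.tsum_le_tsum fun N => ?_
      rw [← Measure.map_apply (hUm N) (badAll_measurable N)]
      exact badAll_bound (fun n => Measure.map (U n) volume) N
    refine ne_top_of_le_ne_top ?_ hle
    have hs : Summable fun N : ℕ => 2 * Real.exp 50 * (1 / (N:ℝ) ^ 2) :=
      (Real.summable_one_div_nat_pow.2 (by norm_num)).mul_left _
    exact hs.tsum_ofReal_ne_top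
  filter_upwards [ae_eventually_notMem hsum] with ω hω
  filter_upwards [hω, eventually_ge_atTop 3] with N hN h3
  exact dK_bound N h3 (U N ω) hN
end

section
/- Let U be an N × N random unitary matrix distributed according to Haar measure on U(N). The eigenvalue angle process of U is negatively associated in the following sense: if A, B ⊆ [0, 2π] are disjoint Borel sets, then for all real s, t, P[𝒩_A ≥ s and 𝒩_B ≥ t] ≤ P[𝒩_A ≥ s] · P[𝒩_B ≥ t]. -/
open MeasureTheory Real Filter

namespace NegAssoc
noncomputable section

instance : MeasurableSpace Circle := borel _
instance : BorelSpace Circle := ⟨rfl⟩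

instance : SecondCountableTopology Circle :=
  inferInstanceAs (SecondCountableTopology (Submonoid.unitSphere ℂ))

instance (N : ℕ) : SecondCountableTopology (Matrix.unitaryGroup (Fin N) ℂ) := by
  have : SecondCountableTopology (Matrix (Fin N) (Fin N) ℂ) :=
    inferInstanceAs (SecondCountableTopology (Fin N → Fin N → ℂ))
  exact TopologicalSpace.Subtype.secondCountableTopology _

instance (N : ℕ) : CompactSpace (Matrix.unitaryGroup (Fin N) ℂ) := by
  apply isCompact_iff_compactSpace.mp
  have hK : IsCompact (Set.pi Set.univ (fun _ : Fin N => Set.pi Set.univ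
      (fun _ : Fin N => Metric.closedBall (0:ℂ) 1))) :=
    isCompact_univ_pi fun _ => isCompact_univ_pi fun _ => isCompact_closedBall _ _
  refine IsCompact.of_isClosed_subset (X := Matrix (Fin N) (Fin N) ℂ) hK ?_ ?_
  · have : ((Matrix.unitaryGroup (Fin N) ℂ : Submonoid _) : Set (Matrix (Fin N) (Fin N) ℂ))
        = {A | A * star A = 1} := by
      ext A
      simp [Matrix.mem_unitaryGroup_iff]
    change IsClosed ((Matrix.unitaryGroup (Fin N) ℂ : Submonoid _) : Set (Matrix (Fin N) (Fin N) ℂ))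
    rw [this]
    exact isClosed_eq (by fun_prop) continuous_const
  · intro A hA i _ j _
    simpa using entry_norm_bound_of_unitary hA i j

/-- Normalised Haar measure on the circle. -/
def haarC : Measure Circle := Measure.haarMeasure ⊤

instance : haarC.IsHaarMeasure := by unfold haarC; infer_instance
instance : IsProbabilityMeasure haarC :=
  ⟨by unfold haarC; simpa using! Measure.haarMeasure_self (G := Circle) (K₀ := ⊤)⟩

/-- The phase space: unitary matrices and diagonal matrices. -/
abbrev XX (N : ℕ) := (Matrix.unitaryGroup (Fin N) ℂ) × (Fin N → Circle)

/-- The reference measure. -/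
def nuM {N : ℕ} (P : Measure (Matrix.unitaryGroup (Fin N) ℂ)) : Measure (XX N) :=
  P.prod (Measure.pi fun _ => haarC)

instance {N : ℕ} (P : Measure (Matrix.unitaryGroup (Fin N) ℂ)) [P.IsHaarMeasure]
    [IsProbabilityMeasure P] : (nuM P).IsHaarMeasure := by
  unfold nuM; infer_instance

instance {N : ℕ} (P : Measure (Matrix.unitaryGroup (Fin N) ℂ)) 
    [IsProbabilityMeasure P] : IsProbabilityMeasure (nuM P) := by
  unfold nuM; infer_instance

theorem integrable_of_continuous {X E : Type*} [TopologicalSpace X] [CompactSpace X]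
    [MeasurableSpace X] [BorelSpace X] [SecondCountableTopology X] (ν : Measure X)
    [NormedAddCommGroup E]
    [IsFiniteMeasure ν] {f : X → E} (hf : Continuous f) : Integrable f ν := by
  obtain ⟨C, hC⟩ := isCompact_univ.exists_bound_of_continuousOn hf.continuousOn
  exact Integrable.of_bound hf.aestronglyMeasurable C
    (Eventually.of_forall fun x => hC x trivial)

theorem hasDerivAt_int {X : Type*} [TopologicalSpace X] [CompactSpace X]
    [MeasurableSpace X] [BorelSpace X] [SecondCountableTopology X] (ν : Measure X) [IsFiniteMeasure ν]
    (Φ Φ' : ℝ → X → ℂ) (hΦ : ∀ t, Continuous (Φ t)) (hΦ' : Continuous (Function.uncurry Φ'))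
    (hd : ∀ t x, HasDerivAt (fun s => Φ s x) (Φ' t x) t) (t₀ : ℝ) :
    HasDerivAt (fun t => ∫ x, Φ t x ∂ν) (∫ x, Φ' t₀ x ∂ν) t₀ := by
  have hK : IsCompact ((Metric.closedBall t₀ 1) ×ˢ (Set.univ : Set X)) :=
    (isCompact_closedBall _ _).prod isCompact_univ
  obtain ⟨C, hC⟩ := hK.exists_bound_of_continuousOn hΦ'.continuousOn
  refine (hasDerivAt_integral_of_dominated_loc_of_deriv_le (s := Metric.closedBall t₀ 1)
    (bound := fun _ => C) (Metric.closedBall_mem_nhds _ one_pos) ?_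
    (integrable_of_continuous ν (hΦ t₀)) ?_ ?_ (integrable_const _) ?_).2
  · exact Eventually.of_forall fun t => (integrable_of_continuous ν (hΦ t)).1
  · exact (integrable_of_continuous ν
      (hΦ'.comp (Continuous.prodMk_right t₀))).1
  · exact Eventually.of_forall fun x t ht => hC (t, x) ⟨ht, trivial⟩
  · exact Eventually.of_forall fun x t ht => hd t x

theorem ibp {X : Type*} [TopologicalSpace X] [CompactSpace X] [Group X] [IsTopologicalGroup X]
    [MeasurableSpace X] [BorelSpace X] [SecondCountableTopology X] (ν : Measure X)
    [IsFiniteMeasure ν] [ν.IsMulLeftInvariant]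
    (g : ℝ → X) (hg : Continuous g) (H H1 : X → ℂ) (hH : Continuous H) (hH1 : Continuous H1)
    (hd : ∀ t x, HasDerivAt (fun s => H (g s * x)) (H1 (g t * x)) t) :
    ∫ x, H1 x ∂ν = 0 := by
  have h1 := hasDerivAt_int ν (fun t x => H (g t * x)) (fun t x => H1 (g t * x))
    (fun t => by fun_prop) (by simp only [Function.uncurry_def]; fun_prop) hd 0
  simp only [integral_mul_left_eq_self] at h1
  exact h1.unique (hasDerivAt_const _ _)

/-- entrywise derivative -/
def MD {n : Type*} (A : ℝ → Matrix n n ℂ) (A' : Matrix n n ℂ) (t : ℝ) : Prop :=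
  ∀ i j, HasDerivAt (fun s => A s i j) (A' i j) t

theorem MD.mul {n : Type*} [Fintype n] {A B : ℝ → Matrix n n ℂ} {A' B' : Matrix n n ℂ} {t : ℝ}
    (hA : MD A A' t) (hB : MD B B' t) : MD (fun s => A s * B s) (A' * B t + A t * B') t := by
  intro i j
  simp only [Matrix.mul_apply, Matrix.add_apply]
  rw [← Finset.sum_add_distrib]
  exact HasDerivAt.fun_sum fun k _ => (hA i k).mul (hB k j)

theorem MD.const {n : Type*} (A : Matrix n n ℂ) (t : ℝ) : MD (fun _ => A) 0 t :=
  fun _ _ => hasDerivAt_const _ _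

theorem MD.conjTranspose {n : Type*} {A : ℝ → Matrix n n ℂ} {A' : Matrix n n ℂ} {t : ℝ}
    (hA : MD A A' t) : MD (fun s => (A s).conjTranspose) A'.conjTranspose t := by
  intro i j
  exact (hA j i).star

open Matrix in
/-- derivative of a conjugation -/
theorem MD.conj {n : Type*} [Fintype n] {A : ℝ → Matrix n n ℂ} {Y C : Matrix n n ℂ} {t : ℝ}
    (hY : Yᴴ = -Y) (hA : MD A (Y * A t) t) :
    MD (fun s => A s * C * (A s)ᴴ) (Y * (A t * C * (A t)ᴴ) - (A t * C * (A t)ᴴ) * Y) t := by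
  have h := (hA.mul (MD.const C t)).mul hA.conjTranspose
  convert h using 1
  rw [conjTranspose_mul, hY]
  simp only [Matrix.mul_assoc, Matrix.mul_neg, Matrix.mul_zero, add_zero, sub_eq_add_neg]

end
end NegAssoc

namespace NegAssoc
noncomputable section
open Matrix ComplexConjugate

variable {N : ℕ}

/-- A one-parameter family of unitary matrices with generator `Y`. -/
structure OneParam (g : ℝ → Matrix.unitaryGroup (Fin N) ℂ) (Y : Matrix (Fin N) (Fin N) ℂ) : Prop where
  cont : Continuous g
  skew : Yᴴ = -Y
  der : ∀ t, MD (fun s => (g s : Matrix (Fin N) (Fin N) ℂ)) (Y * (g t : Matrix (Fin N) (Fin N) ℂ)) t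
  zero : g 0 = 1

theorem MD.right {n : Type*} [Fintype n] {A : ℝ → Matrix n n ℂ} {Y B : Matrix n n ℂ} {t : ℝ}
    (hA : MD A (Y * A t) t) : MD (fun s => A s * B) (Y * (A t * B)) t := by
  have := hA.mul (MD.const B t)
  simpa [Matrix.mul_assoc] using this

theorem exists_reflection (P : Matrix (Fin N) (Fin N) ℂ) (h1 : Pᴴ = P) (h2 : P * P = P) :
    ∃ g, OneParam g (Complex.I • P) := by
  have hu : ∀ t : ℝ, (1 + (Complex.exp (t * Complex.I) - 1) • P) ∈ Matrix.unitaryGroup (Fin N) ℂ := by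
    intro t
    rw [Matrix.mem_unitaryGroup_iff, star_eq_conjTranspose]
    simp only [conjTranspose_add, conjTranspose_one, conjTranspose_smul, h1]
    have hc : (Complex.exp (t * Complex.I) - 1) + star (Complex.exp (t * Complex.I) - 1)
        + (Complex.exp (t * Complex.I) - 1) * star (Complex.exp (t * Complex.I) - 1) = 0 := by
      have : Complex.exp (t * Complex.I) * star (Complex.exp (t * Complex.I)) = 1 := by
        rw [Complex.star_def, ← Complex.exp_conj, ← Complex.exp_add]
        simp
      simp only [star_sub, star_one]
      linear_combination this
    generalize Complex.exp (t * Complex.I) - 1 = c at hc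
    have : (1 + c • P) * (1 + star c • P) = 1 + (c + star c + c * star c) • P := by
      simp only [add_mul, mul_add, one_mul, mul_one, smul_mul_assoc, mul_smul_comm, h2]
      module
    rw [this, hc]
    simp
  refine ⟨fun t => ⟨_, hu t⟩, ?_, ?_, ?_, ?_⟩
  · refine Continuous.subtype_mk ?_ _
    fun_prop
  · rw [conjTranspose_smul, h1]; simp
  · intro t i j
    have hb : HasDerivAt (fun s : ℝ => Complex.exp (s * Complex.I))
        (Complex.exp (t * Complex.I) * Complex.I) t := by
      have h := (Complex.ofRealCLM.hasDerivAt (x := t)).mul_const Complex.I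
      simpa using h.cexp
    have := ((hb.sub_const 1).mul_const (P i j)).const_add ((1 : Matrix (Fin N) (Fin N) ℂ) i j)
    refine HasDerivAt.congr_deriv this ?_
    simp only [mul_add, mul_one, smul_mul_assoc, mul_smul_comm, h2, Matrix.add_apply, Matrix.smul_apply, smul_eq_mul]
    ring
  · ext1; simp

/-- `V C V*`. -/
def KK (C : Matrix (Fin N) (Fin N) ℂ) (x : XX N) : Matrix (Fin N) (Fin N) ℂ :=
  (x.1 : Matrix (Fin N) (Fin N) ℂ) * C * (x.1 : Matrix (Fin N) (Fin N) ℂ)ᴴ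

/-- The real linear functional `Re tr (C V* D V)`. -/
def Lf (C : Matrix (Fin N) (Fin N) ℂ) (x : XX N) : ℂ :=
  (1/2) * ∑ p, ((x.2 p : ℂ) * KK C x p p + conj (x.2 p : ℂ) * KK Cᴴ x p p)

/-- exponential test function -/
def ee (C : Matrix (Fin N) (Fin N) ℂ) (x : XX N) : ℂ := Complex.exp (Complex.I * Lf C x)

/-- Weyl density with the factor `(i,j)` removed. -/
def Rr (q : Fin N × Fin N) (d : Fin N → Circle) : ℂ :=
  ∏ r ∈ (Finset.univ : Finset (Fin N)).offDiag.erase q, (1 - (d r.1 : ℂ) * conj (d r.2 : ℂ))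

/-- Weyl density. -/
def Ww (d : Fin N → Circle) : ℂ :=
  ∏ r ∈ (Finset.univ : Finset (Fin N)).offDiag, (1 - (d r.1 : ℂ) * conj (d r.2 : ℂ))

theorem Ww_eq {i j : Fin N} (h : i ≠ j) (d : Fin N → Circle) :
    Ww d = (1 - (d i : ℂ) * conj (d j : ℂ)) * Rr (i, j) d := by
  unfold Ww Rr
  rw [Finset.mul_prod_erase _ (fun r : Fin N × Fin N => (1 - (d r.1 : ℂ) * conj (d r.2 : ℂ))) (a := (i, j))]
  simp [h]

@[fun_prop]
theorem continuous_KK (C : Matrix (Fin N) (Fin N) ℂ) : Continuous (KK C) := by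
  unfold KK; fun_prop

@[fun_prop]
theorem continuous_KK_apply (C : Matrix (Fin N) (Fin N) ℂ) (i j : Fin N) :
    Continuous (fun x => KK C x i j) := (continuous_KK C).matrix_elem i j

@[fun_prop]
theorem continuous_Lf (C : Matrix (Fin N) (Fin N) ℂ) : Continuous (Lf C) := by
  unfold Lf; fun_prop

@[fun_prop]
theorem continuous_ee (C : Matrix (Fin N) (Fin N) ℂ) : Continuous (ee C) := by
  unfold ee; fun_prop

@[fun_prop]
theorem continuous_Rr (q : Fin N × Fin N) : Continuous (Rr (N := N) q) := by
  unfold Rr; fun_prop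

@[fun_prop]
theorem continuous_Ww : Continuous (Ww (N := N)) := by
  unfold Ww; fun_prop

/-- The derivative appearing in the integration by parts on the unitary group. -/
def H1 (C X : Matrix (Fin N) (Fin N) ℂ) (i j : Fin N) (Y : Matrix (Fin N) (Fin N) ℂ) (x : XX N) : ℂ :=
  Rr (i, j) x.2 * (((Y * KK X x - KK X x * Y) i j) + KK X x i j * (Complex.I * ((1/2) *
    ∑ p, ((x.2 p : ℂ) * (Y * KK C x - KK C x * Y) p p
      + conj (x.2 p : ℂ) * (Y * KK Cᴴ x - KK Cᴴ x * Y) p p)))) * ee C x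

@[fun_prop]
theorem continuous_H1 (C X : Matrix (Fin N) (Fin N) ℂ) (i j : Fin N) (Y : Matrix (Fin N) (Fin N) ℂ) :
    Continuous (H1 C X i j Y) := by
  have h : ∀ C : Matrix (Fin N) (Fin N) ℂ, ∀ p q, Continuous fun x => (Y * KK C x - KK C x * Y) p q :=
    fun C p q => Continuous.matrix_elem (by fun_prop) p q
  unfold H1
  fun_prop

theorem integral_H1_oneParam (P : Measure (Matrix.unitaryGroup (Fin N) ℂ)) [P.IsHaarMeasure]
    [IsProbabilityMeasure P] (C X : Matrix (Fin N) (Fin N) ℂ) (i j : Fin N)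
    {g : ℝ → Matrix.unitaryGroup (Fin N) ℂ} {Y : Matrix (Fin N) (Fin N) ℂ} (hg : OneParam g Y) :
    ∫ x, H1 C X i j Y x ∂(nuM P) = 0 := by
  refine ibp (nuM P) (fun t => (g t, 1)) (hg.cont.prodMk continuous_const)
    (fun x => Rr (i, j) x.2 * KK X x i j * ee C x) _ (by fun_prop) (by fun_prop) ?_
  intro t x
  have hK : ∀ C, MD (fun s => KK C ((g s, 1) * x))
      (Y * KK C ((g t, 1) * x) - KK C ((g t, 1) * x) * Y) t := by
    intro C
    exact MD.conj hg.skew (hg.der t).right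
  have hL : HasDerivAt (fun s => Lf C ((g s, 1) * x)) _ t :=
    (HasDerivAt.fun_sum fun p (_ : p ∈ Finset.univ) => ((hK C p p).const_mul ((x.2 p : ℂ))).add
      ((hK Cᴴ p p).const_mul (conj (x.2 p : ℂ)))).const_mul (1/2) |>.congr_of_eventuallyEq
      (Eventually.of_forall fun s => by simp [Lf])
  have hE : HasDerivAt (fun s => ee C ((g s, 1) * x)) _ t := (hL.const_mul Complex.I).cexp
  have := ((hK X i j).const_mul (Rr (i, j) x.2)).mul hE
  simp only [Prod.snd_mul, one_mul]
  refine HasDerivAt.congr_deriv this ?_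
  simp only [H1, ee, Prod.snd_mul, one_mul]
  ring

theorem H1_add (C X : Matrix (Fin N) (Fin N) ℂ) (i j : Fin N) (Y Y' : Matrix (Fin N) (Fin N) ℂ)
    (x : XX N) : H1 C X i j (Y + Y') x = H1 C X i j Y x + H1 C X i j Y' x := by
  have h : ∀ M : Matrix (Fin N) (Fin N) ℂ, (Y + Y') * M - M * (Y + Y') =
    (Y * M - M * Y) + (Y' * M - M * Y') := by intro M; noncomm_ring
  simp only [H1, h]
  simp only [Matrix.add_apply, mul_add, Finset.sum_add_distrib]
  ring

theorem H1_smul (C X : Matrix (Fin N) (Fin N) ℂ) (i j : Fin N) (c : ℂ) (Y : Matrix (Fin N) (Fin N) ℂ)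
    (x : XX N) : H1 C X i j (c • Y) x = c * H1 C X i j Y x := by
  have h : ∀ M : Matrix (Fin N) (Fin N) ℂ, (c • Y) * M - M * (c • Y) =
    c • (Y * M - M * Y) := by intro M; simp [smul_sub]
  have h2 : ∀ p, (x.2 p : ℂ) * (c • (Y * KK C x - KK C x * Y)) p p
      + conj (x.2 p : ℂ) * (c • (Y * KK Cᴴ x - KK Cᴴ x * Y)) p p = 
      c * ((x.2 p : ℂ) * (Y * KK C x - KK C x * Y) p p
      + conj (x.2 p : ℂ) * (Y * KK Cᴴ x - KK Cᴴ x * Y) p p) := by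
    intro p; simp only [Matrix.smul_apply, smul_eq_mul]; ring
  simp only [H1, h, h2, ← Finset.mul_sum]
  simp only [Matrix.smul_apply, smul_eq_mul]
  ring

/-- rank one projection onto `(e_i + α e_j)/√2` -/
def Pa (i j : Fin N) (α : ℂ) : Matrix (Fin N) (Fin N) ℂ :=
  (1/2 : ℂ) • (single i i 1 + single j j 1 + conj α • single i j 1 + α • single j i 1)

theorem integral_H1_single (P : Measure (Matrix.unitaryGroup (Fin N) ℂ)) [P.IsHaarMeasure]
    [IsProbabilityMeasure P] (C X : Matrix (Fin N) (Fin N) ℂ) (i j : Fin N) (hij : i ≠ j) :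
    ∫ x, H1 C X i j (single i j 1) x ∂(nuM P) = 0 := by
  have key : ∀ α : ℂ, α * conj α = 1 → ∫ x, H1 C X i j (Pa i j α) x ∂(nuM P) = 0 := by
    intro α hα
    obtain ⟨g, hg⟩ := exists_reflection (Pa i j α) (by
      simp only [Pa, conjTranspose_smul, conjTranspose_add, conjTranspose_single]
      simp only [star_one, Complex.star_def, Complex.conj_conj, map_div₀, map_one, map_ofNat]
      congr 1
      abel) (by
      simp only [Pa, smul_mul_assoc, mul_smul_comm, smul_add, mul_add, add_mul, smul_smul,
        single_mul_single_same, single_mul_single_of_ne _ _ _ _ hij, single_mul_single_of_ne _ _ _ _ hij.symm]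
      ext a b
      simp only [Matrix.add_apply, Matrix.smul_apply, smul_eq_mul, mul_one, Matrix.zero_apply, mul_zero]
      linear_combination (1/4 * (single i i (1:ℂ) a b + single j j (1:ℂ) a b)) * hα)
    have := integral_H1_oneParam P C X i j hg
    simp only [H1_smul, integral_const_mul] at this
    simpa using this
  have hInt : ∀ Y, Integrable (H1 C X i j Y) (nuM P) := fun Y =>
    integrable_of_continuous _ (by fun_prop)
  have hdec : single i j (1:ℂ) = (1/2 : ℂ) • (Pa i j 1) + ((-1/2 : ℂ) • Pa i j (-1) +
      ((Complex.I/2) • Pa i j Complex.I + (-Complex.I/2) • Pa i j (-Complex.I))) := by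
    ext a b
    simp only [Pa, Matrix.add_apply, Matrix.smul_apply, smul_eq_mul, map_neg, map_one, Complex.conj_I]
    ring_nf
    simp only [Complex.I_sq]
    ring
  rw [hdec]
  simp only [H1_add, H1_smul]
  rw [integral_add ((hInt _).const_mul _), integral_add ((hInt _).const_mul _),
    integral_add ((hInt _).const_mul _) ((hInt _).const_mul _)]
  · simp only [integral_const_mul]
    rw [key 1 (by simp), key (-1) (by simp), key Complex.I (by simp), key (-Complex.I) (by simp)]
    simp
  · exact ((hInt _).const_mul _).add ((hInt _).const_mul _)
  · exact ((hInt _).const_mul _).add (((hInt _).const_mul _).add ((hInt _).const_mul _))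

end
end NegAssoc

namespace NegAssoc
noncomputable section
open Matrix ComplexConjugate

variable {N : ℕ}

/-- derivative of the Weyl density in direction `p`. -/
def dWw (p : Fin N) (d : Fin N → Circle) : ℂ :=
  ∑ r ∈ (Finset.univ : Finset (Fin N)).offDiag, Rr r d *
    (-((if r.1 = p then Complex.I * (d r.1 : ℂ) else 0) * conj (d r.2 : ℂ) +
      (d r.1 : ℂ) * (if r.2 = p then -Complex.I * conj (d r.2 : ℂ) else 0)))

@[fun_prop]
theorem continuous_dWw (p : Fin N) : Continuous (dWw p) := by
  unfold dWw
  refine continuous_finsetSum _ fun r _ => ?_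
  split_ifs <;> fun_prop

/-- The derivative in the torus integration by parts. -/
def H2 (C X : Matrix (Fin N) (Fin N) ℂ) (p : Fin N) (x : XX N) : ℂ :=
  KK X x p p * (Complex.I * ((1/2) * (Complex.I * (x.2 p : ℂ) * KK C x p p
    - Complex.I * conj (x.2 p : ℂ) * KK Cᴴ x p p)) * Ww x.2 + dWw p x.2) * ee C x

theorem continuous_H2 (C X : Matrix (Fin N) (Fin N) ℂ) (p : Fin N) : Continuous (H2 C X p) := by
  unfold H2
  fun_prop

theorem KK_torus (C : Matrix (Fin N) (Fin N) ℂ) (e : Fin N → Circle) (x : XX N) :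
    KK C ((1, e) * x) = KK C x := by
  simp [KK]

theorem integral_H2 (P : Measure (Matrix.unitaryGroup (Fin N) ℂ)) [P.IsHaarMeasure]
    [IsProbabilityMeasure P] (C X : Matrix (Fin N) (Fin N) ℂ) (p : Fin N) :
    ∫ x, H2 C X p x ∂(nuM P) = 0 := by
  refine ibp (nuM P) (fun t => (1, Pi.mulSingle p (Circle.exp t))) 
    (continuous_const.prodMk ((continuous_mulSingle p).comp Circle.exp.continuous))
    (fun x => KK X x p p * (Ww x.2 * ee C x)) _ (by fun_prop) (continuous_H2 C X p) ?_
  intro t x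
  set y : ℝ → XX N := fun s => ((1, Pi.mulSingle p (Circle.exp s)) : XX N) * x with hy
  have hK : ∀ C s, KK C (y s) = KK C x := fun C s => KK_torus _ _ _
  have hd : ∀ q, HasDerivAt (fun s => ((y s).2 q : ℂ)) 
      (if q = p then Complex.I * ((y t).2 q : ℂ) else 0) t := by
    intro q
    by_cases hq : q = p
    · subst hq
      simp only [hy, Prod.snd_mul, Pi.mul_apply, Pi.mulSingle_eq_same, Circle.coe_mul, Circle.coe_exp, if_true]
      have hb : HasDerivAt (fun s : ℝ => Complex.exp (s * Complex.I))
          (Complex.exp (t * Complex.I) * Complex.I) t := by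
        have h := (Complex.ofRealCLM.hasDerivAt (x := t)).mul_const Complex.I
        simpa using h.cexp
      exact (hb.mul_const _).congr_deriv (by ring)
    · simp only [hy, Prod.snd_mul, Pi.mul_apply, Pi.mulSingle_eq_of_ne hq, one_mul, if_neg hq]
      exact hasDerivAt_const _ _
  have hc : ∀ q, HasDerivAt (fun s => conj ((y s).2 q : ℂ)) 
      (if q = p then -Complex.I * conj ((y t).2 q : ℂ) else 0) t := by
    intro q
    refine (hd q).star.congr_deriv ?_
    split_ifs <;> simp
  have hL : HasDerivAt (fun s => Lf C (y s)) ((1/2) * (Complex.I * ((y t).2 p : ℂ) * KK C (y t) p p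
    - Complex.I * conj ((y t).2 p : ℂ) * KK Cᴴ (y t) p p)) t := by
    have := (HasDerivAt.fun_sum fun q (_ : q ∈ Finset.univ) => ((hd q).mul_const (KK C x q q)).add
      ((hc q).mul_const (KK Cᴴ x q q))).const_mul (1/2)
    simp only [Lf, hK]
    refine this.congr_deriv ?_
    simp only [ite_mul, zero_mul, Finset.sum_add_distrib, Finset.sum_ite_eq', Finset.mem_univ, if_true]
    ring
  have hE : HasDerivAt (fun s => ee C (y s)) _ t := (hL.const_mul Complex.I).cexp
  have hW : HasDerivAt (fun s => Ww (y s).2) (dWw p (y t).2) t := by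
    have := HasDerivAt.fun_finsetProd (u := (Finset.univ : Finset (Fin N)).offDiag)
      (f := fun r s => (1 - ((y s).2 r.1 : ℂ) * conj ((y s).2 r.2 : ℂ)))
      fun r _ => (((hd r.1).mul (hc r.2)).const_sub 1)
    exact this
  have := (hW.mul hE).const_mul (KK X x p p)
  refine HasDerivAt.congr_of_eventuallyEq (this.congr_deriv ?_)
    (Eventually.of_forall fun s => by simp only [← hK X s, hy]; rfl)
  have e1 : (((1, Pi.mulSingle p (Circle.exp t)) : XX N) * x) = y t := rfl
  rw [e1]
  simp only [H2, ee, hK]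
  ring

/-- The infinitesimal variation of the test function under left translation. -/
def SS (C X : Matrix (Fin N) (Fin N) ℂ) (x : XX N) : ℂ :=
  ((1/2) * ∑ i, ∑ j, KK X x i j * ((x.2 j : ℂ) * KK C x j i - conj (x.2 i : ℂ) * KK Cᴴ x j i)) *
    ee C x * Ww x.2

theorem circ_mul_conj (z : Circle) : (z : ℂ) * conj (z : ℂ) = 1 := by
  rw [Complex.mul_conj]; simp

theorem bracket (d : Fin N → Circle) (X : Fin N → ℂ) :
    ∑ r ∈ (Finset.univ : Finset (Fin N)).offDiag, Rr r d * (X r.2 - X r.1) +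
      ∑ p, X p * (Complex.I * dWw p d) = 0 := by
  have h1 : ∑ p, X p * (Complex.I * dWw p d) = ∑ r ∈ (Finset.univ : Finset (Fin N)).offDiag,
      Rr r d * ((d r.1 : ℂ) * conj (d r.2 : ℂ)) * (X r.1 - X r.2) := by
    simp only [dWw, Finset.mul_sum]
    rw [Finset.sum_comm]
    refine Finset.sum_congr rfl fun r _ => ?_
    have : ∀ p, X p * (Complex.I * (Rr r d * (-((if r.1 = p then Complex.I * (d r.1 : ℂ) else 0) * conj (d r.2 : ℂ) +
      (d r.1 : ℂ) * (if r.2 = p then -Complex.I * conj (d r.2 : ℂ) else 0))))) = 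
      (if r.1 = p then X p * (Rr r d * ((d r.1 : ℂ) * conj (d r.2 : ℂ))) else 0) - 
      (if r.2 = p then X p * (Rr r d * ((d r.1 : ℂ) * conj (d r.2 : ℂ))) else 0) := by
      intro p
      by_cases h1 : r.1 = p <;> by_cases h2 : r.2 = p <;> simp only [h1, h2, if_true, if_false]
      · ring
      · linear_combination (-(X p * Rr r d * (d p : ℂ) * conj (d r.2 : ℂ))) * Complex.I_sq
      · linear_combination (X p * Rr r d * (d r.1 : ℂ) * conj (d p : ℂ)) * Complex.I_sq
      · ring
    rw [Finset.sum_congr rfl fun p _ => this p, Finset.sum_sub_distrib, Finset.sum_ite_eq,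
      Finset.sum_ite_eq]
    simp only [Finset.mem_univ, if_true]
    ring
  rw [h1, ← Finset.sum_add_distrib]
  have h2 : ∀ r ∈ (Finset.univ : Finset (Fin N)).offDiag, Rr r d * (X r.2 - X r.1) +
      Rr r d * ((d r.1 : ℂ) * conj (d r.2 : ℂ)) * (X r.1 - X r.2) = Ww d * X r.2 - Ww d * X r.1 := by
    intro r hr
    rw [Ww_eq (i := r.1) (j := r.2) (by simpa using hr)]
    ring
  rw [Finset.sum_congr rfl h2, Finset.sum_sub_distrib, sub_eq_zero]
  refine Finset.sum_nbij' Prod.swap Prod.swap ?_ ?_ ?_ ?_ ?_ <;> simp [eq_comm]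

theorem H1_single_eq (C X : Matrix (Fin N) (Fin N) ℂ) (x : XX N) {i j : Fin N} (hij : i ≠ j) :
    H1 C X i j (single i j 1) x = (Rr (i, j) x.2 * (KK X x j j - KK X x i i)
      - Complex.I * ((1/2) * (KK X x i j * ((x.2 j : ℂ) * KK C x j i - conj (x.2 i : ℂ) * KK Cᴴ x j i)))
        * Ww x.2) * ee C x := by
  have hs : ∀ (M : Matrix (Fin N) (Fin N) ℂ) p, (single i j 1 * M - M * single i j 1 : Matrix (Fin N) (Fin N) ℂ) p p = 
      (if p = i then M j i else 0) - (if p = j then M j i else 0) := by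
    intro M p
    rw [Matrix.sub_apply]
    congr 1
    · split_ifs with h
      · subst h; simp
      · simp [Matrix.single_mul_apply_of_ne, h]
    · split_ifs with h
      · subst h; simp
      · simp [Matrix.mul_single_apply_of_ne, h]
  have hX : (single i j 1 * KK X x - KK X x * single i j 1 : Matrix (Fin N) (Fin N) ℂ) i j = KK X x j j - KK X x i i := by
    simp
  have hsum : ∑ p, ((x.2 p : ℂ) * (single i j 1 * KK C x - KK C x * single i j 1 : Matrix (Fin N) (Fin N) ℂ) p p
      + conj (x.2 p : ℂ) * (single i j 1 * KK Cᴴ x - KK Cᴴ x * single i j 1 : Matrix (Fin N) (Fin N) ℂ) p p) = 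
      ((x.2 i : ℂ) - x.2 j) * KK C x j i + (conj (x.2 i : ℂ) - conj (x.2 j : ℂ)) * KK Cᴴ x j i := by
    simp only [hs, mul_sub, mul_ite, mul_zero, Finset.sum_add_distrib, Finset.sum_sub_distrib, Finset.sum_ite_eq',
      Finset.mem_univ, if_true]
    ring
  unfold H1
  rw [hX, hsum, Ww_eq hij]
  have hi := circ_mul_conj (x.2 i)
  have hj := circ_mul_conj (x.2 j)
  generalize (x.2 i : ℂ) = a at *
  generalize (x.2 j : ℂ) = b at *
  linear_combination (Rr (i, j) x.2 * KK X x i j * Complex.I * (1/2) * ee C x) * 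
    (- a * KK C x j i * hj + conj b * KK Cᴴ x j i * hi)

theorem integral_SS (P : Measure (Matrix.unitaryGroup (Fin N) ℂ)) [P.IsHaarMeasure]
    [IsProbabilityMeasure P] (C X : Matrix (Fin N) (Fin N) ℂ) :
    ∫ x, SS C X x ∂(nuM P) = 0 := by
  have hp : ∀ x, -Complex.I * SS C X x = ∑ r ∈ (Finset.univ : Finset (Fin N)).offDiag,
      H1 C X r.1 r.2 (single r.1 r.2 1) x + ∑ p, Complex.I * H2 C X p x := by
    intro x
    have hb := bracket x.2 (fun p => KK X x p p)
    have h1 : ∑ r ∈ (Finset.univ : Finset (Fin N)).offDiag, H1 C X r.1 r.2 (single r.1 r.2 1) x = 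
      (∑ r ∈ (Finset.univ : Finset (Fin N)).offDiag, Rr r x.2 * (KK X x r.2 r.2 - KK X x r.1 r.1)) * ee C x - 
      Complex.I * ((1/2) * ∑ r ∈ (Finset.univ : Finset (Fin N)).offDiag, KK X x r.1 r.2 * ((x.2 r.2 : ℂ) * KK C x r.2 r.1
        - conj (x.2 r.1 : ℂ) * KK Cᴴ x r.2 r.1)) * ee C x * Ww x.2 := by
      simp only [Finset.mul_sum, Finset.sum_mul]
      rw [← Finset.sum_sub_distrib]
      refine Finset.sum_congr rfl fun r hr => ?_
      rw [H1_single_eq C X x (by simpa using hr)]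
      ring
    have h2 : ∑ p, Complex.I * H2 C X p x = (∑ p, KK X x p p * (Complex.I * dWw p x.2)) * ee C x
       - Complex.I * ((1/2) * ∑ p, KK X x p p * ((x.2 p : ℂ) * KK C x p p
        - conj (x.2 p : ℂ) * KK Cᴴ x p p)) * ee C x * Ww x.2 := by
      simp only [Finset.mul_sum, Finset.sum_mul]
      rw [← Finset.sum_sub_distrib]
      refine Finset.sum_congr rfl fun p _ => ?_
      unfold H2
      linear_combination ((1/2) * Complex.I * KK X x p p * ((x.2 p : ℂ) * KK C x p p
        - conj (x.2 p : ℂ) * KK Cᴴ x p p) * Ww x.2 * ee C x) * Complex.I_mul_I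
    have h3 : ∑ i, ∑ j, KK X x i j * ((x.2 j : ℂ) * KK C x j i - conj (x.2 i : ℂ) * KK Cᴴ x j i) = 
       ∑ p, KK X x p p * ((x.2 p : ℂ) * KK C x p p - conj (x.2 p : ℂ) * KK Cᴴ x p p) + 
       ∑ r ∈ (Finset.univ : Finset (Fin N)).offDiag, KK X x r.1 r.2 * ((x.2 r.2 : ℂ) * KK C x r.2 r.1
        - conj (x.2 r.1 : ℂ) * KK Cᴴ x r.2 r.1) := by
      rw [← Finset.sum_product', ← Finset.diag_union_offDiag, Finset.sum_union (Finset.disjoint_diag_offDiag _)]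
      rw [Finset.sum_diag]
    rw [h1, h2]
    unfold SS
    rw [h3]
    linear_combination - ee C x * hb
  have h1 : ∀ r ∈ (Finset.univ : Finset (Fin N)).offDiag, 
      Integrable (fun x => H1 C X r.1 r.2 (single r.1 r.2 1) x) (nuM P) := fun r _ => integrable_of_continuous _ (by fun_prop)
  have h2 : ∀ p ∈ (Finset.univ : Finset (Fin N)), 
      Integrable (fun x => Complex.I * H2 C X p x) (nuM P) := fun p _ =>
      (integrable_of_continuous _ (continuous_H2 C X p)).const_mul _
  have h3 : ∫ x, -Complex.I * SS C X x ∂(nuM P) = 0 := by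
    simp only [hp]
    rw [integral_add (integrable_finsetSum _ h1) (integrable_finsetSum _ h2),
      integral_finsetSum _ h1, integral_finsetSum _ h2]
    simp only [integral_const_mul, integral_H2]
    rw [Finset.sum_eq_zero fun r hr => integral_H1_single P C X r.1 r.2 (by simpa using hr)]
    simp
  rw [integral_const_mul] at h3
  simpa using h3

end
end NegAssoc

namespace NegAssoc
noncomputable section
open Matrix ComplexConjugate

variable {N : ℕ}

theorem exists_phase (U : Matrix (Fin N) (Fin N) ℂ) :
    ∃ w : Circle, IsUnit ((1 : Matrix (Fin N) (Fin N) ℂ) + (w : ℂ) • U).det := by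
  have hfin : (U.charpoly.roots.toFinset : Set ℂ).Finite := Finset.finite_toSet _
  have hinf : (Set.range (fun z : Circle => -((z : ℂ)⁻¹))).Infinite := by
    have : Infinite Circle := by
      have : Infinite (Set.Ioc (-π) π) := (Set.Ioc_infinite (by linarith [Real.pi_pos])).to_subtype
      exact Infinite.of_injective _ Circle.argEquiv.symm.injective
    apply Set.infinite_range_of_injective
    intro a b h
    exact Circle.ext (by simpa using h)
  obtain ⟨z, ⟨w, rfl⟩, hz⟩ := hinf.exists_notMem_finite hfin
  refine ⟨w, ?_⟩
  rw [isUnit_iff_ne_zero]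
  intro h0
  apply hz
  have hne := (Matrix.charpoly_monic U).ne_zero
  simp only [Finset.mem_coe, Multiset.mem_toFinset, Polynomial.mem_roots hne, Polynomial.IsRoot.def]
  rw [Matrix.eval_charpoly]
  have : (scalar (Fin N) (-((w : ℂ)⁻¹)) - U) = (-((w : ℂ)⁻¹)) • (1 + (w : ℂ) • U) := by
    have hw : (w : ℂ) ≠ 0 := w.coe_ne_zero
    rw [smul_add, smul_smul, neg_mul, inv_mul_cancel₀ hw, neg_one_smul, sub_eq_add_neg]
    congr 1
    ext a b; simp [Matrix.scalar_apply, Matrix.diagonal_apply, Matrix.one_apply]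
  rw [this, Matrix.det_smul, h0, mul_zero]

theorem exists_diag (U : Matrix.unitaryGroup (Fin N) ℂ) :
    ∃ (V : Matrix.unitaryGroup (Fin N) ℂ) (θ : Fin N → ℝ), (U : Matrix (Fin N) (Fin N) ℂ) =
      V * diagonal (fun p => Complex.exp (θ p * Complex.I)) * (V : Matrix (Fin N) (Fin N) ℂ)ᴴ := by
  obtain ⟨w, hw⟩ := exists_phase (U : Matrix (Fin N) (Fin N) ℂ)
  set A : Matrix (Fin N) (Fin N) ℂ := (w : ℂ) • U with hA
  have hUU : (U : Matrix (Fin N) (Fin N) ℂ)ᴴ * U = 1 := Matrix.mem_unitaryGroup_iff'.mp U.2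
  have hAA : Aᴴ * A = 1 := by
    rw [hA, conjTranspose_smul, smul_mul_assoc, mul_smul_comm, smul_smul, hUU, mul_comm]
    have := circ_mul_conj w
    simp only [Complex.star_def, this, one_smul]
  have hAA' : A * Aᴴ = 1 := mul_eq_one_comm.mp hAA
  set B : Matrix (Fin N) (Fin N) ℂ := 1 + A with hB
  have hBi : B * B⁻¹ = 1 := Matrix.mul_nonsing_inv _ hw
  have hiB : B⁻¹ * B = 1 := Matrix.nonsing_inv_mul _ hw
  set H : Matrix (Fin N) (Fin N) ℂ := Complex.I • ((1 - A) * B⁻¹) with hH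
  have hHerm : H.IsHermitian := by
    have e1 : Bᴴ = Aᴴ * B := by
      rw [hB]; simp only [conjTranspose_add, conjTranspose_one, mul_add, hAA, mul_one]; abel
    have e2 : (1 - A)ᴴ = Aᴴ * (A - 1) := by
      simp only [conjTranspose_sub, conjTranspose_one, mul_sub, hAA, mul_one]
    have hu : IsUnit Bᴴ := (Matrix.isUnit_conjTranspose _).mpr ((Matrix.isUnit_iff_isUnit_det _).mpr hw)
    have hu2 : IsUnit B := ((Matrix.isUnit_iff_isUnit_det _).mpr hw)
    have e3 : Bᴴ * Hᴴ = Bᴴ * H := by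
      rw [hH, conjTranspose_smul, conjTranspose_mul, mul_smul_comm, ← mul_assoc, ← conjTranspose_mul,
        hiB, conjTranspose_one, one_mul, e2]
      have : Bᴴ * ((1 - A) * B⁻¹) = Aᴴ * (1 - A) := by
        rw [e1]
        have : B * (1 - A) = (1 - A) * B := by rw [hB]; noncomm_ring
        calc Aᴴ * B * ((1 - A) * B⁻¹) = Aᴴ * (B * (1 - A)) * B⁻¹ := by noncomm_ring
          _ = Aᴴ * (1 - A) * (B * B⁻¹) := by rw [this]; noncomm_ring
          _ = _ := by rw [hBi, mul_one]
      rw [mul_smul_comm, this, ← neg_sub A 1]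
      simp only [Complex.star_def, Complex.conj_I, neg_smul, mul_neg, smul_neg]
    exact hu.mul_left_cancel e3
  have hrel : H + H * A = Complex.I • (1 - A) := by
    have : H + H * A = H * B := by rw [hB]; noncomm_ring
    rw [this, hH, smul_mul_assoc, mul_assoc, hiB, mul_one]
  have hsp := hHerm.spectral_theorem
  set V := hHerm.eigenvectorUnitary with hV
  set lam := hHerm.eigenvalues with hlam
  rw [Unitary.conjStarAlgAut_apply] at hsp
  have hVV : (V : Matrix (Fin N) (Fin N) ℂ)ᴴ * V = 1 := Matrix.mem_unitaryGroup_iff'.mp V.2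
  have hVV' : (V : Matrix (Fin N) (Fin N) ℂ) * (V : Matrix (Fin N) (Fin N) ℂ)ᴴ = 1 := Matrix.mem_unitaryGroup_iff.mp V.2
  set D : Matrix (Fin N) (Fin N) ℂ := diagonal (RCLike.ofReal ∘ lam) with hD
  rw [star_eq_conjTranspose] at hsp
  set A' := (V : Matrix (Fin N) (Fin N) ℂ)ᴴ * A * V with hA'
  have hrel' : D + D * A' = Complex.I • (1 - A') := by
    have h1 : (V : Matrix (Fin N) (Fin N) ℂ)ᴴ * (H + H * A) * V = D + D * A' := by
      rw [hsp, hA']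
      calc _ = ((V : Matrix (Fin N) (Fin N) ℂ)ᴴ * V) * D * ((V : Matrix (Fin N) (Fin N) ℂ)ᴴ * V) + 
            ((V : Matrix (Fin N) (Fin N) ℂ)ᴴ * V) * D * ((V : Matrix (Fin N) (Fin N) ℂ)ᴴ * A * V) := by noncomm_ring
        _ = _ := by rw [hVV]; simp
    rw [← h1, hrel, mul_smul_comm, smul_mul_assoc, mul_sub, sub_mul, mul_one, hVV]
  have hlI : ∀ p, ((lam p : ℂ) + Complex.I) ≠ 0 := by
    intro p h
    have := congrArg Complex.im h
    simp at this
  have hdiag : A' = diagonal (fun p => (Complex.I - lam p) / (lam p + Complex.I)) := by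
    ext p q
    have := congrFun (congrFun hrel' p) q
    simp only [hD, Matrix.add_apply, Matrix.smul_apply, Matrix.sub_apply, Matrix.diagonal_mul, smul_eq_mul,
      Function.comp, Matrix.diagonal_apply, Matrix.one_apply] at this ⊢
    split_ifs at this ⊢ with h
    · field_simp [hlI p]
      simp only [RCLike.ofReal_eq_complex_ofReal, Complex.coe_algebraMap] at this
      linear_combination this
    · have h2 : ((lam p : ℂ) + Complex.I) * A' p q = 0 := by
        simp only [Complex.coe_algebraMap, RCLike.ofReal_eq_complex_ofReal] at this
        linear_combination this
      exact (mul_eq_zero.mp h2).resolve_left (hlI p)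
  have hU : (U : Matrix (Fin N) (Fin N) ℂ) = V * diagonal (fun p => (conj (w:ℂ)) * 
      ((Complex.I - lam p) / (lam p + Complex.I))) * (V : Matrix (Fin N) (Fin N) ℂ)ᴴ := by
    have h1 : diagonal (fun p => (conj (w:ℂ)) * 
      ((Complex.I - lam p) / (lam p + Complex.I))) = (conj (w:ℂ)) • A' := by
      rw [hdiag]; ext p q; simp [Matrix.diagonal_apply]
    rw [h1, hA', mul_smul_comm, smul_mul_assoc]
    have h2 : (V : Matrix (Fin N) (Fin N) ℂ) * ((V : Matrix (Fin N) (Fin N) ℂ)ᴴ * A * V) * (V : Matrix (Fin N) (Fin N) ℂ)ᴴ = A := by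
      calc _ = (V * (V : Matrix (Fin N) (Fin N) ℂ)ᴴ) * A * (V * (V : Matrix (Fin N) (Fin N) ℂ)ᴴ) := by noncomm_ring
        _ = A := by rw [hVV']; simp
    rw [h2, hA, smul_smul, mul_comm, circ_mul_conj, one_smul]
  refine ⟨V, fun p => Complex.arg ((conj (w:ℂ)) * ((Complex.I - lam p) / (lam p + Complex.I))), ?_⟩
  rw [hU]
  congr 3
  ext p
  have hn : ‖(conj (w:ℂ)) * ((Complex.I - lam p) / (lam p + Complex.I))‖ = 1 := by
    have h3 : Complex.I - lam p = - conj ((lam p : ℂ) + Complex.I) := by simp; ring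
    rw [norm_mul, norm_div, h3, norm_neg, RCLike.norm_conj, RCLike.norm_conj, div_self (norm_ne_zero_iff.mpr (hlI p)), mul_one]
    exact w.norm_coe
  have := Complex.norm_mul_exp_arg_mul_I ((conj (w:ℂ)) * ((Complex.I - lam p) / (lam p + Complex.I)))
  rw [hn] at this
  simpa using this.symm

theorem exists_oneParam (U : Matrix.unitaryGroup (Fin N) ℂ) :
    ∃ g Y, OneParam g Y ∧ g 1 = U ∧ ∀ t, Y * (g t : Matrix (Fin N) (Fin N) ℂ) = g t * Y := by
  obtain ⟨V, θ, hU⟩ := exists_diag U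
  have hVV : (V : Matrix (Fin N) (Fin N) ℂ)ᴴ * V = 1 := Matrix.mem_unitaryGroup_iff'.mp V.2
  have hVV' : (V : Matrix (Fin N) (Fin N) ℂ) * (V : Matrix (Fin N) (Fin N) ℂ)ᴴ = 1 := Matrix.mem_unitaryGroup_iff.mp V.2
  set W : Matrix (Fin N) (Fin N) ℂ := V.1 with hW
  let D : ℝ → Matrix (Fin N) (Fin N) ℂ := fun t => diagonal (fun p => Complex.exp (t * θ p * Complex.I))
  let E : Matrix (Fin N) (Fin N) ℂ := diagonal (fun p => (θ p * Complex.I))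
  have hmul : ∀ X Z : Matrix (Fin N) (Fin N) ℂ, (W * X * Wᴴ) * (W * Z * Wᴴ) = W * (X * Z) * Wᴴ := by
    intro X Z
    calc _ = W * X * (Wᴴ * W) * Z * Wᴴ := by noncomm_ring
      _ = _ := by rw [hVV]; noncomm_ring
  have hu : ∀ t, W * D t * Wᴴ ∈ Matrix.unitaryGroup (Fin N) ℂ := by
    intro t
    rw [Matrix.mem_unitaryGroup_iff, star_eq_conjTranspose]
    have : (W * D t * Wᴴ)ᴴ = W * (D t)ᴴ * Wᴴ := by simp [mul_assoc]
    rw [this, hmul]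
    have : D t * (D t)ᴴ = 1 := by
      simp only [D, diagonal_conjTranspose, diagonal_mul_diagonal]
      rw [← diagonal_one]
      congr 1
      ext p
      simp only [Pi.star_apply, Complex.star_def]
      rw [← Complex.exp_conj, ← Complex.exp_add]
      simp
    rw [this, mul_one, hVV']
  refine ⟨fun t => ⟨_, hu t⟩, W * E * Wᴴ, ⟨?_, ?_, ?_, ?_⟩, ?_, ?_⟩
  · refine Continuous.subtype_mk ?_ _
    have : Continuous D := by
      refine Continuous.matrix_diagonal ?_
      fun_prop
    fun_prop
  · have : Eᴴ = -E := by
      simp only [E, diagonal_conjTranspose]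
      ext p q; simp [Matrix.diagonal_apply]; split_ifs <;> simp
    simp only [conjTranspose_mul, conjTranspose_conjTranspose, this]
    simp [mul_assoc]
  · intro t
    have hDt : MD D (E * D t) t := by
      intro p q
      simp only [D, E, diagonal_mul_diagonal, Matrix.diagonal_apply]
      split_ifs with h
      · have h := ((Complex.ofRealCLM.hasDerivAt (x := t)).mul_const (θ p : ℂ)).mul_const Complex.I
        have h2 := h.cexp
        refine h2.congr_deriv ?_
        simp [mul_comm]
      · exact hasDerivAt_const _ _
    have := ((MD.const W t).mul hDt).mul (MD.const Wᴴ t)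
    simp only [zero_mul, mul_zero, zero_add, add_zero] at this
    simp only [hmul]
    exact this
  · ext1
    simp [D, hVV']
  · ext1
    simp only [D]
    rw [hU]; simp
  · intro t
    simp only [hmul]
    congr 2
    simp [D, E, mul_comm]

theorem KK_mul (C X : Matrix (Fin N) (Fin N) ℂ) (x : XX N) : KK (C * X) x = KK C x * KK X x := by
  have hVV : (x.1 : Matrix (Fin N) (Fin N) ℂ)ᴴ * x.1 = 1 := Matrix.mem_unitaryGroup_iff'.mp x.1.2
  unfold KK
  calc _ = (x.1 : Matrix (Fin N) (Fin N) ℂ) * C * 1 * X * (x.1 : Matrix (Fin N) (Fin N) ℂ)ᴴ := by simp [mul_assoc]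
    _ = _ := by rw [← hVV]; noncomm_ring

theorem MD.left {n : Type*} [Fintype n] {A : ℝ → Matrix n n ℂ} {A' B : Matrix n n ℂ} {t : ℝ}
    (hA : MD A A' t) : MD (fun s => B * A s) (B * A') t := by
  have := (MD.const B t).mul hA
  simpa using this

theorem MD.right' {n : Type*} [Fintype n] {A : ℝ → Matrix n n ℂ} {A' B : Matrix n n ℂ} {t : ℝ}
    (hA : MD A A' t) : MD (fun s => A s * B) (A' * B) t := by
  have := hA.mul (MD.const B t)
  simpa using this

theorem hasDerivAt_ee (C Y : Matrix (Fin N) (Fin N) ℂ) {g : ℝ → Matrix.unitaryGroup (Fin N) ℂ}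
    (hg : OneParam g Y) (hc : ∀ t, Y * (g t : Matrix (Fin N) (Fin N) ℂ) = g t * Y) (t : ℝ) (x : XX N) :
    HasDerivAt (fun s => ee (C * (g s).1) x * Ww x.2) (Complex.I * SS (C * (g t).1) Y x) t := by
  have h1 : MD (fun s => C * (g s : Matrix (Fin N) (Fin N) ℂ)) (C * (g t).1 * Y) t := by
    have := (hg.der t).left (B := C)
    rwa [hc t, ← mul_assoc] at this
  have hK : MD (fun s => KK (C * (g s).1) x) (KK (C * (g t).1 * Y) x) t := h1.left.right'
  have hK' : MD (fun s => KK (C * (g s).1)ᴴ x) (KK (C * (g t).1 * Y)ᴴ x) t := h1.conjTranspose.left.right'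
  have hL : HasDerivAt (fun s => Lf (C * (g s).1) x) _ t := (HasDerivAt.fun_sum fun p (_ : p ∈ Finset.univ) =>
    ((hK p p).const_mul ((x.2 p : ℂ))).add ((hK' p p).const_mul (conj (x.2 p : ℂ)))).const_mul (1/2)
  have hE : HasDerivAt (fun s => ee (C * (g s).1) x * Ww x.2) _ t := (hL.const_mul Complex.I).cexp.mul_const (Ww x.2)
  refine hE.congr_deriv ?_
  have key : ∑ p, ((x.2 p : ℂ) * KK (C * (g t).1 * Y) x p p + conj (x.2 p : ℂ) * KK (C * (g t).1 * Y)ᴴ x p p) =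
      ∑ i, ∑ j, KK Y x i j * ((x.2 j : ℂ) * KK (C * (g t).1) x j i - conj (x.2 i : ℂ) * KK (C * (g t).1)ᴴ x j i) := by
    have hn : ∀ M : Matrix (Fin N) (Fin N) ℂ, KK (-Y * M) x = - (KK Y x * KK M x) := by
      intro M; rw [← KK_mul]; simp [KK]
    rw [conjTranspose_mul, hg.skew, hn, KK_mul]
    simp only [mul_sub, Finset.sum_add_distrib, Finset.sum_sub_distrib]
    rw [sub_eq_add_neg]
    congr 1
    · rw [Finset.sum_comm]
      refine Finset.sum_congr rfl fun p _ => ?_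
      rw [Matrix.mul_apply, Finset.mul_sum]
      refine Finset.sum_congr rfl fun q _ => ?_
      ring
    · rw [← Finset.sum_neg_distrib]
      refine Finset.sum_congr rfl fun p _ => ?_
      rw [Matrix.neg_apply, Matrix.mul_apply, mul_neg, Finset.mul_sum]
      congr 1
      refine Finset.sum_congr rfl fun q _ => ?_
      ring
  rw [key]
  unfold SS ee
  ring

theorem continuous_KK2 : Continuous fun q : Matrix (Fin N) (Fin N) ℂ × XX N => KK q.1 q.2 := by
  unfold KK; fun_prop

theorem continuous_KK2' : Continuous fun q : Matrix (Fin N) (Fin N) ℂ × XX N => KK q.1ᴴ q.2 := by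
  unfold KK; fun_prop

theorem continuous_dd (p : Fin N) :
    Continuous fun q : Matrix (Fin N) (Fin N) ℂ × XX N => (q.2.2 p : ℂ) := by fun_prop

theorem continuous_dd' (p : Fin N) :
    Continuous fun q : Matrix (Fin N) (Fin N) ℂ × XX N => conj (q.2.2 p : ℂ) := by fun_prop

theorem continuous_Lf2 : Continuous fun q : Matrix (Fin N) (Fin N) ℂ × XX N => Lf q.1 q.2 := by
  have h1' := fun i j => (continuous_KK2 (N := N)).matrix_elem i j
  have h2' := fun i j => (continuous_KK2' (N := N)).matrix_elem i j
  have h4 : Continuous fun q : Matrix (Fin N) (Fin N) ℂ × XX N => ∑ p, ((q.2.2 p : ℂ) * KK q.1 q.2 p p 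
      + conj (q.2.2 p : ℂ) * KK q.1ᴴ q.2 p p) :=
    continuous_finsetSum _ fun p _ => ((continuous_dd p).mul (h1' p p)).add ((continuous_dd' p).mul (h2' p p))
  unfold Lf
  exact continuous_const.mul h4

theorem continuous_ee2 : Continuous fun q : Matrix (Fin N) (Fin N) ℂ × XX N => ee q.1 q.2 :=
  Complex.continuous_exp.comp (continuous_const.mul continuous_Lf2)

theorem continuous_SS2 (Y : Matrix (Fin N) (Fin N) ℂ) :
    Continuous fun q : Matrix (Fin N) (Fin N) ℂ × XX N => SS q.1 Y q.2 := by
  have h1' := fun i j => (continuous_KK2 (N := N)).matrix_elem i j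
  have h2' := fun i j => (continuous_KK2' (N := N)).matrix_elem i j
  have h3' := fun i j => (continuous_KK (N := N) Y).matrix_elem i j
  have h4 : Continuous fun q : Matrix (Fin N) (Fin N) ℂ × XX N => ∑ i, ∑ j, KK Y q.2 i j * 
      ((q.2.2 j : ℂ) * KK q.1 q.2 j i - conj (q.2.2 i : ℂ) * KK q.1ᴴ q.2 j i) :=
    continuous_finsetSum _ fun i _ => continuous_finsetSum _ fun j _ =>
      ((h3' i j).comp continuous_snd).mul (((continuous_dd j).mul (h1' j i)).sub
        ((continuous_dd' i).mul (h2' j i)))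
  have h5 : Continuous fun q : Matrix (Fin N) (Fin N) ℂ × XX N => Ww q.2.2 :=
    continuous_Ww.comp (continuous_snd.comp continuous_snd)
  unfold SS
  exact ((continuous_const.mul h4).mul continuous_ee2).mul h5

theorem integral_ee_mul (P : Measure (Matrix.unitaryGroup (Fin N) ℂ)) [P.IsHaarMeasure]
    [IsProbabilityMeasure P] (C : Matrix (Fin N) (Fin N) ℂ) (U : Matrix.unitaryGroup (Fin N) ℂ) :
    ∫ x, ee (C * U.1) x * Ww x.2 ∂(nuM P) = ∫ x, ee C x * Ww x.2 ∂(nuM P) := by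
  obtain ⟨g, Y, hg, hg1, hc⟩ := exists_oneParam U
  have hcont := hg.cont
  have hder : ∀ t, HasDerivAt (fun t => ∫ x, ee (C * (g t).1) x * Ww x.2 ∂(nuM P)) 0 t := by
    intro t
    have := hasDerivAt_int (nuM P) (fun t x => ee (C * (g t).1) x * Ww x.2) 
      (fun t x => Complex.I * SS (C * (g t).1) Y x) (fun t => by fun_prop) ?_ (hasDerivAt_ee C Y hg hc) t
    · rwa [integral_const_mul, integral_SS, mul_zero] at this
    · have h0 : Continuous fun q : ℝ × XX N => ((C * (g q.1).1, q.2) : Matrix (Fin N) (Fin N) ℂ × XX N) := by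
        fun_prop
      have h1 := (continuous_SS2 Y).comp h0
      have h2 : Continuous fun q : ℝ × XX N => SS (C * (g q.1).1) Y q.2 := h1
      have h3 : Continuous fun q : ℝ × XX N => Complex.I * SS (C * (g q.1).1) Y q.2 := continuous_const.mul h2
      exact h3
  have := is_const_of_deriv_eq_zero (fun t => (hder t).differentiableAt) (fun t => (hder t).deriv) 1 0
  rw [hg1, hg.zero] at this
  simpa using this

end
end NegAssoc

namespace NegAssoc
noncomputable section
open Matrix ComplexConjugate

variable {N : ℕ}

/-- Diagonal unitary matrices. -/
def diagU (d : Fin N → Circle) : Matrix.unitaryGroup (Fin N) ℂ :=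
  ⟨diagonal (fun p => (d p : ℂ)), by
    rw [Matrix.mem_unitaryGroup_iff, star_eq_conjTranspose, diagonal_conjTranspose, diagonal_mul_diagonal,
      ← diagonal_one]
    congr 1
    ext p
    exact circ_mul_conj (d p)⟩

theorem continuous_diagU : Continuous (diagU (N := N)) := by
  refine Continuous.subtype_mk ?_ _
  refine Continuous.matrix_diagonal ?_
  fun_prop

/-- The conjugation map. -/
def Xi (x : XX N) : Matrix.unitaryGroup (Fin N) ℂ := x.1⁻¹ * diagU x.2 * x.1

theorem continuous_Xi : Continuous (Xi (N := N)) := by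
  have := continuous_diagU (N := N)
  unfold Xi
  fun_prop

/-- exponential test functions on the unitary group -/
def tF (C : Matrix (Fin N) (Fin N) ℂ) (U : Matrix.unitaryGroup (Fin N) ℂ) : ℂ :=
  Complex.exp (((C * U.1).trace.re : ℂ) * Complex.I)

theorem continuous_tF (C : Matrix (Fin N) (Fin N) ℂ) : Continuous (tF C) := by
  unfold tF
  have : Continuous fun U : Matrix.unitaryGroup (Fin N) ℂ => (C * U.1).trace := by
    refine Continuous.matrix_trace ?_
    fun_prop
  fun_prop

theorem coe_Xi (x : XX N) : (Xi x).1 = x.1.1ᴴ * diagonal (fun p => (x.2 p : ℂ)) * x.1.1 := rfl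

theorem Lf_eq (C : Matrix (Fin N) (Fin N) ℂ) (x : XX N) : Lf C x = ((C * (Xi x).1).trace.re : ℂ) := by
  have h1 : (C * (Xi x).1).trace = ∑ p, (x.2 p : ℂ) * KK C x p p := by
    rw [coe_Xi, ← mul_assoc, Matrix.trace_mul_comm, ← mul_assoc, ← mul_assoc]
    change ((KK C x) * diagonal _).trace = _
    simp [Matrix.trace, Matrix.mul_diagonal, mul_comm]
  have h2 : ∀ p, KK Cᴴ x p p = conj (KK C x p p) := by
    intro p
    have : KK Cᴴ x = (KK C x)ᴴ := by simp [KK, mul_assoc]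
    rw [this]; rfl
  rw [Complex.re_eq_add_conj, h1, map_sum, ← Finset.sum_add_distrib]
  unfold Lf
  simp only [h2, map_mul]
  ring

theorem ee_eq (C : Matrix (Fin N) (Fin N) ℂ) (x : XX N) : ee C x = tF C (Xi x) := by
  unfold ee tF
  rw [Lf_eq, mul_comm]

theorem Ww_vand (d : Fin N → Circle) : Ww d = (vandermonde (fun p => (d p : ℂ))).det *
    conj (vandermonde (fun p => (d p : ℂ))).det := by
  rw [det_vandermonde, Finset.prod_sigma', map_prod, ← Finset.prod_mul_distrib]
  unfold Ww
  rw [← Finset.prod_filter_mul_prod_filter_not _ (fun r : Fin N × Fin N => r.1 < r.2)]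
  have h1 : ∏ r ∈ (Finset.univ : Finset (Fin N)).offDiag with ¬ r.1 < r.2, (1 - (d r.1 : ℂ) * conj (d r.2 : ℂ)) 
     = ∏ r ∈ (Finset.univ : Finset (Fin N)).offDiag with r.1 < r.2, (1 - (d r.2 : ℂ) * conj (d r.1 : ℂ)) := by
    refine Finset.prod_nbij' Prod.swap Prod.swap ?_ ?_ ?_ ?_ ?_ <;> simp <;> grind
  rw [h1, ← Finset.prod_mul_distrib]
  refine Finset.prod_nbij' (fun r => ⟨r.1, r.2⟩) (fun r => (r.1, r.2)) ?_ ?_ ?_ ?_ ?_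
  · simp
  · simp; grind
  · simp
  · simp
  · intro r _
    simp only [map_sub]
    have hi := circ_mul_conj (d r.1)
    have hj := circ_mul_conj (d r.2)
    linear_combination hi * (d r.2 : ℂ) * conj (d r.2 : ℂ) - hi - hj + hj - hj + hj

/-- real Weyl density -/
def ww (d : Fin N → Circle) : ℝ := Complex.normSq (vandermonde (fun p => (d p : ℂ))).det

theorem Ww_ofReal (d : Fin N → Circle) : Ww d = (ww d : ℂ) := by
  rw [Ww_vand, Complex.mul_conj]; rfl

theorem ww_nonneg (d : Fin N → Circle) : 0 ≤ ww d := Complex.normSq_nonneg _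

theorem continuous_ww : Continuous (ww (N := N)) := by
  have : (ww (N := N)) = fun d => (Ww d).re := by ext d; rw [Ww_ofReal]; simp
  rw [this]; fun_prop

/-- weighted measure on the phase space -/
def rho (P : Measure (Matrix.unitaryGroup (Fin N) ℂ)) : Measure (XX N) :=
  (nuM P).withDensity (fun x => ENNReal.ofReal (ww x.2))

theorem integral_rho (P : Measure (Matrix.unitaryGroup (Fin N) ℂ)) (f : XX N → ℂ) :
    ∫ x, f x ∂(rho P) = ∫ x, f x * Ww x.2 ∂(nuM P) := by
  have hc : Continuous fun x : XX N => ww x.2 := continuous_ww.comp continuous_snd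
  unfold rho
  rw [integral_withDensity_eq_integral_toReal_smul (by exact hc.measurable.ennreal_ofReal) (by simp)]
  congr 1
  ext x
  rw [ENNReal.toReal_ofReal (ww_nonneg _), Ww_ofReal, Complex.real_smul, mul_comm]

instance (P : Measure (Matrix.unitaryGroup (Fin N) ℂ)) [IsProbabilityMeasure P] : IsFiniteMeasure (rho P) := by
  have hc : Continuous fun x : XX N => ww x.2 := continuous_ww.comp continuous_snd
  exact isFiniteMeasure_withDensity_ofReal (integrable_of_continuous (nuM P) hc).2

theorem ext_of_tF {m m' : Measure (Matrix.unitaryGroup (Fin N) ℂ)} [IsFiniteMeasure m] [IsFiniteMeasure m']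
    (h : ∀ C, ∫ U, tF C U ∂m = ∫ U, tF C U ∂m') : m = m' := by
  let io : Matrix.unitaryGroup (Fin N) ℂ → (Fin N → Fin N → ℂ) := fun U => U.1
  have hio : Continuous io := continuous_subtype_val
  have hinj : Function.Injective io := Subtype.val_injective
  have hemb : MeasurableEmbedding io := (hio.isClosedEmbedding hinj).measurableEmbedding
  have hmap : m.map io = m'.map io := by
    refine Measure.ext_of_charFunDual (funext fun L => ?_)
    rw [charFunDual_apply, charFunDual_apply, hemb.integral_map, hemb.integral_map]
    let C : Matrix (Fin N) (Fin N) ℂ := fun j i => (L (Pi.single i (Pi.single j 1)) : ℂ) - 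
      Complex.I * (L (Pi.single i (Pi.single j Complex.I)))
    have hC : ∀ U, Complex.exp (L (io U) * Complex.I) = tF C U := by
      intro U
      unfold tF
      congr 3
      have h1 : io U = ∑ i, ∑ j, ((U.1 i j).re • (Pi.single i (Pi.single j (1:ℂ)) : Fin N → Fin N → ℂ) + 
          (U.1 i j).im • (Pi.single i (Pi.single j Complex.I) : Fin N → Fin N → ℂ)) := by
        ext a b
        simp only [Finset.sum_apply, Pi.add_apply, Pi.smul_apply]
        rw [Finset.sum_eq_single a (by
            intro c _ hc
            refine Finset.sum_eq_zero fun e _ => ?_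
            rw [Pi.single_eq_of_ne hc.symm, Pi.single_eq_of_ne hc.symm]; simp) (by simp),
          Finset.sum_eq_single b (by
            intro c _ hc
            rw [Pi.single_eq_same, Pi.single_eq_same, Pi.single_eq_of_ne hc.symm,
              Pi.single_eq_of_ne hc.symm]; simp) (by simp)]
        simp only [Pi.single_eq_same, Complex.real_smul, mul_one]
        exact (Complex.re_add_im _).symm
      conv_lhs => rw [h1]
      simp only [map_sum, map_add, map_smul, smul_eq_mul, Matrix.trace, Matrix.diag_apply, Matrix.mul_apply,
        Complex.re_sum]
      rw [Finset.sum_comm]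
      refine Finset.sum_congr rfl fun j _ => Finset.sum_congr rfl fun i _ => ?_
      simp [C]
      ring
    simp only [hC]
    exact h C
  rw [← hemb.comap_map m, hmap, hemb.comap_map]

theorem tF_mul (C : Matrix (Fin N) (Fin N) ℂ) (g U : Matrix.unitaryGroup (Fin N) ℂ) :
    tF C (g * U) = tF (C * g.1) U := by
  unfold tF
  rw [Matrix.mul_assoc]; rfl

/-- Weyl integration, up to a constant. -/
theorem weyl (P : Measure (Matrix.unitaryGroup (Fin N) ℂ)) [P.IsHaarMeasure]
    [IsProbabilityMeasure P] : ∃ c : NNReal, (rho P).map Xi = c • P := by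
  have hXi : Measurable (Xi (N := N)) := continuous_Xi.measurable
  have hinv : ((rho P).map Xi).IsMulLeftInvariant := by
    refine ⟨fun g => ?_⟩
    have hg : Continuous (fun U : Matrix.unitaryGroup (Fin N) ℂ => g * U) := by fun_prop
    have : IsFiniteMeasure (((rho P).map Xi).map (fun U => g * U)) := inferInstance
    refine ext_of_tF fun C => ?_
    rw [integral_map hg.measurable.aemeasurable (continuous_tF C).aestronglyMeasurable]
    simp only [tF_mul]
    rw [integral_map hXi.aemeasurable (continuous_tF _).aestronglyMeasurable,
      integral_map hXi.aemeasurable (continuous_tF _).aestronglyMeasurable, integral_rho, integral_rho]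
    simp only [← ee_eq]
    exact integral_ee_mul P C g
  exact ⟨_, Measure.isMulInvariant_eq_smul_of_compactSpace _ P⟩

end
end NegAssoc

namespace NegAssoc
noncomputable section
open Polynomial ComplexConjugate

/-- Bivariate stable polynomials of total degree `M` with full support. -/
structure SM (M : ℕ) (c : ℕ → ℕ → ℝ) : Prop where
  pos : ∀ a b, a + b ≤ M → 0 < c a b
  zero : ∀ a b, M < a + b → c a b = 0
  stable : ∀ x y : ℂ, 0 < x.im → 0 < y.im →
    ∑ a ∈ Finset.range (M + 1), ∑ b ∈ Finset.range (M + 1), (c a b : ℂ) * x ^ a * y ^ b ≠ 0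

theorem SM.nonneg {M : ℕ} {c : ℕ → ℕ → ℝ} (h : SM M c) (a b : ℕ) : 0 ≤ c a b := by
  rcases le_or_gt (a + b) M with h1 | h1
  · exact (h.pos a b h1).le
  · exact (h.zero a b h1).ge

theorem SM.swap {M : ℕ} {c : ℕ → ℕ → ℝ} (h : SM M c) : SM M (fun a b => c b a) := by
  refine ⟨fun a b hab => h.pos _ _ (by omega), fun a b hab => h.zero _ _ (by omega), fun x y hx hy => ?_⟩
  have := h.stable y x hy hx
  rw [Finset.sum_comm] at this
  intro h0
  apply this
  rw [← h0]
  exact Finset.sum_congr rfl fun a _ => Finset.sum_congr rfl fun b _ => by ring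

/-- the polynomial in the first variable -/
def fx (M : ℕ) (c : ℕ → ℕ → ℝ) (y : ℂ) : ℂ[X] :=
  ∑ a ∈ Finset.range (M + 2), C (∑ b ∈ Finset.range (M + 2), (c a b : ℂ) * y ^ b) * X ^ a

theorem fx_eval (M : ℕ) (c : ℕ → ℕ → ℝ) (x y : ℂ) : (fx M c y).eval x =
    ∑ a ∈ Finset.range (M + 2), ∑ b ∈ Finset.range (M + 2), (c a b : ℂ) * x ^ a * y ^ b := by
  simp only [fx, eval_finsetSum, eval_mul, eval_C, eval_pow, eval_X, Finset.sum_mul]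
  refine Finset.sum_congr rfl fun a _ => Finset.sum_congr rfl fun b _ => by ring

theorem fx_deriv_eval {M : ℕ} {c : ℕ → ℕ → ℝ} (h : SM (M + 1) c) (x y : ℂ) : (fx M c y).derivative.eval x =
    ∑ a ∈ Finset.range (M + 1), ∑ b ∈ Finset.range (M + 1), (((a + 1) * c (a + 1) b : ℝ) : ℂ) * x ^ a * y ^ b := by
  simp only [fx, derivative_sum, eval_finsetSum]
  rw [Finset.sum_range_succ']
  simp only [pow_zero, mul_one, derivative_C, eval_zero, add_zero]
  refine Finset.sum_congr rfl fun a _ => ?_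
  simp only [derivative_C_mul, derivative_X_pow, eval_mul, eval_C, eval_pow, eval_X]
  rw [Finset.sum_range_succ, h.zero (a + 1) (M + 1) (by omega)]
  simp only [Complex.ofReal_zero, zero_mul, add_zero, Finset.sum_mul]
  refine Finset.sum_congr rfl fun b _ => ?_
  push_cast
  ring

theorem SM.im_neg {M : ℕ} {c : ℕ → ℕ → ℝ} (h : SM (M + 1) c) {x y : ℂ} (hx : 0 < x.im) (hy : 0 < y.im) :
    ((fx M c y).derivative.eval x / (fx M c y).eval x).im < 0 := by
  have hne : (fx M c y).eval x ≠ 0 := by rw [fx_eval]; exact h.stable x y hx hy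
  have hsp : (fx M c y).Splits := IsAlgClosed.splits _
  have hroot : ∀ r ∈ (fx M c y).roots, r.im ≤ 0 := by
    intro r hr
    by_contra hr'
    push Not at hr'
    have := (mem_roots'.mp hr).2
    rw [IsRoot.def, fx_eval] at this
    exact h.stable r y hr' hy this
  have hcard : (fx M c y).roots ≠ 0 := by
    intro h0
    have hc := hsp.natDegree_eq_card_roots
    rw [h0, Multiset.card_zero] at hc
    have hcoef : (fx M c y).coeff (M + 1) = c (M + 1) 0 := by
      simp only [fx, finsetSum_coeff, coeff_C_mul, coeff_X_pow]
      simp only [mul_ite, mul_one, mul_zero, Finset.sum_ite_eq, Finset.mem_range]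
      rw [if_pos (by omega), Finset.sum_range_succ']
      rw [Finset.sum_eq_zero fun b _ => by rw [h.zero _ _ (by omega)]; simp]
      simp
    have : (fx M c y).coeff (M + 1) = 0 := coeff_eq_zero_of_natDegree_lt (by omega)
    rw [hcoef] at this
    have h2 := h.pos (M + 1) 0 (by omega)
    have h3 : c (M + 1) 0 = 0 := by exact_mod_cast this
    linarith
  rw [hsp.eval_derivative_div_eval_of_ne_zero hne]
  have hterm : ∀ r ∈ (fx M c y).roots, (1 / (x - r)).im < 0 := by
    intro r hr
    have h1 : 0 < (x - r).im := by have := hroot r hr; simp; linarith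
    rw [one_div, Complex.inv_im]
    apply div_neg_of_neg_of_pos (by linarith)
    apply Complex.normSq_pos.mpr
    intro h0; rw [h0] at h1; simp at h1
  have gen : ∀ s : Multiset ℂ, s ≠ 0 → (∀ r ∈ s, (1 / (x - r)).im < 0) →
      ((s.map (fun z => 1 / (x - z))).sum).im < 0 := by
    intro s
    induction s using Multiset.induction_on with
    | empty => intro h; exact absurd rfl h
    | cons a s ih =>
      intro _ hs
      rw [Multiset.map_cons, Multiset.sum_cons, Complex.add_im]
      have h1 := hs a (Multiset.mem_cons_self _ _)
      by_cases h0 : s = 0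
      · subst h0; simpa using h1
      · have := ih h0 (fun r hr => hs r (Multiset.mem_cons_of_mem hr))
        linarith
  exact gen _ hcard hterm

theorem SM.deriv {M : ℕ} {c : ℕ → ℕ → ℝ} (h : SM (M + 1) c) : SM M (fun a b => (a + 1) * c (a + 1) b) := by
  refine ⟨fun a b hab => mul_pos (by positivity) (h.pos _ _ (by omega)),
    fun a b hab => by rw [h.zero _ _ (by omega), mul_zero], fun x y hx hy h0 => ?_⟩
  have := h.im_neg hx hy
  rw [fx_deriv_eval h, h0] at this
  simp at this

theorem SM.base {M : ℕ} {c : ℕ → ℕ → ℝ} (h : SM M c) : c 0 0 * c 1 1 ≤ c 1 0 * c 0 1 := by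
  rcases Nat.lt_or_ge M 2 with hM | hM
  · rw [h.zero 1 1 (by omega), mul_zero]
    exact mul_nonneg (h.nonneg _ _) (h.nonneg _ _)
  obtain ⟨M, rfl⟩ : ∃ M', M = M' + 1 := ⟨M - 1, by omega⟩
  have h1 : ∀ x y : ℂ, 0 < x.im → 0 < y.im →
      ((fx M c y).derivative.eval x * conj ((fx M c y).eval x)).im ≤ 0 := by
    intro x y hx hy
    have := h.im_neg hx hy
    rw [div_eq_mul_inv, Complex.inv_def, ← mul_assoc, mul_comm _ ((_ : ℝ) : ℂ), Complex.im_ofReal_mul] at this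
    by_contra h2
    push Not at h2
    have h3 : 0 ≤ (Complex.normSq (eval x (fx M c y)))⁻¹ := inv_nonneg.mpr (Complex.normSq_nonneg _)
    nlinarith
  have h2 : ∀ y : ℂ, 0 < y.im → ((fx M c y).derivative.eval 0 * conj ((fx M c y).eval 0)).im ≤ 0 := by
    intro y hy
    have hc : Continuous fun δ : ℝ => ((fx M c y).derivative.eval (δ * Complex.I) *
      conj ((fx M c y).eval (δ * Complex.I))).im := by fun_prop
    have ht := (hc.tendsto 0).mono_left (nhdsWithin_le_nhds (s := Set.Ioi 0))
    simp only [Complex.ofReal_zero, zero_mul] at ht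
    refine le_of_tendsto ht ?_
    filter_upwards [self_mem_nhdsWithin] with δ hδ
    exact h1 (δ * Complex.I) y (by simpa using hδ) hy
  have e1 : ∀ y, (fx M c y).derivative.eval 0 = ∑ b ∈ Finset.range (M + 1), ((c 1 b : ℝ) : ℂ) * y ^ b := by
    intro y
    rw [fx_deriv_eval h, Finset.sum_range_succ', Finset.sum_eq_zero]
    · simp
    · intro a _; simp
  have e2 : ∀ y, (fx M c y).eval 0 = ∑ b ∈ Finset.range (M + 2), ((c 0 b : ℝ) : ℂ) * y ^ b := by
    intro y
    rw [fx_eval, Finset.sum_range_succ', Finset.sum_eq_zero]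
    · simp
    · intro a _; simp
  have hder : ∀ (u : ℕ → ℝ) (K : ℕ), HasDerivAt (fun ε : ℝ => ∑ b ∈ Finset.range (K + 2), ((u b : ℝ) : ℂ) * (ε * Complex.I) ^ b)
      (u 1 * Complex.I) 0 := by
    intro u K
    have hb : HasDerivAt (fun s : ℝ => (s : ℂ) * Complex.I) Complex.I 0 := by
      simpa using (Complex.ofRealCLM.hasDerivAt (x := 0)).mul_const Complex.I
    have := HasDerivAt.fun_sum fun b (_ : b ∈ Finset.range (K + 2)) => (hb.fun_pow b).const_mul ((u b : ℝ) : ℂ)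
    refine this.congr_deriv ?_
    rw [Finset.sum_range_succ', Finset.sum_range_succ', Finset.sum_eq_zero]
    · simp
    · intro b _; simp
  obtain ⟨K, rfl⟩ : ∃ K, M = K + 1 := ⟨M - 1, by omega⟩
  have d1 := hder (fun b => c 1 b) K
  have d2 := hder (fun b => c 0 b) (K + 1)
  have d := d1.mul d2.star
  have dim := Complex.imCLM.hasFDerivAt.comp_hasDerivAt 0 d
  have hle : ∀ ε : ℝ, 0 < ε → ((∑ b ∈ Finset.range (K + 2), ((c 1 b : ℝ) : ℂ) * (ε * Complex.I) ^ b) *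
      star (∑ b ∈ Finset.range (K + 1 + 2), ((c 0 b : ℝ) : ℂ) * (ε * Complex.I) ^ b)).im ≤ 0 := by
    intro ε hε
    have := h2 (ε * Complex.I) (by simpa using hε)
    rwa [e1, e2] at this
  have hz : ∀ (u : ℕ → ℝ) (K : ℕ), ∑ b ∈ Finset.range (K + 2), ((u b : ℝ) : ℂ) * (((0 : ℝ) : ℂ) * Complex.I) ^ b = u 0 := by
    intro u K
    rw [Finset.sum_range_succ', Finset.sum_eq_zero]
    · simp
    · intro b _; simp
  have hs := dim.tendsto_slope_zero_right
  have hlim := le_of_tendsto hs (b := 0) (by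
    filter_upwards [self_mem_nhdsWithin] with ε hε
    have h3 := hle ε hε
    simp only [Function.comp, Pi.mul_apply, zero_add, smul_eq_mul]
    rw [hz (fun b => c 1 b), hz (fun b => c 0 b)]
    simp only [Complex.imCLM_apply]
    have h4 : (((c 1 0 : ℝ) : ℂ) * star ((c 0 0 : ℝ) : ℂ)).im = 0 := by simp
    rw [h4, sub_zero]
    exact mul_nonpos_of_nonneg_of_nonpos (inv_nonneg.mpr (le_of_lt hε)) h3)
  rw [hz (fun b => c 1 b), hz (fun b => c 0 b)] at hlim
  simp at hlim
  linarith

theorem SM.loc0 (a : ℕ) : ∀ {M : ℕ} {c : ℕ → ℕ → ℝ}, SM M c → 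
    c a 0 * c (a + 1) 1 ≤ c (a + 1) 0 * c a 1 := by
  induction a with
  | zero => intro M c h; simpa using h.base
  | succ a ih =>
    intro M c h
    rcases M with _ | M
    · rw [h.zero (a + 1) 0 (by omega), zero_mul]; exact mul_nonneg (h.nonneg _ _) (h.nonneg _ _)
    have := ih h.deriv
    push_cast at this
    have hp : (0:ℝ) < (a + 1) * (a + 1 + 1) := by positivity
    refine le_of_mul_le_mul_left ?_ hp
    linarith

theorem SM.loc (a b : ℕ) : ∀ {M : ℕ} {c : ℕ → ℕ → ℝ}, SM M c → 
    c a b * c (a + 1) (b + 1) ≤ c (a + 1) b * c a (b + 1) := by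
  induction a with
  | zero => intro M c h; have := SM.loc0 b h.swap; simp only [zero_add] at *; linarith
  | succ a ih =>
    intro M c h
    rcases M with _ | M
    · rw [h.zero (a + 1) b (by omega), zero_mul]; exact mul_nonneg (h.nonneg _ _) (h.nonneg _ _)
    have := ih h.deriv
    push_cast at this
    have hp : (0:ℝ) < (a + 1) * (a + 1 + 1) := by positivity
    refine le_of_mul_le_mul_left ?_ hp
    linarith

theorem chain_step {p q r s t u : ℝ} (hr : 0 < r) (hs : 0 < s) (hu : 0 ≤ u) (hq : 0 ≤ q)
    (h1 : p * s ≤ r * q) (h2 : r * u ≤ t * s) : p * u ≤ t * q := by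
  have h3 : (p * s) * (r * u) ≤ (r * q) * (t * s) := mul_le_mul h1 h2 (by positivity) (by positivity)
  refine le_of_mul_le_mul_left ?_ (mul_pos hr hs)
  linarith

theorem SM.row {M : ℕ} {c : ℕ → ℕ → ℝ} (h : SM M c) (a a' b : ℕ) (ha : a ≤ a') (hM : a' + b + 1 ≤ M) :
    c a b * c a' (b + 1) ≤ c a' b * c a (b + 1) := by
  induction a', ha using Nat.le_induction with
  | base => exact le_rfl
  | succ k hk ih =>
    exact chain_step (h.pos k b (by omega)) (h.pos k (b + 1) (by omega)) (h.nonneg _ _) (h.nonneg _ _)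
      (ih (by omega)) (h.loc k b)

theorem SM.full {M : ℕ} {c : ℕ → ℕ → ℝ} (h : SM M c) (a a' b b' : ℕ) (ha : a ≤ a') (hb : b ≤ b') :
    c a b * c a' b' ≤ c a' b * c a b' := by
  rcases Nat.lt_or_ge M (a' + b') with hM | hM
  · rw [h.zero a' b' hM, mul_zero]; exact mul_nonneg (h.nonneg _ _) (h.nonneg _ _)
  induction b', hb using Nat.le_induction with
  | base => exact (mul_comm _ _).le
  | succ k hk ih =>
    have h1 := ih (by omega)
    have h2 := h.row a a' k ha (by omega)
    rw [mul_comm (c a' b)] at h1 ⊢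
    exact chain_step (p := c a b) (s := c a' k) (r := c a k) (h.pos a k (by omega)) (h.pos a' k (by omega)) (h.nonneg _ _) (h.nonneg _ _)
      (by linarith) (by linarith)

theorem final_sum (n : ℕ) (c : ℕ → ℕ → ℝ) (p q : ℕ → Prop) [DecidablePred p] [DecidablePred q]
    (hp : ∀ a a', ¬ p a → p a' → a ≤ a') (hq : ∀ a a', ¬ q a → q a' → a ≤ a')
    (h : ∀ a a' b b' : ℕ, a ≤ a' → b ≤ b' → c a b * c a' b' ≤ c a' b * c a b')
    (htot : ∑ a ∈ Finset.range n, ∑ b ∈ Finset.range n, c a b = 1) :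
    ∑ a ∈ Finset.range n with p a, ∑ b ∈ Finset.range n with q b, c a b ≤
      (∑ a ∈ Finset.range n with p a, ∑ b ∈ Finset.range n, c a b) * 
      (∑ a ∈ Finset.range n, ∑ b ∈ Finset.range n with q b, c a b) := by
  have e : ∀ f : ℕ → ℝ, ∀ p : ℕ → Prop, ∀ [DecidablePred p], ∑ a ∈ Finset.range n, f a = 
      ∑ a ∈ Finset.range n with p a, f a + ∑ a ∈ Finset.range n with ¬ p a, f a :=
    fun f p _ => (Finset.sum_filter_add_sum_filter_not _ _ _).symm
  rw [e _ p] at htot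
  simp only [e _ q, Finset.sum_add_distrib] at htot
  rw [e _ p]
  simp only [e _ q, Finset.sum_add_distrib]
  set HH := ∑ a ∈ Finset.range n with p a, ∑ b ∈ Finset.range n with q b, c a b
  set HL := ∑ a ∈ Finset.range n with p a, ∑ b ∈ Finset.range n with ¬ q b, c a b with hHL
  set LH := ∑ a ∈ Finset.range n with ¬ p a, ∑ b ∈ Finset.range n with q b, c a b with hLH
  set LL := ∑ a ∈ Finset.range n with ¬ p a, ∑ b ∈ Finset.range n with ¬ q b, c a b with hLL
  have key : LL * HH ≤ HL * LH := by
    have e1 : HL * LH = ∑ a ∈ Finset.range n with ¬ p a, ∑ b ∈ Finset.range n with ¬ q b, 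
        ∑ a' ∈ Finset.range n with p a', ∑ b' ∈ Finset.range n with q b', c a' b * c a b' := by
      rw [hHL, hLH, mul_comm, Finset.sum_mul]
      refine Finset.sum_congr rfl fun a _ => ?_
      rw [Finset.mul_sum, Finset.sum_comm (s := Finset.filter (fun b => ¬ q b) (Finset.range n))]
      refine Finset.sum_congr rfl fun a' _ => ?_
      rw [mul_comm, Finset.sum_mul]
      refine Finset.sum_congr rfl fun b _ => ?_
      rw [Finset.mul_sum]
    have e2 : LL * HH = ∑ a ∈ Finset.range n with ¬ p a, ∑ b ∈ Finset.range n with ¬ q b, 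
        ∑ a' ∈ Finset.range n with p a', ∑ b' ∈ Finset.range n with q b', c a b * c a' b' := by
      simp only [hLL, Finset.sum_mul]
      refine Finset.sum_congr rfl fun a _ => Finset.sum_congr rfl fun b _ => ?_
      rw [Finset.mul_sum]
      refine Finset.sum_congr rfl fun a' _ => ?_
      rw [Finset.mul_sum]
    rw [e1, e2]
    refine Finset.sum_le_sum fun a ha => Finset.sum_le_sum fun b hb => Finset.sum_le_sum fun a' ha' =>
      Finset.sum_le_sum fun b' hb' => ?_
    simp only [Finset.mem_filter] at ha hb ha' hb'
    exact h a a' b b' (hp _ _ ha.2 ha'.2) (hq _ _ hb.2 hb'.2)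
  have e3 : HH * (HH + HL + (LH + LL)) = HH := by rw [htot, mul_one]
  nlinarith

end
end NegAssoc

namespace NegAssoc
noncomputable section
open Matrix ComplexConjugate

variable {N : ℕ}

/-- product measure on the torus -/
def piC (N : ℕ) : Measure (Fin N → Circle) := Measure.pi fun _ => haarC

instance : IsProbabilityMeasure (piC N) := by unfold piC; infer_instance
instance : (piC N).IsOpenPosMeasure := by unfold piC; infer_instance

/-- Gram matrix of a weight -/
def GG (N : ℕ) (f : Circle → ℂ) : Matrix (Fin N) (Fin N) ℂ :=
  fun i j => ∫ z, f z * ((z : ℂ) ^ (i : ℕ) * conj (z : ℂ) ^ (j : ℕ)) ∂haarC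

theorem integrable_mon {f : Circle → ℂ} (hf : Integrable f haarC) (i j : ℕ) :
    Integrable (fun z : Circle => f z * ((z : ℂ) ^ i * conj (z : ℂ) ^ j)) haarC := by
  have hc : Continuous fun z : Circle => ((z : ℂ) ^ i * conj (z : ℂ) ^ j) := by fun_prop
  refine hf.mul_bdd (c := 1) hc.aestronglyMeasurable (Eventually.of_forall fun z => ?_)
  rw [norm_mul, norm_pow, norm_pow, RCLike.norm_conj, Circle.norm_coe z, one_pow, one_pow, one_mul]

theorem andreief {f : Circle → ℂ} (hf : Integrable f haarC) :
    ∫ d, (∏ p, f (d p)) * Ww d ∂(piC N) = N.factorial * (GG N f).det := by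
  have h1 : ∀ d : Fin N → Circle, (∏ p, f (d p)) * Ww d = ∑ σ : Equiv.Perm (Fin N), ∑ τ : Equiv.Perm (Fin N),
      ((Equiv.Perm.sign σ : ℤ) : ℂ) * ((Equiv.Perm.sign τ : ℤ) : ℂ) *
        ∏ p, (f (d p) * ((d p : ℂ) ^ (σ p : ℕ) * conj (d p : ℂ) ^ (τ p : ℕ))) := by
    intro d
    have hdet : (vandermonde (fun p => (d p : ℂ))).det = ∑ σ : Equiv.Perm (Fin N), 
        ((Equiv.Perm.sign σ : ℤ) : ℂ) * ∏ p, (d p : ℂ) ^ (σ p : ℕ) := by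
      rw [← Matrix.det_transpose, Matrix.det_apply']
      rfl
    rw [Ww_vand, hdet, map_sum, Finset.sum_mul_sum, Finset.mul_sum]
    refine Finset.sum_congr rfl fun σ _ => ?_
    rw [Finset.mul_sum]
    refine Finset.sum_congr rfl fun τ _ => ?_
    simp only [Finset.prod_mul_distrib, map_mul, map_prod, map_pow, map_intCast]
    ring
  have hInt : ∀ σ τ : Equiv.Perm (Fin N), Integrable (fun d : Fin N → Circle => 
      ((Equiv.Perm.sign σ : ℤ) : ℂ) * ((Equiv.Perm.sign τ : ℤ) : ℂ) *
        ∏ p, (f (d p) * ((d p : ℂ) ^ (σ p : ℕ) * conj (d p : ℂ) ^ (τ p : ℕ)))) (piC N) := by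
    intro σ τ
    exact (Integrable.fintype_prod fun p => integrable_mon hf (σ p) (τ p)).const_mul _
  simp only [h1]
  rw [integral_finsetSum _ fun σ _ => integrable_finsetSum _ fun τ _ => hInt σ τ]
  have h2 : ∀ σ : Equiv.Perm (Fin N), ∫ d, ∑ τ : Equiv.Perm (Fin N),
      ((Equiv.Perm.sign σ : ℤ) : ℂ) * ((Equiv.Perm.sign τ : ℤ) : ℂ) *
        ∏ p, (f (d p) * ((d p : ℂ) ^ (σ p : ℕ) * conj (d p : ℂ) ^ (τ p : ℕ))) ∂(piC N) = (GG N f).det := by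
    intro σ
    rw [integral_finsetSum _ fun τ _ => hInt σ τ]
    have h3 : ∀ τ : Equiv.Perm (Fin N), ∫ d : Fin N → Circle, ((Equiv.Perm.sign σ : ℤ) : ℂ) * ((Equiv.Perm.sign τ : ℤ) : ℂ) *
        ∏ p, (f (d p) * ((d p : ℂ) ^ (σ p : ℕ) * conj (d p : ℂ) ^ (τ p : ℕ))) ∂(piC N) = 
        ((Equiv.Perm.sign σ : ℤ) : ℂ) * (((Equiv.Perm.sign τ : ℤ) : ℂ) * ∏ p, (GG N f)ᵀ (τ p) (σ p)) := by
      intro τ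
      rw [integral_const_mul, mul_assoc]
      congr 2
      exact integral_fintype_prod_eq_prod (fun p z => f z * ((z : ℂ) ^ (σ p : ℕ) * conj (z : ℂ) ^ (τ p : ℕ)))
    simp only [h3]
    rw [← Finset.mul_sum]
    have h4 := Matrix.det_apply' (((GG N f)ᵀ).submatrix id σ)
    simp only [Matrix.submatrix_apply, id] at h4
    rw [← h4, Matrix.det_permute', Matrix.det_transpose, ← mul_assoc, ← Int.cast_mul, ← Units.val_mul,
      Int.units_mul_self]
    simp
  simp only [h2]
  simp [Fintype.card_perm]

theorem exists_inj (N : ℕ) : ∃ d : Fin N → Circle, Function.Injective d := by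
  have : Infinite Circle := by
    have : Infinite (Set.Ioc (-π) π) := (Set.Ioc_infinite (by linarith [Real.pi_pos])).to_subtype
    exact Infinite.of_injective _ Circle.argEquiv.symm.injective
  exact ⟨fun i => Infinite.natEmbedding Circle i, fun i j h => Fin.ext ((Infinite.natEmbedding Circle).injective h)⟩

theorem integral_ww_pos : 0 < ∫ d, ww d ∂(piC N) := by
  obtain ⟨d, hd⟩ := exists_inj N
  have hne : ww d ≠ 0 := by
    unfold ww
    rw [ne_eq, Complex.normSq_eq_zero]
    exact Matrix.det_vandermonde_ne_zero_iff.mpr (Circle.coe_injective.comp hd)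
  exact continuous_ww.integral_pos_of_hasCompactSupport_nonneg_nonzero
    (HasCompactSupport.of_compactSpace _) ww_nonneg hne

/-- trigonometric polynomial -/
def tp (v : Fin N → ℂ) (z : Circle) : ℂ := ∑ j, v j * conj (z : ℂ) ^ (j : ℕ)

theorem continuous_tp (v : Fin N → ℂ) : Continuous (tp v) := by unfold tp; fun_prop

theorem integral_tp_pos {v : Fin N → ℂ} (hv : v ≠ 0) : 0 < ∫ z, Complex.normSq (tp v z) ∂haarC := by
  have hc : Continuous fun z => Complex.normSq (tp v z) := Complex.continuous_normSq.comp (continuous_tp v)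
  have hex : ∃ z, Complex.normSq (tp v z) ≠ 0 := by
    by_contra! h0
    obtain ⟨d, hd⟩ := exists_inj N
    apply hv
    have hdet : (vandermonde (fun p => conj (d p : ℂ))).det ≠ 0 :=
      Matrix.det_vandermonde_ne_zero_iff.mpr ((RingHom.injective _).comp (Circle.coe_injective.comp hd))
    refine Matrix.eq_zero_of_mulVec_eq_zero hdet (funext fun p => ?_)
    have := Complex.normSq_eq_zero.mp (h0 (d p))
    rw [Pi.zero_apply, ← this]
    simp [Matrix.mulVec, dotProduct, tp, vandermonde_apply, mul_comm]
  obtain ⟨z, hz⟩ := hex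
  exact hc.integral_pos_of_hasCompactSupport_nonneg_nonzero (HasCompactSupport.of_compactSpace _)
    (fun z => Complex.normSq_nonneg _) hz

theorem quad_form (v : Fin N → ℂ) {f : Circle → ℂ} (hf : Integrable f haarC) :
    star v ⬝ᵥ (GG N f *ᵥ v) = ∫ z, f z * (Complex.normSq (tp v z) : ℂ) ∂haarC := by
  have h1 : ∀ z : Circle, f z * (Complex.normSq (tp v z) : ℂ) = ∑ i, ∑ j, (conj (v i) * v j) * 
      (f z * ((z : ℂ) ^ (i : ℕ) * conj (z : ℂ) ^ (j : ℕ))) := by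
    intro z
    rw [← Complex.mul_conj, tp, map_sum, mul_comm (∑ j, _), Finset.sum_mul_sum, Finset.mul_sum]
    refine Finset.sum_congr rfl fun i _ => ?_
    rw [Finset.mul_sum]
    refine Finset.sum_congr rfl fun j _ => ?_
    simp only [map_mul, map_pow, Complex.conj_conj]
    ring
  have hInt : ∀ i j : Fin N, Integrable (fun z : Circle => (conj (v i) * v j) *
      (f z * ((z : ℂ) ^ (i : ℕ) * conj (z : ℂ) ^ (j : ℕ)))) haarC :=
    fun i j => (integrable_mon hf i j).const_mul _
  rw [integral_congr_ae (Eventually.of_forall h1)]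
  rw [integral_finsetSum _ fun i _ => integrable_finsetSum _ fun j _ => hInt i j]
  simp only [dotProduct, Matrix.mulVec]
  refine Finset.sum_congr rfl fun i _ => ?_
  rw [integral_finsetSum _ fun j _ => hInt i j, Finset.mul_sum]
  refine Finset.sum_congr rfl fun j _ => ?_
  rw [integral_const_mul]
  simp only [GG, Pi.star_apply, Complex.star_def]
  ring

end
end NegAssoc

namespace NegAssoc
noncomputable section
open Matrix ComplexConjugate

variable {N : ℕ}

/-- number of labels equal to `k` -/
def nL (k : Fin 3) (κ : Fin N → Fin 3) : ℕ := (Finset.univ.filter fun p => κ p = k).card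

/-- weighted integral of a labelling -/
def EE (w : Fin 3 → Circle → ℝ) (κ : Fin N → Fin 3) : ℝ :=
  ∫ d, (∏ p, w (κ p) (d p)) * ww d ∂(piC N)

/-- coefficients of the generating function -/
def cw (N : ℕ) (w : Fin 3 → Circle → ℝ) (a b : ℕ) : ℝ :=
  ∑ κ : Fin N → Fin 3 with nL 0 κ = a ∧ nL 1 κ = b, EE w κ

theorem nL_add_le (κ : Fin N → Fin 3) : nL 0 κ + nL 1 κ ≤ N := by
  unfold nL
  rw [← Finset.card_union_of_disjoint]
  · exact (Finset.card_le_univ _).trans (by simp)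
  · rw [Finset.disjoint_filter]
    intro p _ h h'
    rw [h] at h'
    exact absurd h' (by decide)

theorem exists_kappa {a b : ℕ} (h : a + b ≤ N) : ∃ κ : Fin N → Fin 3, nL 0 κ = a ∧ nL 1 κ = b := by
  refine ⟨fun p => if p.val < a then 0 else if p.val < a + b then 1 else 2, ?_, ?_⟩
  · unfold nL
    have : (Finset.univ.filter fun p : Fin N => (if p.val < a then (0 : Fin 3) else if p.val < a + b then 1 else 2) = 0)
        = Finset.univ.filter fun p : Fin N => p.val < a := by
      ext p; simp only [Finset.mem_filter, Finset.mem_univ, true_and]; split_ifs <;> simp_all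
    rw [this, Fin.card_filter_val_lt]
    omega
  · unfold nL
    have : (Finset.univ.filter fun p : Fin N => (if p.val < a then (0 : Fin 3) else if p.val < a + b then 1 else 2) = 1)
        = (Finset.univ.filter fun p : Fin N => p.val < a + b) \ (Finset.univ.filter fun p : Fin N => p.val < a) := by
      ext p; simp only [Finset.mem_filter, Finset.mem_univ, true_and, Finset.mem_sdiff]; split_ifs <;> simp_all
    rw [this, Finset.card_sdiff_of_subset, Fin.card_filter_val_lt, Fin.card_filter_val_lt]
    · omega
    · intro p; simp; omega

theorem cw_sum (w : Fin 3 → Circle → ℝ) (x y : ℂ) :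
    ∑ a ∈ Finset.range (N + 1), ∑ b ∈ Finset.range (N + 1), (cw N w a b : ℂ) * x ^ a * y ^ b =
      ∑ κ : Fin N → Fin 3, (EE w κ : ℂ) * ∏ p, (![x, y, 1] : Fin 3 → ℂ) (κ p) := by
  have hprod : ∀ κ : Fin N → Fin 3, ∏ p, (![x, y, 1] : Fin 3 → ℂ) (κ p) = x ^ nL 0 κ * y ^ nL 1 κ := by
    intro κ
    have h : ∀ k : Fin 3, (![x, y, 1] : Fin 3 → ℂ) k = (if k = 0 then x else 1) * (if k = 1 then y else 1) := by
      intro k; fin_cases k <;> simp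
    simp only [h]
    rw [Finset.prod_mul_distrib, Finset.prod_ite, Finset.prod_ite]
    simp [nL]
  simp only [hprod]
  rw [← Finset.sum_product']
  rw [← Finset.sum_fiberwise_of_maps_to (s := Finset.univ) (t := Finset.range (N + 1) ×ˢ Finset.range (N + 1))
    (g := fun κ : Fin N → Fin 3 => (nL 0 κ, nL 1 κ))]
  · refine Finset.sum_congr rfl fun ab _ => ?_
    unfold cw
    rw [Complex.ofReal_sum, mul_assoc, Finset.sum_mul]
    have : (Finset.univ.filter fun κ : Fin N → Fin 3 => (nL 0 κ, nL 1 κ) = ab) =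
      Finset.univ.filter fun κ : Fin N → Fin 3 => nL 0 κ = ab.1 ∧ nL 1 κ = ab.2 := by
      ext κ; simp [Prod.ext_iff]
    rw [this]
    refine Finset.sum_congr rfl fun κ hκ => ?_
    rw [Finset.mem_filter] at hκ
    rw [hκ.2.1, hκ.2.2]
  · intro κ _
    have := nL_add_le κ
    simp; omega

/-- bounded positive weights -/
structure GoodW (w : Fin 3 → Circle → ℝ) : Prop where
  meas : ∀ k, Measurable (w k)
  bdd : ∃ K, ∀ k z, w k z ≤ K
  low : ∃ ε, 0 < ε ∧ ∀ k z, ε ≤ w k z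

theorem GoodW.norm_bdd {w} (h : GoodW w) : ∃ K, 0 ≤ K ∧ ∀ k z, ‖w k z‖ ≤ K := by
  obtain ⟨K, hK⟩ := h.bdd
  obtain ⟨ε, hε, hl⟩ := h.low
  refine ⟨K, ?_, fun k z => ?_⟩
  · linarith [hK 0 1, hl 0 1]
  · rw [Real.norm_of_nonneg (by linarith [hl k z])]; exact hK k z

theorem GoodW.integrable {w} (h : GoodW w) (k) : Integrable (w k) haarC := by
  obtain ⟨K, -, hK⟩ := h.norm_bdd
  exact Integrable.of_bound (h.meas k).aestronglyMeasurable K (Eventually.of_forall fun z => hK k z)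

theorem integrable_ww : Integrable (ww (N := N)) (piC N) := integrable_of_continuous _ continuous_ww

theorem GoodW.integrable_prod {w} (h : GoodW w) (κ : Fin N → Fin 3) :
    Integrable (fun d : Fin N → Circle => (∏ p, w (κ p) (d p)) * ww d) (piC N) := by
  obtain ⟨K, hK0, hK⟩ := h.norm_bdd
  refine integrable_ww.bdd_mul (c := K ^ N) ?_ (Eventually.of_forall fun d => ?_)
  · refine Measurable.aestronglyMeasurable ?_
    exact Finset.measurable_prod _ fun p _ => (h.meas _).comp (measurable_pi_apply p)
  · rw [norm_prod]
    refine (Finset.prod_le_prod (fun _ _ => norm_nonneg _) fun p _ => hK (κ p) (d p)).trans ?_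
    simp

theorem GoodW.EE_pos {w} (h : GoodW w) (κ : Fin N → Fin 3) : 0 < EE w κ := by
  obtain ⟨ε, hε, hl⟩ := h.low
  have h1 : ∫ d, ε ^ N * ww d ∂(piC N) ≤ EE w κ := by
    refine integral_mono (integrable_ww.const_mul _) (h.integrable_prod κ) fun d => ?_
    refine mul_le_mul_of_nonneg_right ?_ (ww_nonneg d)
    calc ε ^ N = ∏ _p : Fin N, ε := by simp
      _ ≤ _ := Finset.prod_le_prod (fun _ _ => hε.le) fun p _ => hl _ _
  rw [integral_const_mul] at h1
  exact lt_of_lt_of_le (mul_pos (pow_pos hε N) integral_ww_pos) h1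

theorem GoodW.sum_eq {w} (h : GoodW w) (X : Fin 3 → ℂ) :
    ∑ κ : Fin N → Fin 3, (EE w κ : ℂ) * ∏ p, X (κ p) =
      N.factorial * (GG N (fun z => ∑ k, X k * (w k z : ℂ))).det := by
  have hi : Integrable (fun z => ∑ k, X k * (w k z : ℂ)) haarC :=
    integrable_finsetSum _ fun k _ => (h.integrable k).ofReal.const_mul _
  rw [← andreief hi]
  have h1 : ∀ d : Fin N → Circle, (∏ p, ∑ k, X k * (w k (d p) : ℂ)) * Ww d =
      ∑ κ : Fin N → Fin 3, (∏ p, X (κ p)) * (((∏ p, w (κ p) (d p)) * ww d : ℝ) : ℂ) := by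
    intro d
    rw [Finset.prod_univ_sum, Fintype.piFinset_univ, Finset.sum_mul, Ww_ofReal]
    refine Finset.sum_congr rfl fun κ _ => ?_
    rw [Finset.prod_mul_distrib]
    push_cast
    ring
  rw [integral_congr_ae (Eventually.of_forall h1)]
  rw [integral_finsetSum _ fun κ _ => (h.integrable_prod κ).ofReal.const_mul _]
  refine Finset.sum_congr rfl fun κ _ => ?_
  rw [integral_const_mul, integral_complex_ofReal, mul_comm]
  rfl

theorem GoodW.quad {w} (h : GoodW w) {v : Fin N → ℂ} (hv : v ≠ 0) (k : Fin 3) :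
    0 < ∫ z, w k z * Complex.normSq (tp v z) ∂haarC := by
  obtain ⟨ε, hε, hl⟩ := h.low
  obtain ⟨K, -, hK⟩ := h.norm_bdd
  have hc : Continuous fun z => Complex.normSq (tp v z) := Complex.continuous_normSq.comp (continuous_tp v)
  have hi := integrable_of_continuous haarC hc
  have h1 : ∫ z, ε * Complex.normSq (tp v z) ∂haarC ≤ ∫ z, w k z * Complex.normSq (tp v z) ∂haarC := by
    refine integral_mono (hi.const_mul _) ?_ fun z => ?_
    · exact hi.bdd_mul (h.meas k).aestronglyMeasurable (Eventually.of_forall fun z => hK k z)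
    · exact mul_le_mul_of_nonneg_right (hl k z) (Complex.normSq_nonneg _)
  rw [integral_const_mul] at h1
  exact lt_of_lt_of_le (mul_pos hε (integral_tp_pos hv)) h1

theorem GoodW.sm {w} (h : GoodW w) : SM N (cw N w) where
  pos := by
    intro a b hab
    obtain ⟨κ, hκ⟩ := exists_kappa hab
    refine Finset.sum_pos (fun κ _ => h.EE_pos κ) ⟨κ, by simpa using hκ⟩
  zero := by
    intro a b hab
    refine Finset.sum_eq_zero fun κ hκ => ?_
    rw [Finset.mem_filter] at hκ
    have := nL_add_le κ
    omega
  stable := by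
    intro x y hx hy
    rw [cw_sum, h.sum_eq]
    refine mul_ne_zero (by exact_mod_cast N.factorial_ne_zero) fun hdet => ?_
    obtain ⟨v, hv, hv0⟩ := Matrix.exists_mulVec_eq_zero_iff.mpr hdet
    obtain ⟨K, -, hK⟩ := h.norm_bdd
    set X : Fin 3 → ℂ := ![x, y, 1] with hX
    have hi : Integrable (fun z => ∑ k, X k * (w k z : ℂ)) haarC :=
      integrable_finsetSum _ fun k _ => (h.integrable k).ofReal.const_mul _
    have hq := quad_form v hi
    rw [hv0, dotProduct_zero] at hq
    have hc : Continuous fun z => Complex.normSq (tp v z) := Complex.continuous_normSq.comp (continuous_tp v)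
    have hiw : ∀ k, Integrable (fun z => w k z * Complex.normSq (tp v z)) haarC := fun k =>
      (integrable_of_continuous haarC hc).bdd_mul (h.meas k).aestronglyMeasurable
        (Eventually.of_forall fun z => hK k z)
    have h1 : ∀ z : Circle, (∑ k, X k * (w k z : ℂ)) * (Complex.normSq (tp v z) : ℂ) =
        ∑ k, X k * ((w k z * Complex.normSq (tp v z) : ℝ) : ℂ) := by
      intro z
      rw [Finset.sum_mul]
      refine Finset.sum_congr rfl fun k _ => ?_
      push_cast
      ring
    rw [integral_congr_ae (Eventually.of_forall h1)] at hq
    rw [integral_finsetSum _ fun k _ => (hiw k).ofReal.const_mul _] at hq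
    simp only [integral_const_mul, integral_complex_ofReal] at hq
    have him := congrArg Complex.im hq
    have p0 := h.quad hv 0
    have p1 := h.quad hv 1
    simp [Fin.sum_univ_three, hX] at him
    have := mul_pos hx p0
    have := mul_pos hy p1
    linarith

end
end NegAssoc

namespace NegAssoc
noncomputable section
open Matrix ComplexConjugate Topology

variable {N : ℕ}

/-- indicator weights -/
def iw (l : Circle → Fin 3) (k : Fin 3) (z : Circle) : ℝ := if l z = k then 1 else 0

theorem measurable_iw {l : Circle → Fin 3} (hl : Measurable l) (k : Fin 3) : Measurable (iw l k) := by
  unfold iw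
  exact Measurable.ite (hl (measurableSet_singleton k)) measurable_const measurable_const

theorem iw_nonneg (l : Circle → Fin 3) (k z) : 0 ≤ iw l k z := by unfold iw; split_ifs <;> norm_num
theorem iw_le_one (l : Circle → Fin 3) (k z) : iw l k z ≤ 1 := by unfold iw; split_ifs <;> norm_num

/-- perturbed weights -/
def iwn (l : Circle → Fin 3) (n : ℕ) (k : Fin 3) (z : Circle) : ℝ := iw l k z + 1 / ((n : ℝ) + 1)

theorem eps_pos (n : ℕ) : 0 < 1 / ((n : ℝ) + 1) := by positivity
theorem eps_le (n : ℕ) : 1 / ((n : ℝ) + 1) ≤ 1 := by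
  rw [div_le_one (by positivity)]; linarith [Nat.cast_nonneg (α := ℝ) n]

theorem good_iwn {l : Circle → Fin 3} (hl : Measurable l) (n : ℕ) : GoodW (iwn l n) where
  meas k := (measurable_iw hl k).add_const _
  bdd := ⟨2, fun k z => by unfold iwn; linarith [iw_le_one l k z, eps_le n]⟩
  low := ⟨_, eps_pos n, fun k z => by unfold iwn; linarith [iw_nonneg l k z]⟩

theorem tendsto_EE {l : Circle → Fin 3} (hl : Measurable l) (κ : Fin N → Fin 3) :
    Tendsto (fun n => EE (iwn l n) κ) atTop (𝓝 (EE (iw l) κ)) := by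
  unfold EE
  refine tendsto_integral_of_dominated_convergence (fun d => 2 ^ N * ww d)
    (fun n => ((good_iwn hl n).integrable_prod κ).aestronglyMeasurable) (integrable_ww.const_mul _) ?_ ?_
  · refine fun n => Eventually.of_forall fun d => ?_
    rw [norm_mul, norm_prod, Real.norm_of_nonneg (ww_nonneg d)]
    refine mul_le_mul_of_nonneg_right ?_ (ww_nonneg d)
    refine (Finset.prod_le_prod (fun _ _ => norm_nonneg _) (g := fun _ => 2) fun p _ => ?_).trans ?_
    · unfold iwn
      rw [Real.norm_of_nonneg (by linarith [iw_nonneg l (κ p) (d p), eps_pos n])]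
      linarith [iw_le_one l (κ p) (d p), eps_le n]
    · simp
  · refine Eventually.of_forall fun d => ?_
    refine Tendsto.mul_const _ ?_
    refine tendsto_finsetProd _ fun p _ => ?_
    unfold iwn
    simpa using tendsto_const_nhds.add (tendsto_one_div_add_atTop_nhds_zero_nat (𝕜 := ℝ))

theorem tendsto_cw {l : Circle → Fin 3} (hl : Measurable l) (a b : ℕ) :
    Tendsto (fun n => cw N (iwn l n) a b) atTop (𝓝 (cw N (iw l) a b)) :=
  tendsto_finsetSum _ fun κ _ => tendsto_EE hl κ

theorem cw_ineq {l : Circle → Fin 3} (hl : Measurable l) (a a' b b' : ℕ) (ha : a ≤ a') (hb : b ≤ b') :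
    cw N (iw l) a b * cw N (iw l) a' b' ≤ cw N (iw l) a' b * cw N (iw l) a b' :=
  le_of_tendsto_of_tendsto' ((tendsto_cw hl a b).mul (tendsto_cw hl a' b'))
    ((tendsto_cw hl a' b).mul (tendsto_cw hl a b')) fun n => (good_iwn hl n).sm.full a a' b b' ha hb

/-- Weyl measure on the torus -/
def muW (N : ℕ) : Measure (Fin N → Circle) := (piC N).withDensity fun d => ENNReal.ofReal (ww d)

instance : IsFiniteMeasure (muW N) := by
  unfold muW
  exact isFiniteMeasure_withDensity_ofReal integrable_ww.2

theorem muW_real {S : Set (Fin N → Circle)} (hS : MeasurableSet S) :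
    (muW N).real S = ∫ d in S, ww d ∂(piC N) := by
  unfold muW
  rw [measureReal_def, withDensity_apply _ hS, ← ofReal_integral_eq_lintegral_ofReal integrable_ww.integrableOn
    (Eventually.of_forall ww_nonneg), ENNReal.toReal_ofReal]
  exact integral_nonneg ww_nonneg

theorem measurable_comp_l {l : Circle → Fin 3} (hl : Measurable l) :
    Measurable fun (d : Fin N → Circle) (p : Fin N) => l (d p) :=
  measurable_pi_lambda _ fun p => hl.comp (measurable_pi_apply p)

theorem EE_iw {l : Circle → Fin 3} (hl : Measurable l) (κ : Fin N → Fin 3) :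
    EE (iw l) κ = (muW N).real ((fun (d : Fin N → Circle) (p : Fin N) => l (d p)) ⁻¹' {κ}) := by
  have hS := measurable_comp_l (N := N) hl (measurableSet_singleton κ)
  rw [muW_real hS, ← integral_indicator hS]
  unfold EE
  refine integral_congr_ae (Eventually.of_forall fun d => ?_)
  by_cases h : (fun p => l (d p)) = κ
  · have h' : ∀ p, l (d p) = κ p := fun p => congrFun h p
    simp [iw, h']
  · rw [Set.indicator_of_notMem (by simpa using h)]
    obtain ⟨p, hp⟩ := Function.ne_iff.mp h
    have hz : ∏ p, iw l (κ p) (d p) = 0 := Finset.prod_eq_zero (Finset.mem_univ p) (if_neg hp)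
    simp only [hz, zero_mul]

open Classical in
theorem sum_cw {l : Circle → Fin 3} (hl : Measurable l) (p q : ℕ → Prop) :
    ∑ a ∈ Finset.range (N + 1) with p a, ∑ b ∈ Finset.range (N + 1) with q b, cw N (iw l) a b =
      (muW N).real {d | p (nL 0 fun i => l (d i)) ∧ q (nL 1 fun i => l (d i))} := by
  have h1 : {d : Fin N → Circle | p (nL 0 fun i => l (d i)) ∧ q (nL 1 fun i => l (d i))} =
      (fun (d : Fin N → Circle) (p : Fin N) => l (d p)) ⁻¹'
        ((Finset.univ.filter fun κ : Fin N → Fin 3 => p (nL 0 κ) ∧ q (nL 1 κ) : Finset _) : Set (Fin N → Fin 3)) := by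
    ext d; simp
  rw [h1, ← sum_measureReal_preimage_singleton _ fun κ _ => measurable_comp_l hl (measurableSet_singleton κ)]
  rw [← Finset.sum_product']
  rw [← Finset.sum_fiberwise_of_maps_to 
    (t := (Finset.range (N + 1)).filter p ×ˢ (Finset.range (N + 1)).filter q)
    (g := fun κ : Fin N → Fin 3 => (nL 0 κ, nL 1 κ))]
  · refine Finset.sum_congr rfl fun ab hab => ?_
    unfold cw
    simp only [EE_iw hl]
    refine Finset.sum_congr ?_ fun _ _ => rfl
    simp only [Finset.mem_product, Finset.mem_filter] at hab
    ext κ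
    simp only [Finset.mem_filter, Finset.mem_univ, true_and, Prod.ext_iff]
    constructor
    · rintro ⟨h, h'⟩
      refine ⟨⟨?_, ?_⟩, h, h'⟩
      · rw [h]; exact hab.1.2
      · rw [h']; exact hab.2.2
    · exact fun h => h.2
  · intro κ hκ
    have := nL_add_le κ
    simp at hκ
    simp [hκ]; omega

theorem muW_univ_pos : 0 < (muW N).real Set.univ := by
  rw [muW_real MeasurableSet.univ, setIntegral_univ]
  exact integral_ww_pos

theorem torus_ineq {l : Circle → Fin 3} (hl : Measurable l) (p q : ℕ → Prop)
    (hp : ∀ a a', ¬ p a → p a' → a ≤ a') (hq : ∀ a a', ¬ q a → q a' → a ≤ a') :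
    (muW N).real Set.univ * (muW N).real {d | p (nL 0 fun i => l (d i)) ∧ q (nL 1 fun i => l (d i))} ≤
     (muW N).real {d | p (nL 0 fun i => l (d i))} * (muW N).real {d | q (nL 1 fun i => l (d i))} := by
  classical
  have hZ := muW_univ_pos (N := N)
  set Z := (muW N).real Set.univ with hZd
  have e1 := sum_cw (N := N) hl p q
  have e2 := sum_cw (N := N) hl p (fun _ => True)
  have e3 := sum_cw (N := N) hl (fun _ => True) q
  have e4 := sum_cw (N := N) hl (fun _ => True) (fun _ => True)
  simp only [and_true, true_and, Finset.filter_true, Set.ofPred_true] at e2 e3 e4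
  rw [← hZd] at e4
  have key := final_sum (N + 1) (fun a b => Z⁻¹ * cw N (iw l) a b) p q hp hq ?_ ?_
  · simp only [← Finset.mul_sum] at key
    rw [e1, e2, e3] at key
    have := mul_le_mul_of_nonneg_left key (mul_pos hZ hZ).le
    field_simp at this
    linarith
  · intro a a' b b' ha hb
    have := cw_ineq (N := N) hl a a' b b' ha hb
    have := mul_le_mul_of_nonneg_left this (mul_pos (inv_pos.mpr hZ) (inv_pos.mpr hZ)).le
    linarith
  · simp only [← Finset.mul_sum]
    rw [e4, inv_mul_cancel₀ hZ.ne']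

end
end NegAssoc

namespace NegAssoc
noncomputable section
open Matrix ComplexConjugate Topology

variable {N : ℕ}

/-- angle in `[0, 2π)` -/
def ang (z : ℂ) : ℝ := if 0 ≤ Complex.arg z then Complex.arg z else Complex.arg z + 2 * π

theorem measurable_ang : Measurable ang := by
  unfold ang
  exact Measurable.ite (measurableSet_le measurable_const Complex.measurable_arg) Complex.measurable_arg
    (Complex.measurable_arg.add_const _)

open Classical in
/-- label of a point of the circle -/
def lab (A B : Set ℝ) (z : Circle) : Fin 3 :=
  if ang (z : ℂ) ∈ A then 0 else if ang (z : ℂ) ∈ B then 1 else 2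

theorem measurable_lab {A B : Set ℝ} (hA : MeasurableSet A) (hB : MeasurableSet B) : Measurable (lab A B) := by
  have hz : Measurable fun z : Circle => ang (z : ℂ) :=
    measurable_ang.comp (Continuous.measurable (by fun_prop))
  unfold lab
  exact Measurable.ite (hz hA) measurable_const (Measurable.ite (hz hB) measurable_const measurable_const)

theorem eigenAngles_Xi (x : XX N) :
    eigenAngles N (Xi x) = (Finset.univ : Finset (Fin N)).val.map fun p => ang (x.2 p : ℂ) := by
  have hVV : x.1.1 * x.1.1ᴴ = 1 := Matrix.mem_unitaryGroup_iff.mp x.1.2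
  have h1 : (Xi x).1.charpoly = ∏ p, (Polynomial.X - Polynomial.C (x.2 p : ℂ)) := by
    rw [coe_Xi, Matrix.charpoly_mul_comm, ← mul_assoc, hVV, one_mul, Matrix.charpoly_diagonal]
  have h2 : (Xi x).1.charpoly.roots = (Finset.univ : Finset (Fin N)).val.map fun p => (x.2 p : ℂ) := by
    rw [h1, ← Polynomial.roots_multiset_prod_X_sub_C
      ((Finset.univ : Finset (Fin N)).val.map fun p => (x.2 p : ℂ)), Multiset.map_map]
    rfl
  unfold eigenAngles
  rw [h2, Multiset.map_map]
  rfl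

open Classical in
theorem countAngles_Xi (x : XX N) (A : Set ℝ) :
    countAngles N (Xi x) A = (Finset.univ.filter fun p : Fin N => ang (x.2 p : ℂ) ∈ A).card := by
  unfold countAngles
  rw [eigenAngles_Xi, Multiset.filter_map, Multiset.card_map]
  rfl

theorem countA (x : XX N) (A B : Set ℝ) : countAngles N (Xi x) A = nL 0 fun p => lab A B (x.2 p) := by
  classical
  rw [countAngles_Xi]
  unfold nL lab
  congr 1
  ext p
  simp only [Finset.mem_filter, Finset.mem_univ, true_and]
  split_ifs <;> simp_all

theorem countB (x : XX N) (A B : Set ℝ) (hAB : Disjoint A B) :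
    countAngles N (Xi x) B = nL 1 fun p => lab A B (x.2 p) := by
  classical
  rw [countAngles_Xi]
  unfold nL lab
  congr 1
  ext p
  simp only [Finset.mem_filter, Finset.mem_univ, true_and]
  have hd : ang (x.2 p : ℂ) ∈ A → ang (x.2 p : ℂ) ∉ B := fun h => Set.disjoint_left.mp hAB h
  split_ifs <;> simp_all

theorem surj_Xi : Function.Surjective (Xi (N := N)) := by
  intro U
  obtain ⟨V, θ, h⟩ := exists_diag U
  refine ⟨(V⁻¹, fun p => Circle.exp (θ p)), Subtype.ext ?_⟩
  rw [coe_Xi, h]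
  have : (V⁻¹).1 = V.1ᴴ := rfl
  simp only [this, conjTranspose_conjTranspose, Circle.coe_exp]

instance : PolishSpace Circle := by
  have hc : Continuous fun z : Circle => (z : ℂ) := by fun_prop
  exact (hc.isClosedEmbedding Circle.coe_injective).polishSpace

instance : PolishSpace (Matrix.unitaryGroup (Fin N) ℂ) := by
  let io : Matrix.unitaryGroup (Fin N) ℂ → (Fin N → Fin N → ℂ) := fun U => U.1
  have hio : Continuous io := continuous_subtype_val
  exact (hio.isClosedEmbedding Subtype.val_injective).polishSpace

theorem rho_snd (P : Measure (Matrix.unitaryGroup (Fin N) ℂ)) [IsProbabilityMeasure P]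
    {T : Set (Fin N → Circle)} (hT : MeasurableSet T) : rho P (Prod.snd ⁻¹' T) = muW N T := by
  unfold rho muW
  rw [withDensity_apply _ (measurable_snd hT), withDensity_apply _ hT]
  have hmp : MeasurePreserving (Prod.snd : XX N → (Fin N → Circle)) (nuM P) (piC N) := measurePreserving_snd
  exact hmp.setLIntegral_comp_preimage hT (continuous_ww.measurable.ennreal_ofReal)

theorem prob_eq (P : Measure (Matrix.unitaryGroup (Fin N) ℂ)) [P.IsHaarMeasure] [IsProbabilityMeasure P]
    {S : Set (Matrix.unitaryGroup (Fin N) ℂ)} {T : Set (Fin N → Circle)} (hT : MeasurableSet T)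
    (h : Xi ⁻¹' S = Prod.snd ⁻¹' T) :
    (muW N).real Set.univ * P.real S = (muW N).real T := by
  have hXi : Measurable (Xi (N := N)) := continuous_Xi.measurable
  have key : ∀ {S : Set (Matrix.unitaryGroup (Fin N) ℂ)} {T : Set (Fin N → Circle)}, MeasurableSet T →
      Xi ⁻¹' S = Prod.snd ⁻¹' T → (rho P).map Xi S = muW N T := by
    intro S T hT h
    have hS : MeasurableSet S := by
      rw [← hXi.measurableSet_preimage_iff_of_surjective surj_Xi, h]
      exact measurable_snd hT
    rw [Measure.map_apply hXi hS, h, rho_snd P hT]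
  obtain ⟨c, hc⟩ := weyl P
  have h1 := key (S := Set.univ) MeasurableSet.univ (by simp)
  have h2 := key hT h
  rw [hc, Measure.smul_apply] at h1 h2
  rw [measureReal_def, ← h1, measureReal_def, ← ENNReal.toReal_mul, measureReal_def, ← h2, measure_univ]
  simp [ENNReal.smul_def]

end
end NegAssoc

open NegAssoc in
theorem eigenvalue_process_negatively_associated
    (N : ℕ) (ℙ : Measure (Matrix.unitaryGroup (Fin N) ℂ))
    (hprob : IsProbabilityMeasure ℙ) (hhaar : ℙ.IsHaarMeasure)
    (A B : Set ℝ) (hA : MeasurableSet A) (hB : MeasurableSet B)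
    (hA' : A ⊆ Set.Icc 0 (2 * π)) (hB' : B ⊆ Set.Icc 0 (2 * π))
    (hAB : Disjoint A B) (s t : ℝ) :
    ℙ {U | s ≤ (countAngles N U A : ℝ) ∧ t ≤ (countAngles N U B : ℝ)} ≤
      ℙ {U | s ≤ (countAngles N U A : ℝ)} * ℙ {U | t ≤ (countAngles N U B : ℝ)} := by
  have hl := measurable_lab hA hB
  have hm := measurable_comp_l (N := N) hl
  have hmono : ∀ s : ℝ, ∀ a a' : ℕ, ¬ s ≤ (a : ℝ) → s ≤ (a' : ℝ) → a ≤ a' := by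
    intro s a a' h h'
    have : (a : ℝ) < a' := by linarith
    exact_mod_cast this.le
  have key := torus_ineq (N := N) hl (fun a => s ≤ (a : ℝ)) (fun a => t ≤ (a : ℝ)) (hmono s) (hmono t)
  have hR : ∀ R : (Fin N → Fin 3) → Prop, MeasurableSet {d : Fin N → Circle | R fun i => lab A B (d i)} :=
    fun R => hm (Set.toFinite {κ | R κ}).measurableSet
  have e1 := prob_eq ℙ (S := {U | s ≤ (countAngles N U A : ℝ) ∧ t ≤ (countAngles N U B : ℝ)})
    (hR fun κ => s ≤ (nL 0 κ : ℝ) ∧ t ≤ (nL 1 κ : ℝ)) (by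
      ext x; simp [countA x A B, countB x A B hAB])
  have e2 := prob_eq ℙ (S := {U | s ≤ (countAngles N U A : ℝ)})
    (hR fun κ => s ≤ (nL 0 κ : ℝ)) (by
      ext x; simp [countA x A B])
  have e3 := prob_eq ℙ (S := {U | t ≤ (countAngles N U B : ℝ)})
    (hR fun κ => t ≤ (nL 1 κ : ℝ)) (by
      ext x; simp [countB x A B hAB])
  rw [← e1, ← e2, ← e3] at key
  have hZ := muW_univ_pos (N := N)
  rw [← ENNReal.toReal_le_toReal (measure_ne_top _ _)
    (ENNReal.mul_ne_top (measure_ne_top _ _) (measure_ne_top _ _)), ENNReal.toReal_mul]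
  refine le_of_mul_le_mul_left ?_ (mul_pos hZ hZ)
  simp only [measureReal_def] at key ⊢
  linarith
end
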